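/- For every R > 0 the function R ↦ λ_R := λ₁(Γ_R) is differentiable and its derivative is given by the Dauge–Helffer type formula ∂_R λ_R = ∫_{Σ_R} (|∂_τ v_R|² − λ_R |v_R|²) dτ, i.e. ∂_R λ_R = ∫_I (|∂₂ v_R(R,x₂)|² − λ_R |v_R(R,x₂)|²) dx₂ + ∫_I (|∂₁ v_R(x₁,R)|² − λ_R |v_R(x₁,R)|²) dx₁, where v_R is the positive normalized first eigenfunction on Γ_R. -/

import Mathlib

/-!
Write `λ_R` for `lamR R`, `v` for the first eigenfunction and
`E = ∫_{Σ_R} (|∂_τ v|² - λ_R |v|²)`. One-sided first-order bounds for `λ_{R+h}` are proved from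
above and below; that they match forces differentiability.

*Upper bounds.* For `h > 0`, `v` is extended by constants along the added strips; the Neumann
condition makes this extension `C¹`, and its Rayleigh quotient gives
`λ_{R+h} (1 + h ∫_{Σ_R} v²) ≤ λ_R + h ∫_{Σ_R} |∂_τ v|²` (`outer_ineq`, `upper_right`). For `h < 0`,
`v` is restricted to the shorter guide; mass and energy in the removed strips are expanded to first
order, where only a lower bound for the energy is needed (`inner_ineq`, `upper_left`). In both cases
`λ_{R+h} ≤ λ_R + h E + o(|h|)`. The variational inequality applies to these competitors because
truncating near the zero set makes them admissible (`lamR_mul_le_of_contDiffOn`).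

*Lower bound.* The diffeomorphism `Φ = φ × φ`, `φ(x) = x + h max(x,0)² / R²`, maps `Γ_R` onto
`Γ_{R+h}`. Pulling back an almost-minimiser `u` on `Γ_{R+h}` gives a function `w` on `Γ_R` with
`λ_{R+h} ≥ λ_R + h ∫ Bd w - o(|h|)`, where `Bd` is the first-order variation of the Rayleigh
quotient. Moreover `w` is almost minimising on `Γ_R`, and almost-minimisers concentrate at `±v`:
Picone's inequality controls `∇(w / v)` on compact subsets (`picone`), the Poincaré inequality on
L-shaped sets makes `w / v` almost constant there (`poinc`, `core_close`), and the mass near the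
boundary is uniformly small (`edge_le`). Hence `∫ Bd w → D := ∫ Bd v` (`concentration`, `Bd_conc`),
and `λ_{R+h} ≥ λ_R + h D - o(|h|)` on both sides (`lower_bound`). No compactness theorem or
existence theory is used.

*Conclusion.* Comparing both bounds for `h > 0` gives `D ≤ E`, for `h < 0` it gives `E ≤ D`
(`Bd_eq`); thus `λ_{R+h} = λ_R + h E + o(h)`. The finiteness of `∫_{Σ_R} |∂_τ v|²`, which is not part
of the hypotheses on `v`, also follows from this comparison for `h < 0` (`Tb_int`).
-/

noncomputable section
open MeasureTheory Set Real

/-- The interval `I = (-1,0)`. -/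
def II : Set ℝ := Set.Ioo (-1) 0

/-- The broken guide `Γ = {x ∈ ℝ² : -1 < min(x₁,x₂) < 0}`. -/
def Gam : Set (ℝ × ℝ) := {p | -1 < min p.1 p.2 ∧ min p.1 p.2 < 0}

/-- The box `□_L = {x : max(|x₁+1|,|x₂+1|) < L}`. -/
def Box (L : ℝ) : Set (ℝ × ℝ) := {p | |p.1 + 1| < L ∧ |p.2 + 1| < L}

/-- The finite guide `Γ_R = Γ ∩ □_{R+1}`. -/
def GamR (R : ℝ) : Set (ℝ × ℝ) := Gam ∩ Box (R + 1)

/-- The Neumann part `Σ_R = ∂Γ_R ∩ ∂□_{R+1}` of the boundary. -/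
def Sig (R : ℝ) : Set (ℝ × ℝ) := frontier (GamR R) ∩ frontier (Box (R + 1))

/-- The Dirichlet part `∂Γ_R ∖ Σ_R` of the boundary. -/
def DirB (R : ℝ) : Set (ℝ × ℝ) := frontier (GamR R) \ Sig R

/-- Squared gradient `|∇u|² = (∂₁u)² + (∂₂u)²`. -/
def gradSq2 (u : ℝ × ℝ → ℝ) (p : ℝ × ℝ) : ℝ :=
  (fderiv ℝ u p (1, 0)) ^ 2 + (fderiv ℝ u p (0, 1)) ^ 2

/-- Admissible functions for the mixed problem on `Γ_R`: `C¹` up to the boundary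
(modelled by a globally `C¹` extension) vanishing on the Dirichlet part. -/
def AdmR (R : ℝ) (u : ℝ × ℝ → ℝ) : Prop :=
  ContDiff ℝ 1 u ∧ ∀ p ∈ DirB R, u p = 0

/-- First Rayleigh quotient `λ₁(Γ_R)` of the mixed Dirichlet–Neumann Laplacian on `Γ_R`. -/
def lamR (R : ℝ) : ℝ :=
  sInf {r | ∃ u : ℝ × ℝ → ℝ, AdmR R u ∧ (∫ p in GamR R, (u p) ^ 2) ≠ 0 ∧
    r = (∫ p in GamR R, gradSq2 u p) / ∫ p in GamR R, (u p) ^ 2}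

/-- First Rayleigh quotient `λ₁(Γ)` of the Dirichlet Laplacian on the broken guide `Γ`. -/
def lamG : ℝ :=
  sInf {r | ∃ u : ℝ × ℝ → ℝ, ContDiff ℝ 1 u ∧ HasCompactSupport u ∧ tsupport u ⊆ Gam ∧
    (∫ p in Gam, (u p) ^ 2) ≠ 0 ∧
    r = (∫ p in Gam, gradSq2 u p) / ∫ p in Gam, (u p) ^ 2}

/-- `ω = √(π² − λ₁(Γ))`. -/
def omega : ℝ := Real.sqrt (π ^ 2 - lamG)

/-- Partial derivative `∂₁`. -/
def pd1 (u : ℝ × ℝ → ℝ) : ℝ × ℝ → ℝ := fun p => fderiv ℝ u p (1, 0)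

/-- Partial derivative `∂₂`. -/
def pd2 (u : ℝ × ℝ → ℝ) : ℝ × ℝ → ℝ := fun p => fderiv ℝ u p (0, 1)

/-- Laplacian `Δ = ∂₁² + ∂₂²`. -/
def lap2 (u : ℝ × ℝ → ℝ) (p : ℝ × ℝ) : ℝ := pd1 (pd1 u) p + pd2 (pd2 u) p

/-- The open segments `Σ_R¹ = {R} × I` and `Σ_R² = I × {R}` (for `R ≥ 0`). -/
def SigSeg (R : ℝ) : Set (ℝ × ℝ) := ({R} ×ˢ II) ∪ (II ×ˢ {R})

/-- `v` is the positive normalized first eigenfunction of the mixed Dirichlet–Neumann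
Laplacian on `Γ_R`: smooth in `Γ_R` and up to the Neumann boundary, continuous up to the
closure, vanishing on the Dirichlet part, with vanishing normal derivative on `Σ_R`,
satisfying `-Δv = λ₁(Γ_R) v` in `Γ_R`, positive, and `L²`-normalized. -/
def IsFirstEF (R : ℝ) (v : ℝ × ℝ → ℝ) : Prop :=
  (∃ U : Set (ℝ × ℝ), IsOpen U ∧ GamR R ∪ SigSeg R ⊆ U ∧ ContDiffOn ℝ (⊤ : ℕ∞) v U) ∧
  ContinuousOn v (closure (GamR R)) ∧
  (∀ p ∈ DirB R, v p = 0) ∧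
  (∀ t ∈ II, pd1 v (R, t) = 0) ∧
  (∀ t ∈ II, pd2 v (t, R) = 0) ∧
  (∀ p ∈ GamR R, -(lap2 v p) = lamR R * v p) ∧
  (∀ p ∈ GamR R, 0 < v p) ∧
  (∫ p in GamR R, (v p) ^ 2) = 1

open Filter Topology

/-! ### Geometry of the finite guide -/

lemma GamR_eq {R : ℝ} (hR : 0 < R) :
    GamR R = Ioo (-1) 0 ×ˢ Ioo (-1) R ∪ Ioo (-1) R ×ˢ Ioo (-1) 0 := by
  ext ⟨a, b⟩
  simp only [GamR, Gam, Box, mem_inter_iff, mem_ofPred_eq, mem_union, mem_prod, mem_Ioo,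
    lt_min_iff, min_lt_iff, abs_lt]
  grind

lemma GamR_open {R : ℝ} (hR : 0 < R) : IsOpen (GamR R) := by
  rw [GamR_eq hR]
  exact (isOpen_Ioo.prod isOpen_Ioo).union (isOpen_Ioo.prod isOpen_Ioo)

lemma closure_GamR {R : ℝ} (hR : 0 < R) :
    closure (GamR R) = Icc (-1) 0 ×ˢ Icc (-1) R ∪ Icc (-1) R ×ˢ Icc (-1) 0 := by
  rw [GamR_eq hR, closure_union, closure_prod_eq, closure_prod_eq,
    closure_Ioo (by norm_num), closure_Ioo (by linarith)]

lemma frontier_GamR {R : ℝ} (hR : 0 < R) : frontier (GamR R) = closure (GamR R) \ GamR R :=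
  (GamR_open hR).frontier_eq

lemma Box_eq (L : ℝ) : Box L = Ioo (-1 - L) (L - 1) ×ˢ Ioo (-1 - L) (L - 1) := by
  ext ⟨a, b⟩
  simp only [Box, mem_ofPred_eq, mem_prod, mem_Ioo, abs_lt]
  grind

lemma frontier_Box {R : ℝ} (hR : 0 < R) : frontier (Box (R + 1)) =
    (Icc (-1 - (R + 1)) (R + 1 - 1) ×ˢ Icc (-1 - (R + 1)) (R + 1 - 1)) \
      (Ioo (-1 - (R + 1)) (R + 1 - 1) ×ˢ Ioo (-1 - (R + 1)) (R + 1 - 1)) := by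
  rw [Box_eq, (isOpen_Ioo.prod isOpen_Ioo).frontier_eq, closure_prod_eq,
    closure_Ioo (by linarith)]

/-- The Dirichlet boundary consists of the sides where the smaller coordinate is `-1` or `0`. -/
lemma mem_DirB {R : ℝ} (hR : 0 < R) {a b : ℝ} :
    (a, b) ∈ DirB R ↔ (min a b = -1 ∨ min a b = 0) ∧ a < R ∧ b < R := by
  rw [DirB, Sig, frontier_Box hR, frontier_GamR hR, closure_GamR hR, GamR_eq hR]
  simp only [Set.mem_sdiff, mem_inter_iff, mem_union, mem_prod, mem_Icc, mem_Ioo]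
  rcases le_total a b with h | h
  · rw [min_eq_left h]; grind (splits := 40)
  · rw [min_eq_right h]; grind (splits := 40)

lemma mem_SigSeg {R : ℝ} {a b : ℝ} :
    (a, b) ∈ SigSeg R ↔ (a = R ∧ -1 < b ∧ b < 0) ∨ (b = R ∧ -1 < a ∧ a < 0) := by
  simp only [SigSeg, II, mem_union, mem_prod, mem_singleton_iff, mem_Ioo]
  tauto

lemma SigSeg_subset {R : ℝ} (hR : 0 < R) : SigSeg R ⊆ closure (GamR R) := by
  rintro ⟨a, b⟩ h
  rw [mem_SigSeg] at h
  simp only [closure_GamR hR, mem_union, mem_prod, mem_Icc]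
  grind

lemma DirB_subset {R : ℝ} : DirB R ⊆ closure (GamR R) := fun _ h => frontier_subset_closure h.1

lemma isCompact_closure_GamR {R : ℝ} (hR : 0 < R) : IsCompact (closure (GamR R)) := by
  rw [closure_GamR hR]
  exact (isCompact_Icc.prod isCompact_Icc).union (isCompact_Icc.prod isCompact_Icc)

lemma GamR_mono {R S : ℝ} (hR : 0 < R) (h : R ≤ S) : GamR R ⊆ GamR S := by
  rw [GamR_eq hR, GamR_eq (hR.trans_le h)]
  rintro ⟨a, b⟩
  simp only [mem_union, mem_prod, mem_Ioo]
  grind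

lemma GamR_meas {R : ℝ} (hR : 0 < R) : MeasurableSet (GamR R) := (GamR_open hR).measurableSet

lemma volume_GamR_lt {R : ℝ} (hR : 0 < R) : volume (GamR R) < ⊤ :=
  (measure_mono subset_closure).trans_lt (isCompact_closure_GamR hR).measure_lt_top

/-- The parts of the closure of the guide outside `Γ_R` and the open Neumann segments (Dirichlet
sides together with the corners) lie in the closure of the Dirichlet boundary. -/
lemma rest_subset_closure_DirB {R : ℝ} (hR : 0 < R) :
    closure (GamR R) \ (GamR R ∪ SigSeg R) ⊆ closure (DirB R) := by
  have h1 : ∀ c : ℝ, (c = -1 ∨ c = 0) → Icc 0 R ×ˢ {c} ⊆ closure (DirB R) := by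
    intro c hc
    have : Icc 0 R ×ˢ {c} = closure (Ioo 0 R ×ˢ {c}) := by
      rw [closure_prod_eq, closure_Ioo hR.ne, closure_singleton]
    rw [this]
    apply closure_mono
    rintro ⟨a, b⟩ h
    simp only [mem_prod, mem_Ioo, mem_singleton_iff] at h
    rw [mem_DirB hR, min_eq_right (by grind)]
    grind
  have h2 : ∀ c : ℝ, (c = -1 ∨ c = 0) → {c} ×ˢ Icc 0 R ⊆ closure (DirB R) := by
    intro c hc
    have : {c} ×ˢ Icc 0 R = closure ({c} ×ˢ Ioo 0 R) := by
      rw [closure_prod_eq, closure_Ioo hR.ne, closure_singleton]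
    rw [this]
    apply closure_mono
    rintro ⟨a, b⟩ h
    simp only [mem_prod, mem_Ioo, mem_singleton_iff] at h
    rw [mem_DirB hR, min_eq_left (by grind)]
    grind
  rintro ⟨a, b⟩ ⟨hc, hn⟩
  by_cases hD : (a, b) ∈ DirB R
  · exact subset_closure hD
  rw [mem_DirB hR] at hD
  simp only [mem_union, mem_SigSeg, GamR_eq hR, mem_prod, mem_Ioo] at hn
  simp only [closure_GamR hR, mem_union, mem_prod, mem_Icc] at hc
  by_cases ha : a = R
  · refine h1 b ?_ ⟨⟨by grind, by grind⟩, rfl⟩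
    grind
  · by_cases hb : b = R
    · refine h2 a ?_ ⟨rfl, ⟨by grind, by grind⟩⟩
      grind
    · exfalso
      rcases le_total a b with h | h
      · rw [min_eq_left h] at hD; grind
      · rw [min_eq_right h] at hD; grind

lemma eq_zero_rest {R : ℝ} (hR : 0 < R) {w : ℝ × ℝ → ℝ} (hw : ContinuousOn w (closure (GamR R)))
    (h0 : ∀ p ∈ DirB R, w p = 0) {p : ℝ × ℝ} (hp : p ∈ closure (GamR R))
    (hn : p ∉ GamR R ∪ SigSeg R) : w p = 0 := by
  have hp' := rest_subset_closure_DirB hR ⟨hp, hn⟩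
  have hsub : closure (DirB R) ⊆ closure (GamR R) :=
    closure_minimal DirB_subset isClosed_closure
  have : w '' closure (DirB R) ⊆ closure (w '' DirB R) := (hw.mono hsub).image_closure
  have h2 : w '' DirB R ⊆ {0} := by
    rintro _ ⟨q, hq, rfl⟩
    exact h0 q hq
  have h3 := (closure_minimal h2 isClosed_singleton) (this ⟨p, hp', rfl⟩)
  simpa using h3

/-! ### Splitting integrals over the guide -/

lemma GamR_split {R : ℝ} (hR : 0 < R) :
    GamR R = Ioo (-1) R ×ˢ Ioo (-1) 0 ∪ Ioo (-1) 0 ×ˢ Ico 0 R := by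
  rw [GamR_eq hR]
  ext ⟨a, b⟩
  simp only [mem_union, mem_prod, mem_Ioo, mem_Ico]
  grind

lemma setInt_GamR_split {R : ℝ} (hR : 0 < R) {f : ℝ × ℝ → ℝ} (hf : IntegrableOn f (GamR R)) :
    ∫ p in GamR R, f p = (∫ p in Ioo (-1) R ×ˢ Ioo (-1) 0, f p)
      + ∫ p in Ioo (-1) 0 ×ˢ Ico 0 R, f p := by
  rw [GamR_split hR] at hf ⊢
  rw [setIntegral_union _ (measurableSet_Ioo.prod measurableSet_Ico)
    (hf.mono_set subset_union_left) (hf.mono_set subset_union_right)]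
  rw [Set.disjoint_left]
  rintro ⟨a, b⟩
  simp only [mem_prod, mem_Ioo, mem_Ico]
  grind

lemma swap_preimage_GamR {R : ℝ} : Prod.swap ⁻¹' GamR R = GamR R := by
  ext ⟨a, b⟩
  simp only [GamR, Gam, Box, mem_preimage, Prod.swap_prod_mk, mem_inter_iff, mem_ofPred_eq,
    min_comm a b]
  tauto

lemma mp_swap : MeasurePreserving (Prod.swap : ℝ × ℝ → ℝ × ℝ) volume volume :=
  Measure.measurePreserving_swap

lemma setInt_swap {R : ℝ} (f : ℝ × ℝ → ℝ) :
    ∫ p in GamR R, f p.swap = ∫ p in GamR R, f p := by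
  have := mp_swap.setIntegral_preimage_emb MeasurableEquiv.prodComm.measurableEmbedding
    f (GamR R)
  rwa [swap_preimage_GamR] at this

lemma intOn_swap {R : ℝ} {f : ℝ × ℝ → ℝ} (h : IntegrableOn f (GamR R)) :
    IntegrableOn (fun p => f p.swap) (GamR R) := by
  have := (mp_swap.integrableOn_comp_preimage
    MeasurableEquiv.prodComm.measurableEmbedding (f := f) (s := GamR R)).2 h
  rwa [swap_preimage_GamR] at this

lemma intOn_of_cont {R : ℝ} (hR : 0 < R) {f : ℝ × ℝ → ℝ} (h : ContinuousOn f (closure (GamR R))) :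
    IntegrableOn f (GamR R) :=
  (h.integrableOn_compact (isCompact_closure_GamR hR)).mono_set subset_closure

/-! ### Truncation near zero -/

/-- Continuous profile equal to `0` for `|t| ≤ ε` and to `1` for `|t| ≥ 2ε`. -/
def rho (ε t : ℝ) : ℝ := max 0 (min 1 (|t| / ε - 1))

/-- `C¹` truncation: the primitive of `rho ε`; it vanishes on `[-ε, ε]`, is `1`-Lipschitz and
stays within `2ε` of the identity. -/
def trunc (ε s : ℝ) : ℝ := ∫ t in (0 : ℝ)..s, rho ε t

lemma rho_cont (ε : ℝ) : Continuous (rho ε) := by unfold rho; fun_prop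

lemma rho_nonneg (ε t : ℝ) : 0 ≤ rho ε t := le_max_left _ _

lemma rho_le_one (ε t : ℝ) : rho ε t ≤ 1 := max_le zero_le_one (min_le_left _ _)

lemma rho_sq_le_one (ε t : ℝ) : rho ε t ^ 2 ≤ 1 := by
  nlinarith [rho_nonneg ε t, rho_le_one ε t]

lemma rho_eq_zero {ε t : ℝ} (hε : 0 < ε) (h : |t| ≤ ε) : rho ε t = 0 := by
  have : |t| / ε ≤ 1 := (div_le_one hε).2 h
  exact max_eq_left ((min_le_right _ _).trans (by linarith))

lemma rho_eq_one {ε t : ℝ} (hε : 0 < ε) (h : 2 * ε ≤ |t|) : rho ε t = 1 := by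
  have : 2 ≤ |t| / ε := (le_div_iff₀ hε).2 h
  rw [rho, min_eq_left (by linarith), max_eq_right zero_le_one]

lemma rho_intble (ε a b : ℝ) : IntervalIntegrable (rho ε) volume a b :=
  (rho_cont ε).intervalIntegrable _ _

lemma trunc_hasDerivAt (ε s : ℝ) : HasDerivAt (trunc ε) (rho ε s) s :=
  (rho_cont ε).integral_hasStrictDerivAt 0 s |>.hasDerivAt

lemma trunc_contDiff (ε : ℝ) : ContDiff ℝ 1 (trunc ε) := by
  rw [contDiff_one_iff_deriv]
  refine ⟨fun s => (trunc_hasDerivAt ε s).differentiableAt, ?_⟩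
  have : deriv (trunc ε) = rho ε := funext fun s => (trunc_hasDerivAt ε s).deriv
  rw [this]
  exact rho_cont ε

lemma trunc_neg (ε s : ℝ) : trunc ε (-s) = -trunc ε s := by
  unfold trunc
  have h := intervalIntegral.integral_comp_neg (a := 0) (b := s) (rho ε)
  have h2 : ∀ t, rho ε (-t) = rho ε t := fun t => by simp [rho]
  simp only [h2, neg_zero] at h
  rw [h, intervalIntegral.integral_symm]

lemma trunc_bounds_pos {ε s : ℝ} (hε : 0 < ε) (hs : 0 ≤ s) :
    0 ≤ trunc ε s ∧ trunc ε s ≤ s ∧ s - 2 * ε ≤ trunc ε s := by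
  have hmono : ∀ a b : ℝ, a ≤ b → 0 ≤ ∫ t in a..b, rho ε t := fun a b hab =>
    intervalIntegral.integral_nonneg hab fun t _ => rho_nonneg ε t
  refine ⟨hmono 0 s hs, ?_, ?_⟩
  · have := intervalIntegral.integral_mono_on hs (rho_intble ε 0 s)
      (intervalIntegrable_const (c := (1 : ℝ))) fun t _ => rho_le_one ε t
    simpa [trunc] using this
  · rcases le_total s (2 * ε) with h | h
    · linarith [hmono 0 s hs, show trunc ε s = ∫ t in (0 : ℝ)..s, rho ε t from rfl]
    · have h1 : trunc ε s = (∫ t in (0 : ℝ)..(2 * ε), rho ε t) + ∫ t in (2 * ε)..s, rho ε t :=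
        (intervalIntegral.integral_add_adjacent_intervals (rho_intble _ _ _)
          (rho_intble _ _ _)).symm
      have h2 : ∫ t in (2 * ε)..s, rho ε t = ∫ _ in (2 * ε)..s, (1 : ℝ) := by
        apply intervalIntegral.integral_congr
        intro t ht
        rw [uIcc_of_le h] at ht
        exact rho_eq_one hε (ht.1.trans (le_abs_self t))
      have h3 := hmono 0 (2 * ε) (by linarith)
      rw [h1, h2]
      simp only [intervalIntegral.integral_const, smul_eq_mul, mul_one]
      linarith

lemma abs_trunc_le {ε : ℝ} (hε : 0 < ε) (s : ℝ) : |trunc ε s| ≤ |s| := by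
  rcases le_total 0 s with h | h
  · have := trunc_bounds_pos hε h
    rw [abs_of_nonneg this.1, abs_of_nonneg h]; exact this.2.1
  · have := trunc_bounds_pos hε (neg_nonneg.2 h)
    rw [trunc_neg] at this
    rw [abs_of_nonpos h, abs_of_nonpos (by linarith)]; exact this.2.1

lemma abs_sub_trunc_le {ε : ℝ} (hε : 0 < ε) (s : ℝ) : |s| - 2 * ε ≤ |trunc ε s| := by
  rcases le_total 0 s with h | h
  · have := trunc_bounds_pos hε h
    rw [abs_of_nonneg this.1, abs_of_nonneg h]; exact this.2.2
  · have := trunc_bounds_pos hε (neg_nonneg.2 h)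
    rw [trunc_neg] at this
    rw [abs_of_nonpos h, abs_of_nonpos (by linarith)]; linarith

lemma trunc_sq_ge {ε : ℝ} (hε : 0 < ε) (s : ℝ) : s ^ 2 - 4 * ε * |s| ≤ trunc ε s ^ 2 := by
  have h1 := abs_trunc_le hε s
  have h2 := abs_sub_trunc_le hε s
  rw [← sq_abs s, ← sq_abs (trunc ε s)]
  nlinarith [abs_nonneg s, abs_nonneg (trunc ε s)]

lemma trunc_eq_zero {ε s : ℝ} (hε : 0 < ε) (h : |s| ≤ ε) : trunc ε s = 0 := by
  unfold trunc
  rw [intervalIntegral.integral_congr (g := fun _ => (0 : ℝ))]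
  · simp
  · intro t ht
    refine rho_eq_zero hε (le_trans ?_ h)
    rcases mem_uIcc.1 ht with ⟨h1, h2⟩ | ⟨h1, h2⟩
    · rw [abs_of_nonneg h1, abs_of_nonneg (h1.trans h2)]; exact h2
    · rw [abs_of_nonpos h2, abs_of_nonpos (h1.trans h2)]; linarith

lemma fderiv_trunc_comp (ε : ℝ) {w : ℝ × ℝ → ℝ} {p : ℝ × ℝ} (h : DifferentiableAt ℝ w p) :
    fderiv ℝ (fun q => trunc ε (w q)) p = rho ε (w p) • fderiv ℝ w p :=
  ((trunc_hasDerivAt ε (w p)).comp_hasFDerivAt p h.hasFDerivAt).fderiv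

lemma gradSq2_trunc_comp (ε : ℝ) {w : ℝ × ℝ → ℝ} {p : ℝ × ℝ} (h : DifferentiableAt ℝ w p) :
    gradSq2 (fun q => trunc ε (w q)) p = rho ε (w p) ^ 2 * gradSq2 w p := by
  simp only [gradSq2, fderiv_trunc_comp ε h]
  simp
  ring

lemma gradSq2_nonneg (w : ℝ × ℝ → ℝ) (p : ℝ × ℝ) : 0 ≤ gradSq2 w p := by
  unfold gradSq2; positivity

/-! ### Extension of functions vanishing away from a compact set -/

/-- Multiplying by a cut-off gives a global `C¹` function agreeing with `g` on a compact set. -/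
lemma exists_ext {U K : Set (ℝ × ℝ)} (hU : IsOpen U) (hK : IsCompact K) (hKU : K ⊆ U)
    {g : ℝ × ℝ → ℝ} (hg : ContDiffOn ℝ 1 g U) :
    ∃ g' : ℝ × ℝ → ℝ, ContDiff ℝ 1 g' ∧ (∀ x ∈ K, g' x = g x) ∧ (∀ x, g x = 0 → g' x = 0) := by
  obtain ⟨f, h0, h1, -⟩ := exists_contMDiffMap_zero_one_nhds_of_isClosed
    (modelWithCornersSelf ℝ (ℝ × ℝ)) (n := (1 : ℕ∞)) hU.isClosed_compl hK.isClosed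
    (disjoint_left.2 fun x hx hxK => hx (hKU hxK))
  have hf : ContDiff ℝ 1 (f : ℝ × ℝ → ℝ) := f.contMDiff.contDiff
  refine ⟨fun x => f x * g x, ?_, ?_, ?_⟩
  · rw [contDiff_iff_contDiffAt]
    intro x
    by_cases hx : x ∈ U
    · exact hf.contDiffAt.mul (hg.contDiffAt (hU.mem_nhds hx))
    · have : ∀ᶠ y in 𝓝 x, f y = 0 := (eventually_nhdsSet_iff_forall.1 h0) x hx
      refine (contDiffAt_const (c := (0 : ℝ))).congr_of_eventuallyEq ?_
      filter_upwards [this] with y hy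
      simp [hy]
  · intro x hx
    have := h1.self_of_nhdsSet x hx
    simp [this]
  · intro x hx
    simp [hx]

/-! ### Basic properties of `lamR` -/

lemma lamR_bdd (R : ℝ) : ∀ r ∈ {r | ∃ u : ℝ × ℝ → ℝ, AdmR R u ∧ (∫ p in GamR R, (u p) ^ 2) ≠ 0 ∧
    r = (∫ p in GamR R, gradSq2 u p) / ∫ p in GamR R, (u p) ^ 2}, 0 ≤ r := by
  rintro r ⟨u, -, -, rfl⟩
  exact div_nonneg (integral_nonneg fun p => gradSq2_nonneg u p)
    (integral_nonneg fun p => sq_nonneg _)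

lemma lamR_nonneg (R : ℝ) : 0 ≤ lamR R := Real.sInf_nonneg (lamR_bdd R)

lemma lamR_mul_le {R : ℝ} {u : ℝ × ℝ → ℝ} (hu : AdmR R u) :
    lamR R * ∫ p in GamR R, (u p) ^ 2 ≤ ∫ p in GamR R, gradSq2 u p := by
  by_cases h : (∫ p in GamR R, (u p) ^ 2) = 0
  · rw [h, mul_zero]
    exact integral_nonneg fun p => gradSq2_nonneg u p
  · have hpos : 0 < ∫ p in GamR R, (u p) ^ 2 :=
      lt_of_le_of_ne (integral_nonneg fun p => sq_nonneg _) (Ne.symm h)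
    rw [← le_div_iff₀ hpos]
    exact csInf_le ⟨0, lamR_bdd R⟩ ⟨u, hu, h, rfl⟩

lemma exists_near_min {R : ℝ} (hR : 0 < R) {η : ℝ} (hη : 0 < η) :
    ∃ u : ℝ × ℝ → ℝ, AdmR R u ∧ 0 < (∫ p in GamR R, (u p) ^ 2) ∧
      (∫ p in GamR R, gradSq2 u p) ≤ (lamR R + η) * ∫ p in GamR R, (u p) ^ 2 := by
  have hne : {r | ∃ u : ℝ × ℝ → ℝ, AdmR R u ∧ (∫ p in GamR R, (u p) ^ 2) ≠ 0 ∧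
    r = (∫ p in GamR R, gradSq2 u p) / ∫ p in GamR R, (u p) ^ 2}.Nonempty := by
    have hx : ((-1/2, -1/2) : ℝ × ℝ) ∈ GamR R := by
      rw [GamR_eq hR]; left; constructor <;> constructor <;> simp <;> linarith
    obtain ⟨f, hts, -, hf, -, hfx⟩ := exists_contDiff_tsupport_subset (n := 1)
      ((GamR_open hR).mem_nhds hx)
    have hf' : ContDiff ℝ 1 f := by exact_mod_cast hf
    refine ⟨_, f, ⟨hf', ?_⟩, ?_, rfl⟩
    · intro p hp
      by_contra hne
      have h1 : p ∈ GamR R := hts (subset_tsupport f hne)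
      have h2 := hp.1
      rw [frontier_GamR hR] at h2
      exact h2.2 h1
    · have hpos : 0 < ∫ p in GamR R, (f p) ^ 2 := by
        have hc : Continuous fun p => (f p) ^ 2 := hf'.continuous.pow 2
        rw [setIntegral_pos_iff_support_of_nonneg_ae
          (ae_of_all _ fun p => sq_nonneg (f p)) (intOn_of_cont hR hc.continuousOn)]
        refine IsOpen.measure_pos volume ((hc.isOpen_support).inter (GamR_open hR))
          ⟨_, ?_, hx⟩
        simp [hfx]
      exact hpos.ne'
  obtain ⟨r, ⟨u, hu, hu0, rfl⟩, hr⟩ := exists_lt_of_csInf_lt hne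
    (show sInf _ < lamR R + η by
      have : lamR R < lamR R + η := by linarith
      exact this)
  have hpos : 0 < ∫ p in GamR R, (u p) ^ 2 :=
    lt_of_le_of_ne (integral_nonneg fun p => sq_nonneg _) (Ne.symm hu0)
  exact ⟨u, hu, hpos, ((div_lt_iff₀ hpos).1 hr).le⟩

lemma isCompact_level {R : ℝ} (hR : 0 < R) {w : ℝ × ℝ → ℝ}
    (hw : ContinuousOn w (closure (GamR R))) (ε : ℝ) :
    IsCompact (closure (GamR R) ∩ {p | ε ≤ |w p|}) := by
  have := hw.abs.preimage_isClosed_of_isClosed isClosed_closure (isClosed_Ici (a := ε))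
  exact (isCompact_closure_GamR hR).of_isClosed_subset this inter_subset_left

lemma level_subset {R : ℝ} (hR : 0 < R) {w : ℝ × ℝ → ℝ}
    (hw : ContinuousOn w (closure (GamR R))) (h0 : ∀ p ∈ DirB R, w p = 0) {ε : ℝ} (hε : 0 < ε) :
    closure (GamR R) ∩ {p | ε ≤ |w p|} ⊆ GamR R ∪ SigSeg R := by
  rintro p ⟨hp, hpε⟩
  by_contra hn
  have := eq_zero_rest hR hw h0 hp hn
  simp only [mem_ofPred_eq, this, abs_zero] at hpε
  linarith

/-- The variational inequality extends to functions that are only `C¹` near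
`Γ_R ∪ Σ_R` and continuous up to the Dirichlet boundary: truncating near the zero
set makes them admissible without increasing the Dirichlet energy. -/
lemma lamR_mul_le_of_contDiffOn {R : ℝ} (hR : 0 < R) {w : ℝ × ℝ → ℝ} {U : Set (ℝ × ℝ)}
    (hU : IsOpen U) (hsub : GamR R ∪ SigSeg R ⊆ U) (hw : ContDiffOn ℝ 1 w U)
    (hc : ContinuousOn w (closure (GamR R))) (h0 : ∀ p ∈ DirB R, w p = 0)
    (hi : IntegrableOn (gradSq2 w) (GamR R)) :
    lamR R * ∫ p in GamR R, (w p) ^ 2 ≤ ∫ p in GamR R, gradSq2 w p := by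
  have hwd : ∀ p ∈ GamR R, DifferentiableAt ℝ w p := fun p hp =>
    (hw.differentiableOn (by norm_num)).differentiableAt (hU.mem_nhds (hsub (Or.inl hp)))
  have key : ∀ ε : ℝ, 0 < ε →
      lamR R * ((∫ p in GamR R, (w p) ^ 2) - 4 * ε * ∫ p in GamR R, |w p|) ≤
        ∫ p in GamR R, gradSq2 w p := by
    intro ε hε
    obtain ⟨g, hg1, hg2, hg3⟩ := exists_ext hU (isCompact_level hR hc ε)
      ((level_subset hR hc h0 hε).trans hsub)
      (g := fun p => trunc ε (w p)) ((trunc_contDiff ε).comp_contDiffOn hw)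
    have hgw : ∀ p ∈ closure (GamR R), g p = trunc ε (w p) := by
      intro p hp
      by_cases h : ε ≤ |w p|
      · exact hg2 p ⟨hp, h⟩
      · have := trunc_eq_zero hε (not_le.1 h).le
        rw [hg3 p this, this]
    have hadm : AdmR R g := by
      refine ⟨hg1, fun p hp => ?_⟩
      rw [hgw p (DirB_subset hp), h0 p hp]
      exact trunc_eq_zero hε (by simpa using hε.le)
    have h1 := lamR_mul_le hadm
    have h2 : ∫ p in GamR R, gradSq2 g p ≤ ∫ p in GamR R, gradSq2 w p := by
      apply integral_mono_of_nonneg (ae_of_all _ fun p => gradSq2_nonneg g p) hi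
      filter_upwards [ae_restrict_mem (GamR_meas hR)] with p hp
      have : g =ᶠ[𝓝 p] fun q => trunc ε (w q) := by
        filter_upwards [(GamR_open hR).mem_nhds hp] with q hq using hgw q (subset_closure hq)
      have h3 : gradSq2 g p = gradSq2 (fun q => trunc ε (w q)) p := by
        simp only [gradSq2, this.fderiv_eq]
      rw [h3, gradSq2_trunc_comp ε (hwd p hp)]
      nlinarith [rho_sq_le_one ε (w p), gradSq2_nonneg w p]
    have h3 : (∫ p in GamR R, (w p) ^ 2) - 4 * ε * ∫ p in GamR R, |w p| ≤
        ∫ p in GamR R, (g p) ^ 2 := by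
      have i1 : IntegrableOn (fun p => (w p) ^ 2) (GamR R) := intOn_of_cont hR (hc.pow 2)
      have i2 : IntegrableOn (fun p => |w p|) (GamR R) := intOn_of_cont hR hc.abs
      rw [← integral_const_mul, ← integral_sub i1 (i2.const_mul _)]
      apply setIntegral_mono_on (i1.sub (i2.const_mul _))
        (intOn_of_cont hR (hg1.continuous.pow 2).continuousOn) (GamR_meas hR)
      intro p hp
      change (w p) ^ 2 - 4 * ε * |w p| ≤ (g p) ^ 2
      rw [hgw p (subset_closure hp)]
      exact trunc_sq_ge hε (w p)
    calc _ ≤ lamR R * ∫ p in GamR R, (g p) ^ 2 := mul_le_mul_of_nonneg_left h3 (lamR_nonneg R)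
      _ ≤ _ := h1
      _ ≤ _ := h2
  have hlim : Tendsto (fun ε : ℝ => lamR R * ((∫ p in GamR R, (w p) ^ 2) -
      4 * ε * ∫ p in GamR R, |w p|)) (𝓝[>] 0) (𝓝 (lamR R * ((∫ p in GamR R, (w p) ^ 2) -
      4 * 0 * ∫ p in GamR R, |w p|))) := by
    apply tendsto_nhdsWithin_of_tendsto_nhds
    apply Continuous.tendsto
    fun_prop
  simp only [mul_zero, zero_mul, sub_zero] at hlim
  exact le_of_tendsto hlim (eventually_nhdsWithin_of_forall fun ε hε => key ε hε)

/-! ### Integration by parts on the guide -/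

lemma setInt_prod_fst {f : ℝ × ℝ → ℝ} {s t : Set ℝ} (hf : IntegrableOn f (s ×ˢ t)) :
    ∫ p in s ×ˢ t, f p = ∫ y in t, ∫ x in s, f (x, y) := by
  rw [Measure.volume_eq_prod] at *
  simp only [← Measure.prod_restrict s t, IntegrableOn] at hf ⊢
  exact integral_prod_symm f hf

lemma setInt_prod_snd {f : ℝ × ℝ → ℝ} {s t : Set ℝ} (hf : IntegrableOn f (s ×ˢ t)) :
    ∫ p in s ×ˢ t, f p = ∫ x in s, ∫ y in t, f (x, y) := by
  rw [Measure.volume_eq_prod] at *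
  exact setIntegral_prod f hf

lemma pd1_cont {g : ℝ × ℝ → ℝ} (hg : ContDiff ℝ 1 g) : Continuous (pd1 g) :=
  (hg.continuous_fderiv (by norm_num)).clm_apply continuous_const

lemma pd2_cont {g : ℝ × ℝ → ℝ} (hg : ContDiff ℝ 1 g) : Continuous (pd2 g) :=
  (hg.continuous_fderiv (by norm_num)).clm_apply continuous_const

lemma hasDerivAt_fst {g : ℝ × ℝ → ℝ} {x y : ℝ} (hg : DifferentiableAt ℝ g (x, y)) :
    HasDerivAt (fun s => g (s, y)) (pd1 g (x, y)) x :=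
  hg.hasFDerivAt.comp_hasDerivAt x ((hasDerivAt_id x).prodMk (hasDerivAt_const x y))

lemma hasDerivAt_snd {g : ℝ × ℝ → ℝ} {x y : ℝ} (hg : DifferentiableAt ℝ g (x, y)) :
    HasDerivAt (fun s => g (x, s)) (pd2 g (x, y)) y :=
  hg.hasFDerivAt.comp_hasDerivAt y ((hasDerivAt_const y x).prodMk (hasDerivAt_id y))

lemma pd1_comp_swap {g : ℝ × ℝ → ℝ} {p : ℝ × ℝ} (hg : DifferentiableAt ℝ g p.swap) :
    pd1 (fun q => g q.swap) p = pd2 g p.swap := by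
  obtain ⟨a, b⟩ := p
  have h1 := hasDerivAt_snd (g := g) (x := b) (y := a) hg
  have h2 : DifferentiableAt ℝ (fun q : ℝ × ℝ => g q.swap) (a, b) := by
    refine DifferentiableAt.comp (g := g) (f := fun q : ℝ × ℝ => q.swap) _ hg ?_
    exact (differentiableAt_snd.prodMk differentiableAt_fst)
  exact (hasDerivAt_fst h2).unique h1

lemma pd2_comp_swap {g : ℝ × ℝ → ℝ} {p : ℝ × ℝ} (hg : DifferentiableAt ℝ g p.swap) :
    pd2 (fun q => g q.swap) p = pd1 g p.swap := by
  obtain ⟨a, b⟩ := p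
  have h1 := hasDerivAt_fst (g := g) (x := b) (y := a) hg
  have h2 : DifferentiableAt ℝ (fun q : ℝ × ℝ => g q.swap) (a, b) := by
    refine DifferentiableAt.comp (g := g) (f := fun q : ℝ × ℝ => q.swap) _ hg ?_
    exact (differentiableAt_snd.prodMk differentiableAt_fst)
  exact (hasDerivAt_snd h2).unique h1

lemma int_line_fst {g : ℝ × ℝ → ℝ} (hg : ContDiff ℝ 1 g) {a b y : ℝ} (hab : a ≤ b) :
    ∫ x in Ioo a b, pd1 g (x, y) = g (b, y) - g (a, y) := by
  rw [← integral_Ioc_eq_integral_Ioo, ← intervalIntegral.integral_of_le hab]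
  apply intervalIntegral.integral_eq_sub_of_hasDerivAt
  · intro x _
    exact hasDerivAt_fst (hg.differentiable (by norm_num) _)
  · exact ((pd1_cont hg).comp (by fun_prop)).intervalIntegrable _ _

lemma int_pd1_zero {R : ℝ} (hR : 0 < R) {g : ℝ × ℝ → ℝ} (hg : ContDiff ℝ 1 g)
    (h1 : ∀ t ∈ Ioo (-1) R, g (-1, t) = 0) (h2 : ∀ t ∈ Ico 0 R, g (0, t) = 0)
    (h3 : ∀ t ∈ Ioo (-1) 0, g (R, t) = 0) : ∫ p in GamR R, pd1 g p = 0 := by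
  have hi : IntegrableOn (pd1 g) (GamR R) := intOn_of_cont hR (pd1_cont hg).continuousOn
  rw [setInt_GamR_split hR hi, setInt_prod_fst, setInt_prod_fst]
  · rw [setIntegral_congr_fun (g := fun _ => (0 : ℝ)) measurableSet_Ioo,
      setIntegral_congr_fun (s := Ico 0 R) (g := fun _ => (0 : ℝ)) measurableSet_Ico]
    · simp
    · intro t ht
      beta_reduce
      rw [int_line_fst hg (by norm_num), h2 t ht, h1 t ⟨by linarith [ht.1], ht.2⟩, sub_zero]
    · intro t ht
      beta_reduce
      rw [int_line_fst hg (by linarith), h3 t ht, h1 t ⟨ht.1, by linarith [ht.2]⟩, sub_zero]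
  · rw [GamR_split hR] at hi
    exact hi.mono_set subset_union_right
  · rw [GamR_split hR] at hi
    exact hi.mono_set subset_union_left

lemma int_pd2_zero {R : ℝ} (hR : 0 < R) {g : ℝ × ℝ → ℝ} (hg : ContDiff ℝ 1 g)
    (h1 : ∀ t ∈ Ioo (-1) R, g (t, -1) = 0) (h2 : ∀ t ∈ Ico 0 R, g (t, 0) = 0)
    (h3 : ∀ t ∈ Ioo (-1) 0, g (t, R) = 0) : ∫ p in GamR R, pd2 g p = 0 := by
  have hg' : ContDiff ℝ 1 (fun p : ℝ × ℝ => g p.swap) :=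
    hg.comp (contDiff_snd.prodMk contDiff_fst)
  have := int_pd1_zero hR hg' h1 h2 h3
  rw [← setInt_swap, ← this]
  congr 1
  ext p
  rw [pd1_comp_swap (hg.differentiable (by norm_num) _)]

lemma pd1_contDiffOn {v : ℝ × ℝ → ℝ} {U : Set (ℝ × ℝ)} (hU : IsOpen U)
    (hv : ContDiffOn ℝ (⊤ : ℕ∞) v U) : ContDiffOn ℝ 1 (pd1 v) U :=
  (hv.fderiv_of_isOpen (m := 1) hU (by norm_cast)).clm_apply contDiffOn_const

lemma pd2_contDiffOn {v : ℝ × ℝ → ℝ} {U : Set (ℝ × ℝ)} (hU : IsOpen U)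
    (hv : ContDiffOn ℝ (⊤ : ℕ∞) v U) : ContDiffOn ℝ 1 (pd2 v) U :=
  (hv.fderiv_of_isOpen (m := 1) hU (by norm_cast)).clm_apply contDiffOn_const

lemma pd1_mul {f g : ℝ × ℝ → ℝ} {p : ℝ × ℝ} (hf : DifferentiableAt ℝ f p)
    (hg : DifferentiableAt ℝ g p) :
    pd1 (fun q => f q * g q) p = pd1 f p * g p + f p * pd1 g p := by
  have := (hf.hasFDerivAt.mul hg.hasFDerivAt).fderiv
  simp only [pd1]
  erw [this]
  simp
  ring

lemma pd2_mul {f g : ℝ × ℝ → ℝ} {p : ℝ × ℝ} (hf : DifferentiableAt ℝ f p)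
    (hg : DifferentiableAt ℝ g p) :
    pd2 (fun q => f q * g q) p = pd2 f p * g p + f p * pd2 g p := by
  have := (hf.hasFDerivAt.mul hg.hasFDerivAt).fderiv
  simp only [pd2]
  erw [this]
  simp
  ring

/-- Weak form of the eigenvalue equation, for test functions supported away from the Dirichlet
boundary. -/
lemma weak_eq {R : ℝ} (hR : 0 < R) {v : ℝ × ℝ → ℝ} (hv : IsFirstEF R v) {ψ : ℝ × ℝ → ℝ}
    {U K : Set (ℝ × ℝ)} (hU : IsOpen U) (hsub : GamR R ∪ SigSeg R ⊆ U)
    (hψ : ContDiffOn ℝ 1 ψ U) (hK : IsCompact K) (hKs : K ⊆ GamR R ∪ SigSeg R)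
    (hz : ∀ p ∈ closure (GamR R), p ∉ K → ψ p = 0) :
    IntegrableOn (fun p => pd1 ψ p * pd1 v p + pd2 ψ p * pd2 v p) (GamR R) ∧
    ∫ p in GamR R, (pd1 ψ p * pd1 v p + pd2 ψ p * pd2 v p) =
      lamR R * ∫ p in GamR R, ψ p * v p := by
  obtain ⟨⟨V, hV, hVs, hvV⟩, hvc, hvD, hn1, hn2, heq, -, -⟩ := hv
  have hUV : IsOpen (U ∩ V) := hU.inter hV
  have hsUV : GamR R ∪ SigSeg R ⊆ U ∩ V := subset_inter hsub hVs
  have hpd1 := (pd1_contDiffOn hV hvV).mono (inter_subset_right : U ∩ V ⊆ V)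
  have hpd2 := (pd2_contDiffOn hV hvV).mono (inter_subset_right : U ∩ V ⊆ V)
  have hψ' := hψ.mono (inter_subset_left : U ∩ V ⊆ U)
  obtain ⟨h, hh, hhK, hh0⟩ := exists_ext hUV hK (hKs.trans hsUV) hψ'
  obtain ⟨g1, hg1, hg1K, hg10⟩ := exists_ext hUV hK (hKs.trans hsUV) (hψ'.mul hpd1)
  obtain ⟨g2, hg2, hg2K, hg20⟩ := exists_ext hUV hK (hKs.trans hsUV) (hψ'.mul hpd2)
  have eh : ∀ p ∈ closure (GamR R), h p = ψ p := fun p hp => by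
    by_cases hpK : p ∈ K
    · exact hhK p hpK
    · rw [hz p hp hpK, hh0 p (hz p hp hpK)]
  have e1 : ∀ p ∈ closure (GamR R), g1 p = ψ p * pd1 v p := fun p hp => by
    by_cases hpK : p ∈ K
    · exact hg1K p hpK
    · rw [hg10 p (by simp [hz p hp hpK]), hz p hp hpK, zero_mul]
  have e2 : ∀ p ∈ closure (GamR R), g2 p = ψ p * pd2 v p := fun p hp => by
    by_cases hpK : p ∈ K
    · exact hg2K p hpK
    · rw [hg20 p (by simp [hz p hp hpK]), hz p hp hpK, zero_mul]
  have z : ∀ a b : ℝ, (a, b) ∈ closure (GamR R) → (a, b) ∉ GamR R ∪ SigSeg R → ψ (a, b) = 0 :=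
    fun a b hc hn => hz _ hc fun hk => hn (hKs hk)
  have I1 : ∫ p in GamR R, pd1 g1 p = 0 := by
    apply int_pd1_zero hR hg1
    · intro t ht
      have hc : ((-1, t) : ℝ × ℝ) ∈ closure (GamR R) := by
        rw [closure_GamR hR]; left; simp; exact ⟨ht.1.le, ht.2.le⟩
      rw [e1 _ hc, z _ _ hc, zero_mul]
      simp only [mem_union, mem_SigSeg, GamR_eq hR, mem_prod, mem_Ioo]
      simp only [mem_Ioo] at ht
      grind
    · intro t ht
      have hc : ((0, t) : ℝ × ℝ) ∈ closure (GamR R) := by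
        rw [closure_GamR hR]; left; simp; exact ⟨by linarith [ht.1], ht.2.le⟩
      rw [e1 _ hc, z _ _ hc, zero_mul]
      simp only [mem_union, mem_SigSeg, GamR_eq hR, mem_prod, mem_Ioo]
      simp only [mem_Ico] at ht
      grind
    · intro t ht
      rw [e1 _ (SigSeg_subset hR (mem_SigSeg.2 (Or.inl ⟨rfl, ht⟩))), hn1 t ht, mul_zero]
  have I2 : ∫ p in GamR R, pd2 g2 p = 0 := by
    apply int_pd2_zero hR hg2
    · intro t ht
      have hc : ((t, -1) : ℝ × ℝ) ∈ closure (GamR R) := by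
        rw [closure_GamR hR]; right; simp; exact ⟨ht.1.le, ht.2.le⟩
      rw [e2 _ hc, z _ _ hc, zero_mul]
      simp only [mem_union, mem_SigSeg, GamR_eq hR, mem_prod, mem_Ioo]
      simp only [mem_Ioo] at ht
      grind
    · intro t ht
      have hc : ((t, 0) : ℝ × ℝ) ∈ closure (GamR R) := by
        rw [closure_GamR hR]; right; simp; exact ⟨by linarith [ht.1], ht.2.le⟩
      rw [e2 _ hc, z _ _ hc, zero_mul]
      simp only [mem_union, mem_SigSeg, GamR_eq hR, mem_prod, mem_Ioo]
      simp only [mem_Ico] at ht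
      grind
    · intro t ht
      rw [e2 _ (SigSeg_subset hR (mem_SigSeg.2 (Or.inr ⟨rfl, ht⟩))), hn2 t ht, mul_zero]
  have i1 : IntegrableOn (pd1 g1) (GamR R) := intOn_of_cont hR (pd1_cont hg1).continuousOn
  have i2 : IntegrableOn (pd2 g2) (GamR R) := intOn_of_cont hR (pd2_cont hg2).continuousOn
  have i3 : IntegrableOn (fun p => lamR R * (h p * v p)) (GamR R) :=
    intOn_of_cont hR (continuousOn_const.mul (hh.continuous.continuousOn.mul hvc))
  have key : ∀ p ∈ GamR R, pd1 g1 p + pd2 g2 p + lamR R * (h p * v p) =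
      pd1 ψ p * pd1 v p + pd2 ψ p * pd2 v p := by
    intro p hp
    have hpn := (GamR_open hR).mem_nhds hp
    have hpU := hUV.mem_nhds (hsUV (Or.inl hp))
    have d0 : DifferentiableAt ℝ ψ p := (hψ'.differentiableOn (by norm_num)).differentiableAt hpU
    have d1 : DifferentiableAt ℝ (pd1 v) p :=
      (hpd1.differentiableOn (by norm_num)).differentiableAt hpU
    have d2 : DifferentiableAt ℝ (pd2 v) p :=
      (hpd2.differentiableOn (by norm_num)).differentiableAt hpU
    have a1 : g1 =ᶠ[𝓝 p] fun q => ψ q * pd1 v q := by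
      filter_upwards [hpn] with q hq using e1 q (subset_closure hq)
    have a2 : g2 =ᶠ[𝓝 p] fun q => ψ q * pd2 v q := by
      filter_upwards [hpn] with q hq using e2 q (subset_closure hq)
    have b1 : pd1 g1 p = pd1 ψ p * pd1 v p + ψ p * pd1 (pd1 v) p := by
      rw [← pd1_mul d0 d1]; simp only [pd1, a1.fderiv_eq]
    have b2 : pd2 g2 p = pd2 ψ p * pd2 v p + ψ p * pd2 (pd2 v) p := by
      rw [← pd2_mul d0 d2]; simp only [pd2, a2.fderiv_eq]
    have hl := heq p hp
    rw [lap2] at hl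
    rw [b1, b2, eh p (subset_closure hp)]
    linear_combination (-ψ p) * hl
  have i12 := (i1.add i2).add i3
  refine ⟨i12.congr_fun key (GamR_meas hR), ?_⟩
  rw [← setIntegral_congr_fun (GamR_meas hR) key]
  have s1 := integral_add (i1.add i2) i3
  have s2 := integral_add i1 i2
  simp only [Pi.add_apply] at s1 s2
  rw [s1, s2, I1, I2, integral_const_mul, add_zero, zero_add]
  congr 1
  exact setIntegral_congr_fun (GamR_meas hR) fun p hp => by
    simp only [eh p (subset_closure hp)]

/-! ### Finite energy of the eigenfunction and the Picone inequality -/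

lemma gradSq2_eq (u : ℝ × ℝ → ℝ) (p : ℝ × ℝ) : gradSq2 u p = pd1 u p ^ 2 + pd2 u p ^ 2 := rfl

/-- Regular test functions: `C¹` functions which vanish, inside `closure Γ_R`, off a compact
subset of `Γ_R ∪ Σ_R`. -/
def Test (R : ℝ) (w : ℝ × ℝ → ℝ) : Prop :=
  ContDiff ℝ 1 w ∧ ∃ K : Set (ℝ × ℝ), IsCompact K ∧ K ⊆ GamR R ∪ SigSeg R ∧
    ∀ p ∈ closure (GamR R), p ∉ K → w p = 0

lemma ef_diffAt {R : ℝ} {v : ℝ × ℝ → ℝ} (hv : IsFirstEF R v) {p : ℝ × ℝ}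
    (hp : p ∈ GamR R ∪ SigSeg R) : DifferentiableAt ℝ v p := by
  obtain ⟨⟨V, hV, hVs, hvV⟩, -⟩ := hv
  exact (hvV.differentiableOn (by simp)).differentiableAt (hV.mem_nhds (hVs hp))

lemma ef_pd1_cont {R : ℝ} {v : ℝ × ℝ → ℝ} (hv : IsFirstEF R v) :
    ContinuousOn (pd1 v) (GamR R ∪ SigSeg R) := by
  obtain ⟨⟨V, hV, hVs, hvV⟩, -⟩ := hv
  exact (pd1_contDiffOn hV hvV).continuousOn.mono hVs

lemma ef_pd2_cont {R : ℝ} {v : ℝ × ℝ → ℝ} (hv : IsFirstEF R v) :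
    ContinuousOn (pd2 v) (GamR R ∪ SigSeg R) := by
  obtain ⟨⟨V, hV, hVs, hvV⟩, -⟩ := hv
  exact (pd2_contDiffOn hV hvV).continuousOn.mono hVs

lemma ef_grad_cont {R : ℝ} {v : ℝ × ℝ → ℝ} (hv : IsFirstEF R v) :
    ContinuousOn (gradSq2 v) (GamR R ∪ SigSeg R) :=
  ((ef_pd1_cont hv).pow 2).add ((ef_pd2_cont hv).pow 2)

lemma ef_nonneg {R : ℝ} {v : ℝ × ℝ → ℝ} (hv : IsFirstEF R v) {p : ℝ × ℝ}
    (hp : p ∈ closure (GamR R)) : 0 ≤ v p := by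
  exact le_on_closure (f := fun _ => (0 : ℝ)) (fun x hx => (hv.2.2.2.2.2.2.1 x hx).le)
    continuousOn_const hv.2.1 hp

lemma ef_sq_int {R : ℝ} (hR : 0 < R) {v : ℝ × ℝ → ℝ} (hv : IsFirstEF R v) :
    IntegrableOn (fun p => v p ^ 2) (GamR R) := intOn_of_cont hR (hv.2.1.pow 2)

/-- Testing the weak equation with the truncation of `v` bounds the energy on superlevel sets. -/
lemma ef_level_energy {R : ℝ} (hR : 0 < R) {v : ℝ × ℝ → ℝ} (hv : IsFirstEF R v) {ε : ℝ}
    (hε : 0 < ε) : IntegrableOn (gradSq2 v) (closure (GamR R) ∩ {p | 2 * ε ≤ |v p|}) ∧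
      ∫ p in GamR R ∩ (closure (GamR R) ∩ {p | 2 * ε ≤ |v p|}), gradSq2 v p ≤ lamR R := by
  have h2 : 0 < 2 * ε := by linarith
  have hL := level_subset hR hv.2.1 hv.2.2.1 hε
  have hL2 := level_subset hR hv.2.1 hv.2.2.1 h2
  have hc := isCompact_level hR hv.2.1 ε
  have hc2 := isCompact_level hR hv.2.1 (2 * ε)
  have h_int : IntegrableOn (gradSq2 v) (closure (GamR R) ∩ {p | 2 * ε ≤ |v p|}) :=
    ((ef_grad_cont hv).mono hL2).integrableOn_compact hc2
  refine ⟨h_int, ?_⟩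
  obtain ⟨V, hV, hVs, hvV⟩ := hv.1
  have hψ : ContDiffOn ℝ 1 (fun p => trunc ε (v p)) V :=
    (trunc_contDiff ε).comp_contDiffOn (hvV.of_le (by norm_cast))
  obtain ⟨hi, he⟩ := weak_eq hR hv hV hVs hψ hc hL (fun p hp hn => by
    apply trunc_eq_zero hε
    by_contra! h
    exact hn ⟨hp, h.le⟩)
  have e1 : ∀ p ∈ GamR R, pd1 (fun p => trunc ε (v p)) p * pd1 v p +
      pd2 (fun p => trunc ε (v p)) p * pd2 v p = rho ε (v p) * gradSq2 v p := by
    intro p hp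
    simp only [pd1, pd2, fderiv_trunc_comp ε (ef_diffAt hv (Or.inl hp)), gradSq2]
    simp
    ring
  rw [setIntegral_congr_fun (GamR_meas hR) e1] at he
  have hi' := hi.congr_fun e1 (GamR_meas hR)
  calc ∫ p in GamR R ∩ (closure (GamR R) ∩ {p | 2 * ε ≤ |v p|}), gradSq2 v p
      = ∫ p in GamR R ∩ (closure (GamR R) ∩ {p | 2 * ε ≤ |v p|}), rho ε (v p) * gradSq2 v p := by
        refine setIntegral_congr_fun ((GamR_meas hR).inter hc2.measurableSet) ?_
        intro p hp
        simp only [rho_eq_one hε hp.2.2, one_mul]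
    _ ≤ ∫ p in GamR R, rho ε (v p) * gradSq2 v p := by
        refine setIntegral_mono_set hi' ?_ inter_subset_left.eventuallyLE
        exact Eventually.of_forall fun p => mul_nonneg (rho_nonneg _ _) (gradSq2_nonneg _ _)
    _ = lamR R * ∫ p in GamR R, trunc ε (v p) * v p := he
    _ ≤ lamR R * ∫ p in GamR R, v p ^ 2 := by
        refine mul_le_mul_of_nonneg_left ?_ (lamR_nonneg R)
        refine setIntegral_mono_on ?_ (ef_sq_int hR hv) (GamR_meas hR) ?_
        · exact intOn_of_cont hR
            (((trunc_contDiff ε).continuous.comp_continuousOn hv.2.1).mul hv.2.1)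
        · intro p hp
          have := trunc_bounds_pos hε (hv.2.2.2.2.2.2.1 p hp).le
          rw [sq]
          exact mul_le_mul_of_nonneg_right this.2.1 (hv.2.2.2.2.2.2.1 p hp).le
    _ = lamR R := by rw [hv.2.2.2.2.2.2.2, mul_one]

/-- The eigenfunction has finite energy, although its gradient is not assumed to be bounded near the
Dirichlet boundary. -/
lemma ef_energy {R : ℝ} (hR : 0 < R) {v : ℝ × ℝ → ℝ} (hv : IsFirstEF R v) :
    IntegrableOn (gradSq2 v) (GamR R) ∧ ∫ p in GamR R, gradSq2 v p ≤ lamR R := by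
  have hpos : ∀ n : ℕ, (0 : ℝ) < 1 / (n + 1) := fun n => by positivity
  have hcov : AECover (volume.restrict (GamR R)) atTop
      (fun n : ℕ => closure (GamR R) ∩ {p | 2 * (1 / ((n : ℝ) + 1)) ≤ |v p|}) := by
    refine ⟨?_, fun n => (isCompact_level hR hv.2.1 _).measurableSet⟩
    filter_upwards [ae_restrict_mem (GamR_meas hR)] with p hp
    have hvp := hv.2.2.2.2.2.2.1 p hp
    have ht : Tendsto (fun n : ℕ => 2 * (1 / ((n : ℝ) + 1))) atTop (𝓝 (2 * 0)) :=
      tendsto_one_div_add_atTop_nhds_zero_nat.const_mul 2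
    filter_upwards [ht.eventually_lt_const (by simpa using hvp)] with n hn
    exact ⟨subset_closure hp, by rw [mem_ofPred_eq, abs_of_pos hvp]; exact hn.le⟩
  have hle : ∀ n : ℕ, ∫ p in closure (GamR R) ∩ {p | 2 * (1 / ((n : ℝ) + 1)) ≤ |v p|},
      gradSq2 v p ∂(volume.restrict (GamR R)) ≤ lamR R := by
    intro n
    rw [Measure.restrict_restrict (isCompact_level hR hv.2.1 _).measurableSet, inter_comm]
    exact (ef_level_energy hR hv (hpos n)).2
  have h_int : Integrable (gradSq2 v) (volume.restrict (GamR R)) := by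
    refine hcov.integrable_of_integral_bounded_of_nonneg_ae (lamR R) ?_
      (Eventually.of_forall fun p => gradSq2_nonneg v p) (Eventually.of_forall hle)
    intro n
    exact ((ef_level_energy hR hv (hpos n)).1).mono_measure Measure.restrict_le_self
  refine ⟨h_int, ?_⟩
  exact le_of_tendsto (hcov.integral_tendsto_of_countably_generated h_int)
    (Eventually.of_forall hle)

lemma test_weak {R : ℝ} (hR : 0 < R) {v w : ℝ × ℝ → ℝ} (hv : IsFirstEF R v) (hw : Test R w) :
    IntegrableOn (fun p => pd1 w p * pd1 v p + pd2 w p * pd2 v p) (GamR R) ∧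
    ∫ p in GamR R, (pd1 w p * pd1 v p + pd2 w p * pd2 v p) =
      lamR R * ∫ p in GamR R, w p * v p := by
  obtain ⟨hw1, K, hK, hKs, hz⟩ := hw
  exact weak_eq hR hv isOpen_univ (subset_univ _) hw1.contDiffOn hK hKs hz

lemma test_grad_int {R : ℝ} (hR : 0 < R) {w : ℝ × ℝ → ℝ} (hw : ContDiff ℝ 1 w) :
    IntegrableOn (gradSq2 w) (GamR R) :=
  intOn_of_cont hR (((pd1_cont hw).pow 2).add ((pd2_cont hw).pow 2)).continuousOn

lemma pd1_quot {w v : ℝ × ℝ → ℝ} {p : ℝ × ℝ} (hw : DifferentiableAt ℝ w p)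
    (hv : DifferentiableAt ℝ v p) {δ : ℝ} (hd : v p + δ ≠ 0) :
    HasFDerivAt (fun q => w q / (v q + δ)) ((v p + δ)⁻¹ • fderiv ℝ w p
      - (w p / (v p + δ) ^ 2) • fderiv ℝ v p) p := by
  have h := hw.hasFDerivAt.mul ((hasDerivAt_inv hd).comp_hasFDerivAt p
    (hv.hasFDerivAt.add_const δ))
  have e : (v p + δ)⁻¹ • fderiv ℝ w p - (w p / (v p + δ) ^ 2) • fderiv ℝ v p =
      w p • -((v p + δ) ^ 2)⁻¹ • fderiv ℝ v p +
        ((fun y => y⁻¹) ∘ fun x => v x + δ) p • fderiv ℝ w p := by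
    apply ContinuousLinearMap.ext
    intro x
    simp
    ring
  rw [e]
  exact h

/-- The Picone identity for the regularised quotient `w² / (v + δ)`. -/
lemma picone_delta {R : ℝ} (hR : 0 < R) {v w : ℝ × ℝ → ℝ} (hv : IsFirstEF R v) (hw : Test R w)
    {δ : ℝ} (hδ : 0 < δ) :
    IntegrableOn (fun p => (pd1 w p - w p * pd1 v p / (v p + δ)) ^ 2 +
      (pd2 w p - w p * pd2 v p / (v p + δ)) ^ 2) (GamR R) ∧
    ∫ p in GamR R, ((pd1 w p - w p * pd1 v p / (v p + δ)) ^ 2 +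
      (pd2 w p - w p * pd2 v p / (v p + δ)) ^ 2) =
    (∫ p in GamR R, gradSq2 w p) - lamR R * ∫ p in GamR R, w p ^ 2 / (v p + δ) * v p := by
  obtain ⟨hw1, K, hK, hKs, hz⟩ := hw
  obtain ⟨V, hV, hVs, hvV⟩ := hv.1
  have hU : IsOpen (V ∩ v ⁻¹' Ioi (-δ)) :=
    hvV.continuousOn.isOpen_inter_preimage hV isOpen_Ioi
  have hs : GamR R ∪ SigSeg R ⊆ V ∩ v ⁻¹' Ioi (-δ) := by
    intro p hp
    refine ⟨hVs hp, ?_⟩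
    have : p ∈ closure (GamR R) := by
      rcases hp with hp | hp
      exacts [subset_closure hp, SigSeg_subset hR hp]
    have := ef_nonneg hv this
    simp only [mem_preimage, mem_Ioi]
    linarith
  have hψ : ContDiffOn ℝ 1 (fun p => w p ^ 2 / (v p + δ)) (V ∩ v ⁻¹' Ioi (-δ)) := by
    refine (hw1.contDiffOn.pow 2).div
      (((hvV.of_le (by norm_cast)).mono inter_subset_left).add contDiffOn_const) ?_
    intro p hp
    have : -δ < v p := hp.2
    linarith
  obtain ⟨hi, he⟩ := weak_eq hR hv hU hs hψ hK hKs (fun p hp hn => by simp [hz p hp hn])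
  have e1 : ∀ p ∈ GamR R, gradSq2 w p - (pd1 (fun p => w p ^ 2 / (v p + δ)) p * pd1 v p +
      pd2 (fun p => w p ^ 2 / (v p + δ)) p * pd2 v p) =
      ((pd1 w p - w p * pd1 v p / (v p + δ)) ^ 2 +
      (pd2 w p - w p * pd2 v p / (v p + δ)) ^ 2) := by
    intro p hp
    have hvp := hv.2.2.2.2.2.2.1 p hp
    have hne : v p + δ ≠ 0 := by linarith
    have dw : DifferentiableAt ℝ w p := hw1.differentiable (by norm_num) _
    have h := (pd1_quot (w := fun q => w q ^ 2) (dw.pow 2) (ef_diffAt hv (Or.inl hp)) hne).fderiv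
    have h2 : fderiv ℝ (fun q => w q ^ 2) p = (2 * w p) • fderiv ℝ w p := by
      have := (dw.hasFDerivAt.pow 2).fderiv
      erw [this]
      ext <;> simp
    rw [h2] at h
    simp only [pd1, pd2, h, gradSq2]
    simp
    field_simp
    ring
  have hg := test_grad_int hR hw1
  refine ⟨(hg.sub hi).congr_fun e1 (GamR_meas hR), ?_⟩
  rw [← setIntegral_congr_fun (GamR_meas hR) e1, integral_sub hg hi, he]

/-- Picone's inequality on a compact subset of the open guide. -/
lemma picone {R : ℝ} (hR : 0 < R) {v w : ℝ × ℝ → ℝ} (hv : IsFirstEF R v) (hw : Test R w)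
    {K : Set (ℝ × ℝ)} (hK : IsCompact K) (hKs : K ⊆ GamR R) :
    ∫ p in K, ((pd1 w p - w p * pd1 v p / v p) ^ 2 + (pd2 w p - w p * pd2 v p / v p) ^ 2) ≤
    (∫ p in GamR R, gradSq2 w p) - lamR R * ∫ p in GamR R, w p ^ 2 := by
  have hwc : Continuous w := hw.1.continuous
  have hw2 : IntegrableOn (fun p => w p ^ 2) (GamR R) :=
    intOn_of_cont hR (hwc.pow 2).continuousOn
  have hpos : ∀ n : ℕ, (0 : ℝ) < 1 / (n + 1) := fun n => by positivity
  have h0 : Tendsto (fun n : ℕ => 1 / ((n : ℝ) + 1)) atTop (𝓝 0) :=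
    tendsto_one_div_add_atTop_nhds_zero_nat
  have hR2 : Tendsto (fun n : ℕ => (∫ p in GamR R, gradSq2 w p) -
      lamR R * ∫ p in GamR R, w p ^ 2 / (v p + 1 / ((n : ℝ) + 1)) * v p) atTop
      (𝓝 ((∫ p in GamR R, gradSq2 w p) - lamR R * ∫ p in GamR R, w p ^ 2)) := by
    refine tendsto_const_nhds.sub (Tendsto.const_mul _ ?_)
    refine tendsto_integral_of_dominated_convergence (fun p => w p ^ 2) ?_ hw2 ?_ ?_
    · intro n
      refine (intOn_of_cont hR ?_).aestronglyMeasurable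
      refine ((hwc.pow 2).continuousOn.div (hv.2.1.add continuousOn_const) ?_).mul hv.2.1
      intro p hp
      have h1 := ef_nonneg hv hp
      have h2 := hpos n
      have h3 := add_pos_of_nonneg_of_pos h1 h2
      exact h3.ne'
    · intro n
      filter_upwards [ae_restrict_mem (GamR_meas hR)] with p hp
      have hvp := hv.2.2.2.2.2.2.1 p hp
      have := hpos n
      rw [Real.norm_of_nonneg (by positivity), div_mul_eq_mul_div, div_le_iff₀ (by positivity)]
      exact mul_le_mul_of_nonneg_left (by linarith) (sq_nonneg _)
    · filter_upwards [ae_restrict_mem (GamR_meas hR)] with p hp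
      have hvp := hv.2.2.2.2.2.2.1 p hp
      have : Tendsto (fun n : ℕ => w p ^ 2 / (v p + 1 / ((n : ℝ) + 1)) * v p) atTop
          (𝓝 (w p ^ 2 / (v p + 0) * v p)) :=
        ((tendsto_const_nhds.div (tendsto_const_nhds.add h0) (by simpa using hvp.ne'))).mul_const _
      convert this using 2
      rw [add_zero]
      field_simp
  have c1 : ContinuousOn (pd1 v) K := (ef_pd1_cont hv).mono (hKs.trans subset_union_left)
  have c2 : ContinuousOn (pd2 v) K := (ef_pd2_cont hv).mono (hKs.trans subset_union_left)
  have cv : ContinuousOn v K := hv.2.1.mono (hKs.trans subset_closure)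
  have hvK : ∀ p ∈ K, 0 < v p := fun p hp => hv.2.2.2.2.2.2.1 p (hKs hp)
  have hL : Tendsto (fun n : ℕ => ∫ p in K,
      ((pd1 w p - w p * pd1 v p / (v p + 1 / ((n : ℝ) + 1))) ^ 2 +
        (pd2 w p - w p * pd2 v p / (v p + 1 / ((n : ℝ) + 1))) ^ 2)) atTop
      (𝓝 (∫ p in K, ((pd1 w p - w p * pd1 v p / v p) ^ 2 +
        (pd2 w p - w p * pd2 v p / v p) ^ 2))) := by
    refine tendsto_integral_of_dominated_convergence
      (fun p => 2 * (pd1 w p ^ 2 + (w p * pd1 v p / v p) ^ 2) +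
        2 * (pd2 w p ^ 2 + (w p * pd2 v p / v p) ^ 2)) ?_ ?_ ?_ ?_
    · intro n
      refine (ContinuousOn.integrableOn_compact hK ?_).aestronglyMeasurable
      have : ∀ p ∈ K, v p + 1 / ((n : ℝ) + 1) ≠ 0 := fun p hp => by
        have := hvK p hp
        have := hpos n
        positivity
      refine ContinuousOn.add (ContinuousOn.pow ?_ 2) (ContinuousOn.pow ?_ 2)
      · exact (pd1_cont hw.1).continuousOn.sub
          ((hwc.continuousOn.mul c1).div (cv.add continuousOn_const) this)
      · exact (pd2_cont hw.1).continuousOn.sub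
          ((hwc.continuousOn.mul c2).div (cv.add continuousOn_const) this)
    · refine ContinuousOn.integrableOn_compact hK ?_
      have : ∀ p ∈ K, v p ≠ 0 := fun p hp => (hvK p hp).ne'
      refine ContinuousOn.add (continuousOn_const.mul (ContinuousOn.add ?_ (ContinuousOn.pow ?_ 2)))
        (continuousOn_const.mul (ContinuousOn.add ?_ (ContinuousOn.pow ?_ 2)))
      · exact ((pd1_cont hw.1).pow 2).continuousOn
      · exact (hwc.continuousOn.mul c1).div cv this
      · exact ((pd2_cont hw.1).pow 2).continuousOn
      · exact (hwc.continuousOn.mul c2).div cv this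
    · intro n
      filter_upwards [ae_restrict_mem hK.measurableSet] with p hp
      have hv0 := hvK p hp
      have hn := hpos n
      rw [Real.norm_of_nonneg (by positivity)]
      have key : ∀ a b : ℝ, (a - w p * b / (v p + 1 / ((n : ℝ) + 1))) ^ 2 ≤
          2 * (a ^ 2 + (w p * b / v p) ^ 2) := by
        intro a b
        have : (w p * b / (v p + 1 / ((n : ℝ) + 1))) ^ 2 ≤ (w p * b / v p) ^ 2 := by
          rw [div_pow, div_pow]
          gcongr
          linarith
        nlinarith [sq_nonneg (a + w p * b / (v p + 1 / ((n : ℝ) + 1)))]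
      exact add_le_add (key _ _) (key _ _)
    · filter_upwards [ae_restrict_mem hK.measurableSet] with p hp
      have hv0 := hvK p hp
      have key : ∀ a b : ℝ, Tendsto (fun n : ℕ => (a - w p * b / (v p + 1 / ((n : ℝ) + 1))) ^ 2)
          atTop (𝓝 ((a - w p * b / v p) ^ 2)) := by
        intro a b
        have : Tendsto (fun n : ℕ => w p * b / (v p + 1 / ((n : ℝ) + 1))) atTop
            (𝓝 (w p * b / (v p + 0))) :=
          tendsto_const_nhds.div (tendsto_const_nhds.add h0) (by simpa using hv0.ne')
        rw [add_zero] at this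
        exact (tendsto_const_nhds.sub this).pow 2
      exact (key _ _).add (key _ _)
  refine le_of_tendsto_of_tendsto' hL hR2 fun n => ?_
  obtain ⟨hi, he⟩ := picone_delta hR hv hw (hpos n)
  rw [← he]
  refine setIntegral_mono_set hi ?_ hKs.eventuallyLE
  exact Eventually.of_forall fun p => by positivity

/-! ### Poincaré inequality on an L-shaped domain -/

lemma intOn_rect {g : ℝ × ℝ → ℝ} (hg : Continuous g) (a b c d : ℝ) :
    IntegrableOn g (Ioo a b ×ˢ Ioo c d) :=
  (hg.continuousOn.integrableOn_compact (isCompact_Icc.prod isCompact_Icc)).mono_set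
    (prod_mono (Ioo_subset_Icc_self (a := a) (b := b)) (Ioo_subset_Icc_self (a := c) (b := d)))

lemma intOn_Ioo {g : ℝ → ℝ} (hg : Continuous g) (a b : ℝ) : IntegrableOn g (Ioo a b) :=
  (hg.continuousOn.integrableOn_compact isCompact_Icc).mono_set Ioo_subset_Icc_self

lemma sq_int_le {f : ℝ → ℝ} (hf : Continuous f) {a b : ℝ} (hab : a ≤ b) :
    (∫ x in Ioo a b, f x) ^ 2 ≤ (b - a) * ∫ x in Ioo a b, f x ^ 2 := by
  rcases hab.eq_or_lt with rfl | hlt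
  · simp
  set m := (∫ x in Ioo a b, f x) / (b - a) with hm
  have h0 : 0 ≤ ∫ x in Ioo a b, (f x - m) ^ 2 := integral_nonneg fun x => sq_nonneg _
  have e : ∫ x in Ioo a b, (f x - m) ^ 2 =
      (∫ x in Ioo a b, f x ^ 2) - 2 * m * (∫ x in Ioo a b, f x) + m ^ 2 * (b - a) := by
    have e1 : ∀ x, (f x - m) ^ 2 = f x ^ 2 - 2 * m * f x + m ^ 2 := fun x => by ring
    simp_rw [e1]
    have s1 := integral_add (((intOn_Ioo (hf.pow 2) a b)).sub
      ((intOn_Ioo hf a b).const_mul (2 * m))) (intOn_Ioo (continuous_const (y := m ^ 2)) a b)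
    have s2 := integral_sub (intOn_Ioo (hf.pow 2) a b) ((intOn_Ioo hf a b).const_mul (2 * m))
    simp only [Pi.sub_apply, Pi.pow_apply] at s1 s2
    rw [s1, s2, integral_const_mul]
    simp [hlt.le]
    ring
  rw [e] at h0
  have hb : 0 < b - a := by linarith
  have hI : (∫ x in Ioo a b, f x) = m * (b - a) := by rw [hm]; field_simp
  rw [hI] at h0 ⊢
  have : 0 ≤ (b - a) * ((∫ x in Ioo a b, f x ^ 2) - m ^ 2 * (b - a)) :=
    mul_nonneg hb.le (by nlinarith)
  nlinarith

lemma osc_le {g g' : ℝ → ℝ} (hg : ∀ x, HasDerivAt g (g' x) x) (hg' : Continuous g') {a b s x : ℝ}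
    (hs : s ∈ Icc a b) (hx : x ∈ Icc a b) :
    (g x - g s) ^ 2 ≤ (b - a) * ∫ t in Ioo a b, g' t ^ 2 := by
  wlog h : s ≤ x generalizing s x
  · have := this hx hs (le_of_not_ge h)
    nlinarith
  have e : ∫ t in Ioo s x, g' t = g x - g s := by
    rw [← integral_Ioc_eq_integral_Ioo, ← intervalIntegral.integral_of_le h]
    exact intervalIntegral.integral_eq_sub_of_hasDerivAt (fun y _ => hg y)
      (hg'.intervalIntegrable _ _)
  rw [← e]
  refine (sq_int_le hg' h).trans ?_
  have h1 : ∫ t in Ioo s x, g' t ^ 2 ≤ ∫ t in Ioo a b, g' t ^ 2 :=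
    setIntegral_mono_set (intOn_Ioo (hg'.pow 2) a b) (Eventually.of_forall fun _ => sq_nonneg _)
      (Ioo_subset_Ioo hs.1 hx.2).eventuallyLE
  have h2 : 0 ≤ ∫ t in Ioo s x, g' t ^ 2 := integral_nonneg fun _ => sq_nonneg _
  have := hs.1; have := hx.2
  exact mul_le_mul (by linarith) h1 h2 (by linarith)

lemma intOn_prod_right {f : ℝ × ℝ → ℝ} {s t : Set ℝ} (hf : IntegrableOn f (s ×ˢ t)) :
    IntegrableOn (fun y => ∫ x in s, f (x, y)) t := by
  rw [Measure.volume_eq_prod] at *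
  simp only [← Measure.prod_restrict s t, IntegrableOn] at hf ⊢
  exact hf.integral_prod_right

lemma intOn_prod_left {f : ℝ × ℝ → ℝ} {s t : Set ℝ} (hf : IntegrableOn f (s ×ˢ t)) :
    IntegrableOn (fun x => ∫ y in t, f (x, y)) s := by
  rw [Measure.volume_eq_prod] at *
  simp only [← Measure.prod_restrict s t, IntegrableOn] at hf ⊢
  exact hf.integral_prod_left

lemma poinc_rect {f : ℝ × ℝ → ℝ} (hf : ContDiff ℝ 1 f) {a b c s t G : ℝ} (hac : a < c)
    (hcb : c ≤ b) (hs : s ∈ Ioo a c) (ht : t ∈ Ioo a c)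
    (hG : (c - a) * ∫ y in Ioo a c, pd2 f (s, y) ^ 2 ≤ G) :
    ∫ p in Ioo a b ×ˢ Ioo a c, (f p - f (s, t)) ^ 2 ≤
      2 * (b - a) ^ 2 * (∫ p in Ioo a b ×ˢ Ioo a c, pd1 f p ^ 2) + 2 * (b - a) * (c - a) * G := by
  have hfc := hf.continuous
  have hfd := hf.differentiable (by norm_num)
  have hb : 0 < b - a := by linarith
  have hpt : ∀ y ∈ Ioo a c, ∀ x ∈ Ioo a b, (f (x, y) - f (s, t)) ^ 2 ≤
      2 * ((b - a) * ∫ x in Ioo a b, pd1 f (x, y) ^ 2) + 2 * G := by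
    intro y hy x hx
    have h1 := osc_le (g := fun x => f (x, y)) (g' := fun x => pd1 f (x, y)) (a := a) (b := b)
      (s := s) (x := x) (fun x => hasDerivAt_fst (hfd _)) ((pd1_cont hf).comp (by fun_prop))
      ⟨hs.1.le, by linarith [hs.2]⟩ ⟨hx.1.le, hx.2.le⟩
    have h2 := osc_le (g := fun y => f (s, y)) (g' := fun y => pd2 f (s, y)) (a := a) (b := c)
      (s := t) (x := y) (fun y => hasDerivAt_snd (hfd _)) ((pd2_cont hf).comp (by fun_prop))
      ⟨ht.1.le, ht.2.le⟩ ⟨hy.1.le, hy.2.le⟩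
    nlinarith [sq_nonneg ((f (x, y) - f (s, y)) - (f (s, y) - f (s, t)))]
  have i1 : IntegrableOn (fun p => pd1 f p ^ 2) (Ioo a b ×ˢ Ioo a c) :=
    intOn_rect ((pd1_cont hf).pow 2) _ _ _ _
  have i0 : IntegrableOn (fun p => (f p - f (s, t)) ^ 2) (Ioo a b ×ˢ Ioo a c) :=
    intOn_rect (by fun_prop) _ _ _ _
  rw [setInt_prod_fst i0, setInt_prod_fst i1]
  have i3 := intOn_prod_right i1
  calc ∫ y in Ioo a c, ∫ x in Ioo a b, (f (x, y) - f (s, t)) ^ 2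
      ≤ ∫ y in Ioo a c, (2 * (b - a) ^ 2 * (∫ x in Ioo a b, pd1 f (x, y) ^ 2)
          + 2 * (b - a) * G) := by
        refine setIntegral_mono_on (intOn_prod_right i0) ?_ measurableSet_Ioo ?_
        · exact (i3.const_mul _).add (intOn_Ioo continuous_const _ _)
        intro y hy
        calc ∫ x in Ioo a b, (f (x, y) - f (s, t)) ^ 2
            ≤ ∫ x in Ioo a b, (2 * ((b - a) * ∫ x in Ioo a b, pd1 f (x, y) ^ 2) + 2 * G) :=
              setIntegral_mono_on (intOn_Ioo (by fun_prop) _ _)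
                (intOn_Ioo continuous_const _ _) measurableSet_Ioo (hpt y hy)
          _ = _ := by
              simp [hb.le]
              ring
    _ = _ := by
        have := integral_add (i3.const_mul (2 * (b - a) ^ 2))
          (intOn_Ioo (continuous_const (y := 2 * (b - a) * G)) a c)
        rw [this, integral_const_mul]
        simp [hac.le]
        ring

/-- Some vertical line in the square carries at most the average of the vertical energy. -/
lemma exists_line {f : ℝ × ℝ → ℝ} (hf : ContDiff ℝ 1 f) {a b c : ℝ} (hac : a < c)
    (hcb : c ≤ b) : ∃ s ∈ Ioo a c, (c - a) * ∫ y in Ioo a c, pd2 f (s, y) ^ 2 ≤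
      ∫ p in Ioo a b ×ˢ Ioo a c, pd2 f p ^ 2 := by
  have i0 : IntegrableOn (fun p => pd2 f p ^ 2) (Ioo a c ×ˢ Ioo a c) :=
    intOn_rect ((pd2_cont hf).pow 2) _ _ _ _
  have i1 : IntegrableOn (fun p => pd2 f p ^ 2) (Ioo a b ×ˢ Ioo a c) :=
    intOn_rect ((pd2_cont hf).pow 2) _ _ _ _
  obtain ⟨s, hs, h⟩ := exists_le_setAverage (μ := volume) (s := Ioo a c) (by simp [hac])
    (by simp) (intOn_prod_left i0)
  refine ⟨s, hs, ?_⟩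
  rw [setAverage_eq, ← setInt_prod_snd i0] at h
  simp only [Real.volume_real_Ioo_of_le hac.le, smul_eq_mul] at h
  rw [inv_mul_eq_div, le_div_iff₀ (by linarith)] at h
  calc _ ≤ ∫ p in Ioo a c ×ˢ Ioo a c, pd2 f p ^ 2 := by linarith
    _ ≤ _ := setIntegral_mono_set i1 (Eventually.of_forall fun _ => sq_nonneg _)
      (prod_mono (Ioo_subset_Ioo_right hcb) subset_rfl).eventuallyLE

lemma setInt_rect_swap (f : ℝ × ℝ → ℝ) (s t : Set ℝ) :
    ∫ p in s ×ˢ t, f p.swap = ∫ p in t ×ˢ s, f p := by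
  have := mp_swap.setIntegral_preimage_emb MeasurableEquiv.prodComm.measurableEmbedding
    f (t ×ˢ s)
  rw [← this, preimage_swap_prod]

lemma poinc {f : ℝ × ℝ → ℝ} (hf : ContDiff ℝ 1 f) {a b c : ℝ} (hac : a < c) (hcb : c ≤ b) :
    ∃ k : ℝ, (∫ p in Ioo a b ×ˢ Ioo a c, (f p - k) ^ 2) + (∫ p in Ioo a c ×ˢ Ioo a b, (f p - k) ^ 2)
      ≤ 4 * (b - a) ^ 2 * ((∫ p in Ioo a b ×ˢ Ioo a c, gradSq2 f p) +
        ∫ p in Ioo a c ×ˢ Ioo a b, gradSq2 f p) := by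
  have hf' : ContDiff ℝ 1 (fun p : ℝ × ℝ => f p.swap) :=
    hf.comp (contDiff_snd.prodMk contDiff_fst)
  have hfd := hf.differentiable (by norm_num)
  obtain ⟨s, hs, hsG⟩ := exists_line hf hac hcb
  obtain ⟨t, ht, htG⟩ := exists_line hf' hac hcb
  have A := poinc_rect hf hac hcb hs ht hsG
  have B := poinc_rect hf' hac hcb ht hs htG
  have e1 : ∀ p, pd1 (fun p : ℝ × ℝ => f p.swap) p = pd2 f p.swap := fun p => pd1_comp_swap (hfd _)
  have e2 : ∀ p, pd2 (fun p : ℝ × ℝ => f p.swap) p = pd1 f p.swap := fun p => pd2_comp_swap (hfd _)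
  simp only [e1, e2, Prod.swap_prod_mk] at B
  rw [setInt_rect_swap (fun p => (f p - f (s, t)) ^ 2),
    setInt_rect_swap (fun p => pd1 f p ^ 2), setInt_rect_swap (fun p => pd2 f p ^ 2)] at B
  refine ⟨f (s, t), ?_⟩
  have g1 : ∀ S T : ℝ, ∀ S' T' : ℝ, ∫ p in Ioo S T ×ˢ Ioo S' T', gradSq2 f p =
      (∫ p in Ioo S T ×ˢ Ioo S' T', pd1 f p ^ 2) + ∫ p in Ioo S T ×ˢ Ioo S' T', pd2 f p ^ 2 :=
    fun S T S' T' => integral_add (intOn_rect ((pd1_cont hf).pow 2) _ _ _ _)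
      (intOn_rect ((pd2_cont hf).pow 2) _ _ _ _)
  have nn : ∀ (g : ℝ × ℝ → ℝ) (S : Set (ℝ × ℝ)), 0 ≤ ∫ p in S, g p ^ 2 :=
    fun g S => integral_nonneg fun _ => sq_nonneg _
  rw [g1, g1]
  have n1 := nn (pd1 f) (Ioo a b ×ˢ Ioo a c)
  have n2 := nn (pd2 f) (Ioo a b ×ˢ Ioo a c)
  have n3 := nn (pd1 f) (Ioo a c ×ˢ Ioo a b)
  have n4 := nn (pd2 f) (Ioo a c ×ˢ Ioo a b)
  have hbc : (b - a) * (c - a) ≤ (b - a) ^ 2 := by nlinarith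
  have hp : 0 ≤ (b - a) ^ 2 := sq_nonneg _
  nlinarith [mul_nonneg hp n1, mul_nonneg hp n2, mul_nonneg hp n3, mul_nonneg hp n4,
    mul_le_mul_of_nonneg_right hbc n2, mul_le_mul_of_nonneg_right hbc n3]

/-! ### Concentration of almost-minimisers at the eigenfunction -/

lemma strip_le {w : ℝ × ℝ → ℝ} (hw : ContDiff ℝ 1 w) {a b c d : ℝ} (hcd : c ≤ d)
    (h0 : ∀ x ∈ Ioo a b, w (x, c) = 0) {Y : Set ℝ} (hY : MeasurableSet Y) (hYs : Y ⊆ Ioo c d)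
    {m : ℝ} (hm : volume.real Y ≤ m) :
    ∫ p in Ioo a b ×ˢ Y, w p ^ 2 ≤ m * (d - c) * ∫ p in Ioo a b ×ˢ Ioo c d, pd2 w p ^ 2 := by
  have hfd := hw.differentiable (by norm_num)
  have hwc := hw.continuous
  have i0 : IntegrableOn (fun p => w p ^ 2) (Ioo a b ×ˢ Y) :=
    (intOn_rect (by fun_prop) a b c d).mono_set (prod_mono subset_rfl hYs)
  have i1 : IntegrableOn (fun p => pd2 w p ^ 2) (Ioo a b ×ˢ Ioo c d) :=
    intOn_rect ((pd2_cont hw).pow 2) _ _ _ _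
  have hYf : volume Y < ⊤ := (measure_mono hYs).trans_lt (by simp)
  rw [setInt_prod_snd i0, setInt_prod_snd i1, ← integral_const_mul]
  refine setIntegral_mono_on (intOn_prod_left i0) ((intOn_prod_left i1).const_mul _)
    measurableSet_Ioo ?_
  intro x hx
  have hG : 0 ≤ ∫ y in Ioo c d, pd2 w (x, y) ^ 2 := integral_nonneg fun _ => sq_nonneg _
  calc ∫ y in Y, w (x, y) ^ 2
      ≤ ∫ y in Y, (d - c) * ∫ y in Ioo c d, pd2 w (x, y) ^ 2 := by
        refine setIntegral_mono_on ((intOn_Ioo (by fun_prop) c d).mono_set hYs) ?_ hY ?_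
        · exact integrableOn_const hYf.ne
        intro y hy
        have := osc_le (g := fun y => w (x, y)) (g' := fun y => pd2 w (x, y)) (a := c) (b := d)
          (s := c) (x := y) (fun y => hasDerivAt_snd (hfd _)) ((pd2_cont hw).comp (by fun_prop))
          ⟨le_rfl, hcd⟩ (Ioo_subset_Icc_self (hYs hy))
        simpa [h0 x hx] using this
    _ = volume.real Y * ((d - c) * ∫ y in Ioo c d, pd2 w (x, y) ^ 2) := by simp
    _ ≤ m * ((d - c) * ∫ y in Ioo c d, pd2 w (x, y) ^ 2) := by
        refine mul_le_mul_of_nonneg_right hm (mul_nonneg (by linarith) hG)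
    _ = _ := by ring

/-- The core of the guide: the union of the two rectangles whose union is `Γ_R`, each shrunk
by `δ` on every side. -/
def Core (R δ : ℝ) : Set (ℝ × ℝ) :=
  Ioo (-1 + δ) (R - δ) ×ˢ Ioo (-1 + δ) (-δ) ∪ Ioo (-1 + δ) (-δ) ×ˢ Ioo (-1 + δ) (R - δ)

lemma Core_meas (R δ : ℝ) : MeasurableSet (Core R δ) :=
  (measurableSet_Ioo.prod measurableSet_Ioo).union (measurableSet_Ioo.prod measurableSet_Ioo)

/-- The union of the two closed shrunk rectangles. -/
def CoreC (R δ : ℝ) : Set (ℝ × ℝ) :=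
  Icc (-1 + δ) (R - δ) ×ˢ Icc (-1 + δ) (-δ) ∪ Icc (-1 + δ) (-δ) ×ˢ Icc (-1 + δ) (R - δ)

lemma CoreC_compact (R δ : ℝ) : IsCompact (CoreC R δ) :=
  (isCompact_Icc.prod isCompact_Icc).union (isCompact_Icc.prod isCompact_Icc)

lemma Core_subset (R δ : ℝ) : Core R δ ⊆ CoreC R δ :=
  union_subset_union (prod_mono Ioo_subset_Icc_self Ioo_subset_Icc_self)
    (prod_mono Ioo_subset_Icc_self Ioo_subset_Icc_self)

lemma CoreC_subset {R δ : ℝ} (hR : 0 < R) (hδ : 0 < δ) : CoreC R δ ⊆ GamR R := by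
  rw [GamR_eq hR, CoreC]
  rintro ⟨a, b⟩
  simp only [mem_union, mem_prod, mem_Ioo, mem_Icc]
  grind

lemma vol_edges {a b δ : ℝ} (hδ : 0 < δ) :
    volume.real (Ioo a b \ Ioo (a + δ) (b - δ)) ≤ 2 * δ := by
  have h : Ioo a b \ Ioo (a + δ) (b - δ) ⊆ Icc a (a + δ) ∪ Icc (b - δ) b := by
    intro x
    simp only [Set.mem_sdiff, mem_Ioo, mem_union, mem_Icc]
    grind
  have h1 : volume.real (Icc a (a + δ) ∪ Icc (b - δ) b) ≤
      volume.real (Icc a (a + δ)) + volume.real (Icc (b - δ) b) := measureReal_union_le _ _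
  rw [Real.volume_real_Icc_of_le (by linarith), Real.volume_real_Icc_of_le (by linarith)] at h1
  have h2 : volume.real (Ioo a b \ Ioo (a + δ) (b - δ)) ≤
      volume.real (Icc a (a + δ) ∪ Icc (b - δ) b) :=
    measureReal_mono h (((isCompact_Icc.union isCompact_Icc).measure_lt_top).ne)
  linarith

lemma setInt_union_le {f : ℝ × ℝ → ℝ} {S T : Set (ℝ × ℝ)} (hS : IntegrableOn f S)
    (hT : IntegrableOn f T) (h0 : ∀ p, 0 ≤ f p) :
    ∫ p in S ∪ T, f p ≤ (∫ p in S, f p) + ∫ p in T, f p := by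
  have hle : volume.restrict (S ∪ T) ≤ volume.restrict S + volume.restrict T :=
    Measure.restrict_union_le _ _
  rw [← integral_add_measure hS hT]
  exact integral_mono_measure hle (Eventually.of_forall h0) (Integrable.add_measure hS hT)

lemma edge_rect {R δ : ℝ} (hR : 0 < R) (hδ : 0 < δ) {w : ℝ × ℝ → ℝ} (hw : ContDiff ℝ 1 w)
    (h1 : ∀ x ∈ Ioo (-1) R, w (x, -1) = 0) (h2 : ∀ y ∈ Ioo (-1) 0, w (-1, y) = 0) :
    ∫ p in (Ioo (-1) R ×ˢ Ioo (-1) 0) \ (Ioo (-1 + δ) (R - δ) ×ˢ Ioo (-1 + δ) (-δ)), w p ^ 2 ≤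
      2 * δ * (R + 1) * ∫ p in Ioo (-1) R ×ˢ Ioo (-1) 0, gradSq2 w p := by
  have hwc := hw.continuous
  have hfd := hw.differentiable (by norm_num)
  have hw' : ContDiff ℝ 1 (fun p : ℝ × ℝ => w p.swap) :=
    hw.comp (contDiff_snd.prodMk contDiff_fst)
  set Y := Ioo (-1 : ℝ) 0 \ Ioo (-1 + δ) (0 - δ)
  set X := Ioo (-1 : ℝ) R \ Ioo (-1 + δ) (R - δ)
  have mX : MeasurableSet X := measurableSet_Ioo.diff measurableSet_Ioo
  have mY : MeasurableSet Y := measurableSet_Ioo.diff measurableSet_Ioo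
  have A := strip_le hw (by norm_num) h1 mY sdiff_subset (vol_edges hδ)
  have B := strip_le hw' (by linarith) (a := -1) (b := 0) (c := -1) (d := R) h2 mX sdiff_subset
    (vol_edges hδ)
  have e1 : ∀ p, pd2 (fun p : ℝ × ℝ => w p.swap) p = pd1 w p.swap := fun p => pd2_comp_swap (hfd _)
  simp only [e1] at B
  rw [setInt_rect_swap (fun p => w p ^ 2), setInt_rect_swap (fun p => pd1 w p ^ 2)] at B
  have hsub : (Ioo (-1) R ×ˢ Ioo (-1) 0) \ (Ioo (-1 + δ) (R - δ) ×ˢ Ioo (-1 + δ) (-δ)) ⊆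
      Ioo (-1) R ×ˢ Y ∪ X ×ˢ Ioo (-1) 0 := by
    rintro ⟨a, b⟩
    simp only [X, Y, Set.mem_sdiff, mem_prod, mem_Ioo, mem_union]
    grind
  have iT : IntegrableOn (fun p => w p ^ 2) (Ioo (-1) R ×ˢ Ioo (-1) 0) :=
    intOn_rect (by fun_prop) _ _ _ _
  have i1 : IntegrableOn (fun p => w p ^ 2) (Ioo (-1) R ×ˢ Y) :=
    iT.mono_set (prod_mono subset_rfl sdiff_subset)
  have i2 : IntegrableOn (fun p => w p ^ 2) (X ×ˢ Ioo (-1) 0) :=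
    iT.mono_set (prod_mono sdiff_subset subset_rfl)
  have s1 : ∫ p in (Ioo (-1) R ×ˢ Ioo (-1) 0) \ (Ioo (-1 + δ) (R - δ) ×ˢ Ioo (-1 + δ) (-δ)), w p ^ 2
      ≤ ∫ p in Ioo (-1) R ×ˢ Y ∪ X ×ˢ Ioo (-1) 0, w p ^ 2 :=
    setIntegral_mono_set (i1.union i2) (Eventually.of_forall fun _ => sq_nonneg _)
      hsub.eventuallyLE
  have s2 : ∫ p in Ioo (-1) R ×ˢ Y ∪ X ×ˢ Ioo (-1) 0, w p ^ 2 ≤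
      (∫ p in Ioo (-1) R ×ˢ Y, w p ^ 2) + ∫ p in X ×ˢ Ioo (-1) 0, w p ^ 2 :=
    setInt_union_le i1 i2 fun _ => sq_nonneg _
  have g1 : ∫ p in Ioo (-1) R ×ˢ Ioo (-1) 0, gradSq2 w p =
      (∫ p in Ioo (-1) R ×ˢ Ioo (-1) 0, pd1 w p ^ 2) +
        ∫ p in Ioo (-1) R ×ˢ Ioo (-1) 0, pd2 w p ^ 2 :=
    integral_add (intOn_rect ((pd1_cont hw).pow 2) _ _ _ _)
      (intOn_rect ((pd2_cont hw).pow 2) _ _ _ _)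
  have n2 : 0 ≤ ∫ p in Ioo (-1) R ×ˢ Ioo (-1) 0, pd2 w p ^ 2 := integral_nonneg fun _ => sq_nonneg _
  rw [g1]
  nlinarith [mul_nonneg (mul_nonneg hδ.le hR.le) n2]

lemma gamR_union {R : ℝ} (hR : 0 < R) :
    GamR R = Ioo (-1) R ×ˢ Ioo (-1) 0 ∪ Ioo (-1) 0 ×ˢ Ioo (-1) R := by
  rw [GamR_eq hR, union_comm]

/-- Uniform smallness of the mass of `w` in the boundary layer of width `δ`. -/
lemma edge_le {R δ : ℝ} (hR : 0 < R) (hδ : 0 < δ) {w : ℝ × ℝ → ℝ} (hw : Test R w) :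
    ∫ p in GamR R \ Core R δ, w p ^ 2 ≤ 4 * δ * (R + 1) * ∫ p in GamR R, gradSq2 w p := by
  obtain ⟨hw1, K, hK, hKs, hz⟩ := hw
  have hwc := hw1.continuous
  have hfd := hw1.differentiable (by norm_num)
  have hw' : ContDiff ℝ 1 (fun p : ℝ × ℝ => w p.swap) :=
    hw1.comp (contDiff_snd.prodMk contDiff_fst)
  have z : ∀ a b : ℝ, (a, b) ∈ closure (GamR R) → (a, b) ∉ GamR R ∪ SigSeg R → w (a, b) = 0 :=
    fun a b hc hn => hz _ hc fun hk => hn (hKs hk)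
  have z1 : ∀ x ∈ Ioo (-1) R, w (x, -1) = 0 := by
    intro t ht
    refine z _ _ (by rw [closure_GamR hR]; right; simp; exact ⟨ht.1.le, ht.2.le⟩) ?_
    simp only [mem_union, mem_SigSeg, GamR_eq hR, mem_prod, mem_Ioo]
    simp only [mem_Ioo] at ht
    grind
  have z2 : ∀ y ∈ Ioo (-1) R, w (-1, y) = 0 := by
    intro t ht
    refine z _ _ (by rw [closure_GamR hR]; left; simp; exact ⟨ht.1.le, ht.2.le⟩) ?_
    simp only [mem_union, mem_SigSeg, GamR_eq hR, mem_prod, mem_Ioo]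
    simp only [mem_Ioo] at ht
    grind
  have A := edge_rect hR hδ hw1 z1 fun y hy => z2 y ⟨hy.1, hy.2.trans hR⟩
  have B := edge_rect hR hδ hw' z2 fun y hy => z1 y ⟨hy.1, hy.2.trans hR⟩
  have e1 : ∀ p, gradSq2 (fun p : ℝ × ℝ => w p.swap) p = gradSq2 w p.swap := fun p => by
    simp only [gradSq2_eq, pd1_comp_swap (hfd _), pd2_comp_swap (hfd _)]
    ring
  simp only [e1] at B
  rw [setInt_rect_swap (fun p => gradSq2 w p)] at B
  have e2 : ∫ p in (Ioo (-1) R ×ˢ Ioo (-1) 0) \ (Ioo (-1 + δ) (R - δ) ×ˢ Ioo (-1 + δ) (-δ)),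
      w p.swap ^ 2 =
      ∫ p in (Ioo (-1) 0 ×ˢ Ioo (-1) R) \ (Ioo (-1 + δ) (-δ) ×ˢ Ioo (-1 + δ) (R - δ)),
      w p ^ 2 := by
    have := mp_swap.setIntegral_preimage_emb MeasurableEquiv.prodComm.measurableEmbedding
      (fun p => w p ^ 2)
      ((Ioo (-1) 0 ×ˢ Ioo (-1) R) \ (Ioo (-1 + δ) (-δ) ×ˢ Ioo (-1 + δ) (R - δ)))
    rw [← this, preimage_sdiff, preimage_swap_prod, preimage_swap_prod]
  rw [e2] at B
  have iG := test_grad_int hR hw1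
  have nn : ∀ᵐ p ∂(volume.restrict (GamR R)), (0 : ℝ × ℝ → ℝ) p ≤ gradSq2 w p :=
    Eventually.of_forall fun p => gradSq2_nonneg _ _
  have A' := setIntegral_mono_set iG nn (s := Ioo (-1) R ×ˢ Ioo (-1) 0)
    (by rw [gamR_union hR]; exact subset_union_left.eventuallyLE)
  have B' := setIntegral_mono_set iG nn (s := Ioo (-1) 0 ×ˢ Ioo (-1) R)
    (by rw [gamR_union hR]; exact subset_union_right.eventuallyLE)
  have i1 : IntegrableOn (fun p => w p ^ 2)
      ((Ioo (-1) R ×ˢ Ioo (-1) 0) \ (Ioo (-1 + δ) (R - δ) ×ˢ Ioo (-1 + δ) (-δ))) :=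
    (intOn_rect (by fun_prop) _ _ _ _).mono_set sdiff_subset
  have i2 : IntegrableOn (fun p => w p ^ 2)
      ((Ioo (-1) 0 ×ˢ Ioo (-1) R) \ (Ioo (-1 + δ) (-δ) ×ˢ Ioo (-1 + δ) (R - δ))) :=
    (intOn_rect (by fun_prop) _ _ _ _).mono_set sdiff_subset
  have hsub : GamR R \ Core R δ ⊆
      ((Ioo (-1) R ×ˢ Ioo (-1) 0) \ (Ioo (-1 + δ) (R - δ) ×ˢ Ioo (-1 + δ) (-δ))) ∪
      ((Ioo (-1) 0 ×ˢ Ioo (-1) R) \ (Ioo (-1 + δ) (-δ) ×ˢ Ioo (-1 + δ) (R - δ))) := by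
    rw [gamR_union hR, Core]
    rintro p ⟨h1, h2⟩
    rw [mem_union, not_or] at h2
    rcases h1 with h1 | h1
    exacts [Or.inl ⟨h1, h2.1⟩, Or.inr ⟨h1, h2.2⟩]
  have s1 := setIntegral_mono_set (i1.union i2)
    (Eventually.of_forall fun p => sq_nonneg (w p)) hsub.eventuallyLE
  have s2 := setInt_union_le i1 i2 fun p => sq_nonneg (w p)
  have hc : 0 ≤ 2 * δ * (R + 1) := by positivity
  nlinarith [mul_le_mul_of_nonneg_left A' hc, mul_le_mul_of_nonneg_left B' hc]

lemma core_cover {R : ℝ} (hR : 0 < R) :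
    AECover (volume.restrict (GamR R)) atTop (fun n : ℕ => Core R (1 / ((n : ℝ) + 1))) := by
  refine ⟨?_, fun n => Core_meas _ _⟩
  filter_upwards [ae_restrict_mem (GamR_meas hR)] with p hp
  have ht : Tendsto (fun n : ℕ => 1 / ((n : ℝ) + 1)) atTop (𝓝 0) :=
    tendsto_one_div_add_atTop_nhds_zero_nat
  obtain ⟨a, b⟩ := p
  rw [gamR_union hR] at hp
  have ev : ∀ x : ℝ, 0 < x → ∀ᶠ n : ℕ in atTop, 1 / ((n : ℝ) + 1) < x := fun x hx =>
    ht.eventually_lt_const hx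
  rcases hp with ⟨ha, hb⟩ | ⟨ha, hb⟩
  · filter_upwards [ev (a + 1) (by linarith [ha.1]), ev (R - a) (by linarith [ha.2]),
      ev (b + 1) (by linarith [hb.1]), ev (-b) (by linarith [hb.2])] with n h1 h2 h3 h4
    left
    simp only [mem_prod, mem_Ioo]
    refine ⟨⟨?_, ?_⟩, ?_, ?_⟩ <;> linarith
  · filter_upwards [ev (a + 1) (by linarith [ha.1]), ev (R - b) (by linarith [hb.2]),
      ev (b + 1) (by linarith [hb.1]), ev (-a) (by linarith [ha.2])] with n h1 h2 h3 h4
    right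
    simp only [mem_prod, mem_Ioo]
    refine ⟨⟨?_, ?_⟩, ?_, ?_⟩ <;> linarith

/-- On the core, an almost-minimiser is close to a multiple of the eigenfunction. -/
lemma core_close {R δ : ℝ} (hR : 0 < R) (hδ : 0 < δ) (hδ' : δ < 1 / 2) {v : ℝ × ℝ → ℝ}
    (hv : IsFirstEF R v) :
    ∃ C : ℝ, 0 < C ∧ ∀ w, Test R w → ∃ k : ℝ, ∫ p in Core R δ, (w p - k * v p) ^ 2 ≤
      C * ((∫ p in GamR R, gradSq2 w p) - lamR R * ∫ p in GamR R, w p ^ 2) := by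
  have hcc := CoreC_compact R δ
  have hcs := CoreC_subset hR hδ
  have hvc : ContinuousOn v (CoreC R δ) := hv.2.1.mono (hcs.trans subset_closure)
  have hne : (CoreC R δ).Nonempty := ⟨(-1/2, -1/2), by
    left; simp only [mem_prod, mem_Icc]; refine ⟨⟨?_, ?_⟩, ?_, ?_⟩ <;> linarith⟩
  obtain ⟨p0, hp0, hmin⟩ := hcc.exists_isMinOn hne hvc
  obtain ⟨p1, hp1, hmax⟩ := hcc.exists_isMaxOn hne hvc
  set m := v p0
  set M := v p1
  have hm0 : 0 < m := hv.2.2.2.2.2.2.1 _ (hcs hp0)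
  have hM0 : 0 < M := hv.2.2.2.2.2.2.1 _ (hcs hp1)
  set b := R - δ
  set a := -1 + δ
  set c := -δ
  have hac : a < c := by simp only [a, c]; linarith
  have hcb : c ≤ b := by simp only [b, c]; linarith
  have hba : 0 < b - a := by linarith
  refine ⟨M ^ 2 * (4 * (b - a) ^ 2 * (2 / m ^ 2)), by positivity, fun w hw => ?_⟩
  have hq : ContDiffOn ℝ 1 (fun p => w p / v p) (GamR R) := by
    obtain ⟨V, hV, hVs, hvV⟩ := hv.1
    exact hw.1.contDiffOn.div ((hvV.of_le (by norm_cast)).mono (subset_union_left.trans hVs))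
      fun p hp => (hv.2.2.2.2.2.2.1 _ hp).ne'
  obtain ⟨f, hf, hfK, -⟩ := exists_ext (GamR_open hR) hcc hcs hq
  obtain ⟨k, hk⟩ := poinc hf hac hcb
  refine ⟨k, ?_⟩
  have hwc := hw.1.continuous
  have hfc := hf.continuous
  have hwd := hw.1.differentiable (by norm_num)
  have hsA : Ioo a b ×ˢ Ioo a c ⊆ Core R δ := subset_union_left
  have hsB : Ioo a c ×ˢ Ioo a b ⊆ Core R δ := subset_union_right
  have c1 : ContinuousOn (pd1 v) (CoreC R δ) := (ef_pd1_cont hv).mono (hcs.trans subset_union_left)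
  have c2 : ContinuousOn (pd2 v) (CoreC R δ) := (ef_pd2_cont hv).mono (hcs.trans subset_union_left)
  have hv0 : ∀ p ∈ CoreC R δ, v p ≠ 0 := fun p hp => (hv.2.2.2.2.2.2.1 p (hcs hp)).ne'
  set F : ℝ × ℝ → ℝ := fun p =>
    (pd1 w p - w p * pd1 v p / v p) ^ 2 + (pd2 w p - w p * pd2 v p / v p) ^ 2 with hF
  have iF : IntegrableOn F (CoreC R δ) := by
    refine ContinuousOn.integrableOn_compact hcc
      (ContinuousOn.add (ContinuousOn.pow ?_ 2) (ContinuousOn.pow ?_ 2))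
    · exact (pd1_cont hw.1).continuousOn.sub ((hwc.continuousOn.mul c1).div hvc hv0)
    · exact (pd2_cont hw.1).continuousOn.sub ((hwc.continuousOn.mul c2).div hvc hv0)
  have hP := picone hR hv hw hcc hcs
  have hgr : ∀ p ∈ Core R δ, gradSq2 f p ≤ (1 / m ^ 2) * F p := by
    intro p hp
    have hpo : Core R δ ∈ 𝓝 p := by
      refine IsOpen.mem_nhds ?_ hp
      exact (isOpen_Ioo.prod isOpen_Ioo).union (isOpen_Ioo.prod isOpen_Ioo)
    have hpc := Core_subset R δ hp
    have he : f =ᶠ[𝓝 p] fun q => w q / (v q + 0) := by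
      filter_upwards [hpo] with q hq
      rw [hfK q (Core_subset R δ hq), add_zero]
    have hvp : v p + 0 ≠ 0 := by simpa using hv0 p hpc
    have h := (pd1_quot (hwd p) (ef_diffAt hv (Or.inl (hcs hpc))) hvp).fderiv
    rw [add_zero] at h
    have hmp : m ≤ v p := hmin hpc
    have : gradSq2 f p = F p / v p ^ 2 := by
      rw [gradSq2, he.fderiv_eq, h]
      simp only [hF, pd1, pd2]
      have := hv0 p hpc
      simp
      field_simp
    rw [this, one_div_mul_eq_div]
    gcongr
  have bound : ∀ S : Set (ℝ × ℝ), MeasurableSet S → S ⊆ Core R δ → IntegrableOn (gradSq2 f) S →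
      ∫ p in S, gradSq2 f p ≤ (1 / m ^ 2) * ∫ p in CoreC R δ, F p := by
    intro S hS hSs hi
    have i2 : IntegrableOn F S := iF.mono_set (hSs.trans (Core_subset R δ))
    calc ∫ p in S, gradSq2 f p ≤ ∫ p in S, (1 / m ^ 2) * F p :=
          setIntegral_mono_on hi (i2.const_mul _) hS fun p hp => hgr p (hSs hp)
      _ = (1 / m ^ 2) * ∫ p in S, F p := integral_const_mul _ _
      _ ≤ _ := by
          refine mul_le_mul_of_nonneg_left ?_ (by positivity)
          refine setIntegral_mono_set iF (Eventually.of_forall fun p => ?_)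
            (hSs.trans (Core_subset R δ)).eventuallyLE
          simp only [hF, Pi.zero_apply]
          positivity
  have gi : ∀ a b c d : ℝ, IntegrableOn (gradSq2 f) (Ioo a b ×ˢ Ioo c d) := fun _ _ _ _ =>
    intOn_rect (((pd1_cont hf).pow 2).add ((pd2_cont hf).pow 2)) _ _ _ _
  have bA := bound _ (measurableSet_Ioo.prod measurableSet_Ioo) hsA (gi _ _ _ _)
  have bB := bound _ (measurableSet_Ioo.prod measurableSet_Ioo) hsB (gi _ _ _ _)
  have iq : ∀ a b c d : ℝ, IntegrableOn (fun p => (f p - k) ^ 2) (Ioo a b ×ˢ Ioo c d) :=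
    fun _ _ _ _ => intOn_rect (by fun_prop) _ _ _ _
  have iU : IntegrableOn (fun p => (f p - k) ^ 2) (Core R δ) := (iq _ _ _ _).union (iq _ _ _ _)
  have iL : IntegrableOn (fun p => (w p - k * v p) ^ 2) (Core R δ) :=
    (ContinuousOn.integrableOn_compact hcc ((hwc.continuousOn.sub
      (continuousOn_const.mul hvc)).pow 2)).mono_set (Core_subset R δ)
  calc ∫ p in Core R δ, (w p - k * v p) ^ 2
      ≤ ∫ p in Core R δ, M ^ 2 * (f p - k) ^ 2 := by
        refine setIntegral_mono_on iL (iU.const_mul _) (Core_meas _ _) fun p hp => ?_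
        have hpc := Core_subset R δ hp
        have hvp := hv.2.2.2.2.2.2.1 p (hcs hpc)
        have hMp : v p ≤ M := hmax hpc
        have : w p - k * v p = v p * (f p - k) := by
          rw [hfK p hpc]; field_simp
        rw [this, mul_pow]
        gcongr
    _ = M ^ 2 * ∫ p in Core R δ, (f p - k) ^ 2 := integral_const_mul _ _
    _ ≤ M ^ 2 * (4 * (b - a) ^ 2 * (2 / m ^ 2 * ∫ p in CoreC R δ, F p)) := by
        refine mul_le_mul_of_nonneg_left ?_ (by positivity)
        refine (setInt_union_le (iq _ _ _ _) (iq _ _ _ _) fun _ => sq_nonneg _).trans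
          (hk.trans ?_)
        refine mul_le_mul_of_nonneg_left ?_ (by positivity)
        have : 2 / m ^ 2 * (∫ p in CoreC R δ, F p) = (1 / m ^ 2) * (∫ p in CoreC R δ, F p) +
          (1 / m ^ 2) * ∫ p in CoreC R δ, F p := by ring
        rw [this]
        exact add_le_add bA bB
    _ ≤ M ^ 2 * (4 * (b - a) ^ 2 * (2 / m ^ 2 *
          ((∫ p in GamR R, gradSq2 w p) - lamR R * ∫ p in GamR R, w p ^ 2))) := by
        gcongr
    _ = _ := by ring

/-- Normalised almost-minimisers are almost parallel to the eigenfunction; this is the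
quantitative simplicity of `λ₁(Γ_R)`. -/
lemma concentration {R : ℝ} (hR : 0 < R) {v : ℝ × ℝ → ℝ} (hv : IsFirstEF R v) {η : ℝ}
    (hη : 0 < η) : ∃ γ : ℝ, 0 < γ ∧ ∀ w, Test R w → (∫ p in GamR R, w p ^ 2) = 1 →
      (∫ p in GamR R, gradSq2 w p) ≤ lamR R + γ → 1 - η ≤ |∫ p in GamR R, w p * v p| := by
  obtain ⟨θ, hθ0, hθ1, hθη⟩ : ∃ θ : ℝ, 0 < θ ∧ θ < 1 / 4 ∧ 3 * θ ≤ η :=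
    ⟨min (1 / 8) (η / 3), lt_min (by norm_num) (by linarith),
      (min_le_left _ _).trans_lt (by norm_num), by linarith [min_le_right (1 / 8) (η / 3)]⟩
  have hv2 := ef_sq_int hR hv
  have hl := lamR_nonneg R
  have ht : Tendsto (fun n : ℕ => 1 / ((n : ℝ) + 1)) atTop (𝓝 0) :=
    tendsto_one_div_add_atTop_nhds_zero_nat
  have hcov := (core_cover hR).integral_tendsto_of_countably_generated hv2
  rw [hv.2.2.2.2.2.2.2] at hcov
  have ht2 : Tendsto (fun n : ℕ => 4 * (1 / ((n : ℝ) + 1)) * (R + 1) * (lamR R + 1)) atTop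
      (𝓝 (4 * 0 * (R + 1) * (lamR R + 1))) := ((ht.const_mul 4).mul_const _).mul_const _
  obtain ⟨n, h1, h2, h3⟩ := ((hcov.eventually_const_lt (show 1 - θ < 1 by linarith)).and
    ((ht.eventually_lt_const (show (0 : ℝ) < 1 / 2 by norm_num)).and
      (ht2.eventually_lt_const (show 4 * 0 * (R + 1) * (lamR R + 1) < θ by simpa using hθ0)))).exists
  have hδ : (0 : ℝ) < 1 / ((n : ℝ) + 1) := by positivity
  set δ : ℝ := 1 / ((n : ℝ) + 1)
  have hCs : Core R δ ⊆ GamR R := (Core_subset R δ).trans (CoreC_subset hR hδ)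
  rw [Measure.restrict_restrict (Core_meas _ _), inter_eq_left.2 hCs] at h1
  obtain ⟨C, hC, hclose⟩ := core_close hR hδ h2 hv
  refine ⟨min 1 (θ / C), lt_min one_pos (by positivity), fun w hw hw1 hwg => ?_⟩
  obtain ⟨k, hk⟩ := hclose w hw
  have hwc := hw.1.continuous
  have hγ1 := min_le_left 1 (θ / C)
  have hγ2 := min_le_right 1 (θ / C)
  have hk' : ∫ p in Core R δ, (w p - k * v p) ^ 2 ≤ θ := by
    refine hk.trans ?_
    rw [hw1, mul_one]
    calc C * ((∫ p in GamR R, gradSq2 w p) - lamR R) ≤ C * (θ / C) := by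
          gcongr; linarith
      _ = θ := by field_simp
  have iw2 : IntegrableOn (fun p => w p ^ 2) (GamR R) := intOn_of_cont hR (hwc.pow 2).continuousOn
  have iwv : IntegrableOn (fun p => w p * v p) (GamR R) :=
    intOn_of_cont hR (hwc.continuousOn.mul hv.2.1)
  have hE := edge_le hR hδ hw
  have hE' : ∫ p in GamR R \ Core R δ, w p ^ 2 ≤ θ := by
    refine hE.trans (le_trans ?_ h3.le)
    gcongr
    linarith
  have sp : ∀ f : ℝ × ℝ → ℝ, IntegrableOn f (GamR R) →
      (∫ p in GamR R \ Core R δ, f p) = (∫ p in GamR R, f p) - ∫ p in Core R δ, f p :=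
    fun f hf => setIntegral_sdiff (Core_meas _ _) hf hCs
  have sw := sp _ iw2
  have sv := sp _ hv2
  have swv := sp _ iwv
  rw [hv.2.2.2.2.2.2.2] at sv
  rw [hw1] at sw
  have nv1 : 0 ≤ ∫ p in GamR R \ Core R δ, v p ^ 2 := integral_nonneg fun _ => sq_nonneg _
  set nw := ∫ p in Core R δ, w p ^ 2
  set nv := ∫ p in Core R δ, v p ^ 2
  set r := ∫ p in Core R δ, w p * v p
  have ex : ∫ p in Core R δ, (w p - k * v p) ^ 2 = nw - 2 * k * r + k ^ 2 * nv := by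
    have e1 : ∀ p, (w p - k * v p) ^ 2 = w p ^ 2 - 2 * k * (w p * v p) + k ^ 2 * v p ^ 2 :=
      fun p => by ring
    simp_rw [e1]
    have j1 := iw2.mono_set hCs
    have j2 := (iwv.mono_set hCs).const_mul (2 * k)
    have j3 := (hv2.mono_set hCs).const_mul (k ^ 2)
    have s1 := integral_add (j1.sub j2) j3
    have s2 := integral_sub j1 j2
    simp only [Pi.sub_apply] at s1 s2
    rw [s1, s2, integral_const_mul, integral_const_mul]
  rw [ex] at hk'
  have hr : (1 - 2 * θ) ^ 2 ≤ r ^ 2 := by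
    have h5 : nv * (nw - θ) ≤ r ^ 2 := by
      have h6 : nv * (nw - θ) ≤ nv * (2 * k * r - k ^ 2 * nv) :=
        mul_le_mul_of_nonneg_left (by linarith) (by linarith)
      nlinarith [sq_nonneg (r - k * nv)]
    have h7 : (1 - θ) * (1 - 2 * θ) ≤ nv * (nw - θ) :=
      mul_le_mul h1.le (by linarith) (by linarith) (by linarith)
    nlinarith
  have hr' : 1 - 2 * θ ≤ |r| := by
    have := sq_le_sq.1 hr
    rwa [abs_of_nonneg (by linarith : (0 : ℝ) ≤ 1 - 2 * θ)] at this
  have hrem : |∫ p in GamR R \ Core R δ, w p * v p| ≤ θ := by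
    have j1 := iw2.mono_set (sdiff_subset : GamR R \ Core R δ ⊆ _)
    have j2 := hv2.mono_set (sdiff_subset : GamR R \ Core R δ ⊆ _)
    have j3 := iwv.mono_set (sdiff_subset : GamR R \ Core R δ ⊆ _)
    have s := integral_add j1 j2
    calc |∫ p in GamR R \ Core R δ, w p * v p| ≤ ∫ p in GamR R \ Core R δ, |w p * v p| :=
          abs_integral_le_integral_abs
      _ ≤ ∫ p in GamR R \ Core R δ, (1 / 2) * (w p ^ 2 + v p ^ 2) := by
          refine integral_mono j3.abs ((j1.add j2).const_mul _) fun p => ?_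
          rw [abs_mul]
          have := sq_nonneg (|w p| - |v p|)
          change |w p| * |v p| ≤ 1 / 2 * (w p ^ 2 + v p ^ 2)
          rw [← sq_abs (w p), ← sq_abs (v p)]
          linarith
      _ ≤ θ := by
          rw [integral_const_mul, s]
          linarith
  have hP : r = (∫ p in GamR R, w p * v p) - ∫ p in GamR R \ Core R δ, w p * v p := by
    rw [swv]; ring
  have := abs_sub (∫ p in GamR R, w p * v p) (∫ p in GamR R \ Core R δ, w p * v p)
  rw [← hP] at this
  linarith

/-! ### Convergence of the shape-derivative density -/

/-- The weight `κ(x) = 2 max(x,0) / R²`, for which the stretching `φ` of the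
arms has derivative `1 + hκ`. -/
def kap (R x : ℝ) : ℝ := 2 * max x 0 / R ^ 2

lemma kap_cont (R : ℝ) : Continuous (kap R) := by unfold kap; fun_prop

lemma kap_nonneg (R x : ℝ) : 0 ≤ kap R x := by unfold kap; positivity

lemma kap_le {R x : ℝ} (hR : 0 < R) (hx : x ≤ R) : kap R x ≤ 2 / R := by
  unfold kap
  rw [div_le_div_iff₀ (by positivity) hR]
  have : max x 0 ≤ R := max_le hx hR.le
  nlinarith

lemma GamR_lt {R : ℝ} (hR : 0 < R) {p : ℝ × ℝ} (hp : p ∈ GamR R) : p.1 < R ∧ p.2 < R := by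
  rw [GamR_eq hR] at hp
  rcases hp with ⟨h1, h2⟩ | ⟨h1, h2⟩
  · exact ⟨h1.2.trans hR, h2.2⟩
  · exact ⟨h1.2, h2.2.trans hR⟩

/-- First-order variation of the Rayleigh quotient density under the stretching of the arms. -/
def Bd (R : ℝ) (u : ℝ × ℝ → ℝ) (p : ℝ × ℝ) : ℝ :=
  (kap R p.2 - kap R p.1) * (pd1 u p ^ 2 - pd2 u p ^ 2)
    - lamR R * ((kap R p.1 + kap R p.2) * u p ^ 2)

lemma kap1_cont (R : ℝ) : Continuous fun p : ℝ × ℝ => kap R p.1 := (kap_cont R).comp continuous_fst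
lemma kap2_cont (R : ℝ) : Continuous fun p : ℝ × ℝ => kap R p.2 := (kap_cont R).comp continuous_snd

lemma Bd_int_of_contDiff {R : ℝ} (hR : 0 < R) {w : ℝ × ℝ → ℝ} (hw : ContDiff ℝ 1 w) :
    IntegrableOn (Bd R w) (GamR R) := by
  refine intOn_of_cont hR (Continuous.continuousOn ?_)
  exact (((kap2_cont R).sub (kap1_cont R)).mul (((pd1_cont hw).pow 2).sub ((pd2_cont hw).pow 2))).sub
    (continuous_const.mul (((kap1_cont R).add (kap2_cont R)).mul (hw.continuous.pow 2)))

lemma Bd_cont {R : ℝ} {v : ℝ × ℝ → ℝ} (hv : IsFirstEF R v) :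
    ContinuousOn (Bd R v) (GamR R) := by
  have c1 := (ef_pd1_cont hv).mono (subset_union_left : GamR R ⊆ _)
  have c2 := (ef_pd2_cont hv).mono (subset_union_left : GamR R ⊆ _)
  exact (((kap2_cont R).sub (kap1_cont R)).continuousOn.mul ((c1.pow 2).sub (c2.pow 2))).sub
    (continuousOn_const.mul (((kap1_cont R).add (kap2_cont R)).continuousOn.mul
      ((hv.2.1.mono subset_closure).pow 2)))

lemma Bd_diff {R : ℝ} (hR : 0 < R) (w v : ℝ × ℝ → ℝ) {s θ : ℝ} (hs : s ^ 2 = 1) (hθ : 0 < θ)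
    {p : ℝ × ℝ} (hp : p ∈ GamR R) : |Bd R w p - Bd R v p| ≤
      4 / R * ((1 + 1 / θ) * ((pd1 w p - s * pd1 v p) ^ 2 + (pd2 w p - s * pd2 v p) ^ 2
        + lamR R * (w p - s * v p) ^ 2) + θ * (gradSq2 v p + lamR R * v p ^ 2)) := by
  have hl := lamR_nonneg R
  have k1 := kap_nonneg R p.1
  have k2 := kap_nonneg R p.2
  have k1' := kap_le hR (GamR_lt hR hp).1.le
  have k2' := kap_le hR (GamR_lt hR hp).2.le
  have key : ∀ a b : ℝ, |a ^ 2 - b ^ 2| ≤ (1 + 1 / θ) * (a - s * b) ^ 2 + θ * b ^ 2 := by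
    intro a b
    have h1 : a ^ 2 - b ^ 2 = (a - s * b) ^ 2 + 2 * s * ((a - s * b) * b) := by
      linear_combination b ^ 2 * hs
    set z := a - s * b
    have h2 : |2 * s * (z * b)| ≤ 1 / θ * z ^ 2 + θ * b ^ 2 := by
      have e : 1 / θ * z ^ 2 + θ * b ^ 2 = (θ⁻¹ * (z ^ 2 + θ ^ 2 * b ^ 2)) := by
        field_simp
      have hs' : |s| = 1 := by
        rw [← sq_eq_sq₀ (abs_nonneg s) zero_le_one, sq_abs, hs, one_pow]
      rw [e, abs_mul, abs_mul, hs', abs_mul, ← sq_abs z, ← sq_abs b, inv_mul_eq_div,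
        le_div_iff₀ hθ]
      simp only [abs_two]
      nlinarith [sq_nonneg (|z| - θ * |b|)]
    rw [h1]
    calc |z ^ 2 + 2 * s * (z * b)| ≤ |z ^ 2| + |2 * s * (z * b)| := abs_add_le _ _
      _ ≤ _ := by rw [abs_of_nonneg (sq_nonneg z)]; linarith
  have e : Bd R w p - Bd R v p = (kap R p.2 - kap R p.1) * ((pd1 w p ^ 2 - pd1 v p ^ 2)
      - (pd2 w p ^ 2 - pd2 v p ^ 2))
      - lamR R * ((kap R p.1 + kap R p.2) * (w p ^ 2 - v p ^ 2)) := by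
    simp only [Bd]; ring
  have h4 : 4 / R = 2 / R + 2 / R := by ring
  have d1 : |kap R p.2 - kap R p.1| ≤ 4 / R := by
    rw [abs_le]; constructor <;> linarith
  have d2 : |kap R p.1 + kap R p.2| ≤ 4 / R := by
    rw [abs_le]; constructor <;> linarith
  rw [e]
  calc _ ≤ |(kap R p.2 - kap R p.1) * ((pd1 w p ^ 2 - pd1 v p ^ 2)
      - (pd2 w p ^ 2 - pd2 v p ^ 2))|
      + |lamR R * ((kap R p.1 + kap R p.2) * (w p ^ 2 - v p ^ 2))| := abs_sub _ _
    _ ≤ 4 / R * (|pd1 w p ^ 2 - pd1 v p ^ 2| + |pd2 w p ^ 2 - pd2 v p ^ 2|)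
      + lamR R * (4 / R * |w p ^ 2 - v p ^ 2|) := by
        rw [abs_mul, abs_mul, abs_mul, abs_of_nonneg hl]
        gcongr
        exact abs_sub _ _
    _ ≤ 4 / R * (((1 + 1 / θ) * (pd1 w p - s * pd1 v p) ^ 2 + θ * pd1 v p ^ 2) +
        ((1 + 1 / θ) * (pd2 w p - s * pd2 v p) ^ 2 + θ * pd2 v p ^ 2))
      + lamR R * (4 / R * ((1 + 1 / θ) * (w p - s * v p) ^ 2 + θ * v p ^ 2)) := by
        gcongr <;> exact key _ _
    _ = _ := by rw [gradSq2_eq]; ring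

lemma ef_pd_int {R : ℝ} (hR : 0 < R) {v : ℝ × ℝ → ℝ} (hv : IsFirstEF R v) :
    IntegrableOn (fun p => pd1 v p ^ 2) (GamR R) ∧ IntegrableOn (fun p => pd2 v p ^ 2) (GamR R) := by
  have h := (ef_energy hR hv).1
  have c1 := (ef_pd1_cont hv).mono (subset_union_left : GamR R ⊆ _)
  have c2 := (ef_pd2_cont hv).mono (subset_union_left : GamR R ⊆ _)
  constructor
  · refine Integrable.mono' h ((c1.pow 2).aestronglyMeasurable (GamR_meas hR)) ?_
    refine Eventually.of_forall fun p => ?_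
    rw [Real.norm_of_nonneg (sq_nonneg _), gradSq2_eq]
    nlinarith [sq_nonneg (pd2 v p)]
  · refine Integrable.mono' h ((c2.pow 2).aestronglyMeasurable (GamR_meas hR)) ?_
    refine Eventually.of_forall fun p => ?_
    rw [Real.norm_of_nonneg (sq_nonneg _), gradSq2_eq]
    nlinarith [sq_nonneg (pd1 v p)]

lemma Bd_int_ef {R : ℝ} (hR : 0 < R) {v : ℝ × ℝ → ℝ} (hv : IsFirstEF R v) :
    IntegrableOn (Bd R v) (GamR R) := by
  have hl := lamR_nonneg R
  have hi := ((ef_energy hR hv).1.add ((ef_sq_int hR hv).const_mul (lamR R))).const_mul (4 / R * 3)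
  refine Integrable.mono' hi ((Bd_cont hv).aestronglyMeasurable (GamR_meas hR)) ?_
  filter_upwards [ae_restrict_mem (GamR_meas hR)] with p hp
  have h := Bd_diff hR (fun _ => 0) v (s := 1) (θ := 1) (by norm_num) one_pos hp
  have z1 : pd1 (fun _ => (0 : ℝ)) p = 0 := by simp [pd1]
  have z2 : pd2 (fun _ => (0 : ℝ)) p = 0 := by simp [pd2]
  have z3 : Bd R (fun _ => (0 : ℝ)) p = 0 := by simp [Bd, z1, z2]
  rw [z1, z2, z3, zero_sub, abs_neg] at h
  rw [Real.norm_eq_abs]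
  refine h.trans (le_of_eq ?_)
  simp only [Pi.add_apply, gradSq2_eq]
  ring

/-- The first variation is continuous along almost-minimisers. -/
lemma Bd_conc {R : ℝ} (hR : 0 < R) {v : ℝ × ℝ → ℝ} (hv : IsFirstEF R v) {ε : ℝ} (hε : 0 < ε) :
    ∃ γ : ℝ, 0 < γ ∧ ∀ w, Test R w → (∫ p in GamR R, w p ^ 2) = 1 →
      (∫ p in GamR R, gradSq2 w p) ≤ lamR R + γ →
      |(∫ p in GamR R, Bd R w p) - ∫ p in GamR R, Bd R v p| ≤ ε := by
  have hl := lamR_nonneg R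
  obtain ⟨θ, hθ, hθ'⟩ : ∃ θ : ℝ, 0 < θ ∧ 4 / R * (θ * (2 * lamR R)) ≤ ε / 2 := by
    refine ⟨ε * R / (16 * (lamR R + 1)), by positivity, ?_⟩
    have : 4 / R * (ε * R / (16 * (lamR R + 1)) * (2 * lamR R)) =
        ε / 2 * (lamR R / (lamR R + 1)) := by field_simp; ring
    rw [this]
    have : lamR R / (lamR R + 1) ≤ 1 := by rw [div_le_one (by linarith)]; linarith
    nlinarith
  set σ := ε / 2 / (4 / R * (1 + 1 / θ)) with hσ
  have hσ0 : 0 < σ := by positivity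
  obtain ⟨γ0, hγ0, hconc⟩ := concentration hR hv
    (η := σ / (8 * (lamR R + 1))) (by positivity)
  refine ⟨min γ0 (σ / 2), lt_min hγ0 (by positivity), fun w hw hw1 hwg => ?_⟩
  have hP := hconc w hw hw1 (hwg.trans (by linarith [min_le_left γ0 (σ / 2)]))
  have hwg' : (∫ p in GamR R, gradSq2 w p) ≤ lamR R + σ / 2 :=
    hwg.trans (by linarith [min_le_right γ0 (σ / 2)])
  set P := ∫ p in GamR R, w p * v p with hPdef
  obtain ⟨s, hs, hsP⟩ : ∃ s : ℝ, s ^ 2 = 1 ∧ s * P = |P| := by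
    rcases le_total 0 P with h | h
    · exact ⟨1, by norm_num, by rw [abs_of_nonneg h, one_mul]⟩
    · exact ⟨-1, by norm_num, by rw [abs_of_nonpos h]; ring⟩
  have hwc := hw.1.continuous
  have iw2 : IntegrableOn (fun p => w p ^ 2) (GamR R) := intOn_of_cont hR (hwc.pow 2).continuousOn
  have iwv : IntegrableOn (fun p => w p * v p) (GamR R) :=
    intOn_of_cont hR (hwc.continuousOn.mul hv.2.1)
  have iv2 := ef_sq_int hR hv
  obtain ⟨igv, hgv⟩ := ef_energy hR hv
  have igw := test_grad_int hR hw.1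
  obtain ⟨ix, hx⟩ := test_weak hR hv hw
  have eZ : ∀ p, (pd1 w p - s * pd1 v p) ^ 2 + (pd2 w p - s * pd2 v p) ^ 2 =
      gradSq2 w p - 2 * s * (pd1 w p * pd1 v p + pd2 w p * pd2 v p) + gradSq2 v p := by
    intro p
    rw [gradSq2_eq, gradSq2_eq]
    linear_combination (pd1 v p ^ 2 + pd2 v p ^ 2) * hs
  have ez : ∀ p, (w p - s * v p) ^ 2 = w p ^ 2 - 2 * s * (w p * v p) + v p ^ 2 := by
    intro p
    linear_combination (v p ^ 2) * hs
  have iZ := (igw.sub (ix.const_mul (2 * s))).add igv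
  have iz := (iw2.sub (iwv.const_mul (2 * s))).add iv2
  have IZ : ∫ p in GamR R, ((pd1 w p - s * pd1 v p) ^ 2 + (pd2 w p - s * pd2 v p) ^ 2) ≤
      σ / 2 + 2 * lamR R * (1 - |P|) := by
    simp_rw [eZ]
    have s1 := integral_add (igw.sub (ix.const_mul (2 * s))) igv
    have s2 := integral_sub igw (ix.const_mul (2 * s))
    simp only [Pi.sub_apply] at s1 s2
    rw [s1, s2, integral_const_mul, hx]
    rw [← hsP]
    linarith
  have Iz : ∫ p in GamR R, (w p - s * v p) ^ 2 = 2 * (1 - |P|) := by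
    simp_rw [ez]
    have s1 := integral_add (iw2.sub (iwv.const_mul (2 * s))) iv2
    have s2 := integral_sub iw2 (iwv.const_mul (2 * s))
    simp only [Pi.sub_apply] at s1 s2
    rw [s1, s2, integral_const_mul, hw1, hv.2.2.2.2.2.2.2, ← hsP]
    ring
  have iZ' : IntegrableOn (fun p => (pd1 w p - s * pd1 v p) ^ 2 + (pd2 w p - s * pd2 v p) ^ 2)
      (GamR R) := by simp_rw [eZ]; exact iZ
  have iz' : IntegrableOn (fun p => (w p - s * v p) ^ 2) (GamR R) := by simp_rw [ez]; exact iz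
  have iW := Bd_int_of_contDiff hR hw.1
  have iV := Bd_int_ef hR hv
  have iA := (iZ'.add (iz'.const_mul (lamR R))).const_mul (1 + 1 / θ)
  have iB := (igv.add (iv2.const_mul (lamR R))).const_mul θ
  rw [← integral_sub iW iV]
  calc |∫ p in GamR R, (Bd R w p - Bd R v p)| ≤ ∫ p in GamR R, |Bd R w p - Bd R v p| :=
        abs_integral_le_integral_abs
    _ ≤ ∫ p in GamR R, 4 / R * ((1 + 1 / θ) * ((pd1 w p - s * pd1 v p) ^ 2 +
        (pd2 w p - s * pd2 v p) ^ 2 + lamR R * (w p - s * v p) ^ 2) +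
          θ * (gradSq2 v p + lamR R * v p ^ 2)) :=
        setIntegral_mono_on (iW.sub iV).abs
          (by simpa only [Pi.add_apply, IntegrableOn] using ((iA.add iB).const_mul (4 / R))) (GamR_meas hR)
          fun p hp => Bd_diff hR w v hs hθ hp
    _ = 4 / R * ((1 + 1 / θ) * ((∫ p in GamR R, ((pd1 w p - s * pd1 v p) ^ 2 +
        (pd2 w p - s * pd2 v p) ^ 2)) + lamR R * ∫ p in GamR R, (w p - s * v p) ^ 2) +
          θ * ((∫ p in GamR R, gradSq2 v p) + lamR R * ∫ p in GamR R, v p ^ 2)) := by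
        have s1 := integral_add iA iB
        have s2 := integral_add iZ' (iz'.const_mul (lamR R))
        have s3 := integral_add igv (iv2.const_mul (lamR R))
        simp only [Pi.add_apply] at s1 s2 s3
        rw [integral_const_mul, s1, integral_const_mul, integral_const_mul, s2, s3,
          integral_const_mul, integral_const_mul]
    _ ≤ 4 / R * ((1 + 1 / θ) * σ + θ * (2 * lamR R)) := by
        rw [Iz, hv.2.2.2.2.2.2.2]
        have hη : 4 * lamR R * (1 - |P|) ≤ σ / 2 := by
          have h1 : 1 - |P| ≤ σ / (8 * (lamR R + 1)) := by linarith
          calc 4 * lamR R * (1 - |P|) ≤ 4 * lamR R * (σ / (8 * (lamR R + 1))) := by gcongr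
            _ = σ / 2 * (lamR R / (lamR R + 1)) := by field_simp; ring
            _ ≤ σ / 2 * 1 := by
                gcongr
                rw [div_le_one (by linarith)]; linarith
            _ = _ := mul_one _
        gcongr
        · linarith
        · linarith
    _ = 4 / R * (1 + 1 / θ) * σ + 4 / R * (θ * (2 * lamR R)) := by ring
    _ ≤ ε / 2 + ε / 2 := by
        gcongr
        rw [hσ, mul_div_cancel₀]
        positivity
    _ = ε := by ring

/-! ### Stretching the arms of the guide -/

lemma hasDerivAt_maxsq (x : ℝ) : HasDerivAt (fun y : ℝ => (max y 0) ^ 2) (2 * max x 0) x := by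
  rcases lt_trichotomy x 0 with h | h | h
  · rw [max_eq_right h.le]
    have : (fun y : ℝ => (max y 0) ^ 2) =ᶠ[𝓝 x] fun _ => 0 := by
      filter_upwards [Iio_mem_nhds h] with y hy
      rw [max_eq_right (le_of_lt hy)]; norm_num
    rw [mul_zero]
    exact (hasDerivAt_const x (0 : ℝ)).congr_of_eventuallyEq this
  · subst h
    rw [max_self, mul_zero, hasDerivAt_iff_isLittleO_nhds_zero]
    have h1 : (fun h : ℝ => (max (0 + h) 0) ^ 2 - (max 0 0) ^ 2 - h • (0 : ℝ)) =O[𝓝 0]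
        fun h : ℝ => h ^ 2 := by
      refine Asymptotics.IsBigO.of_bound 1 (Eventually.of_forall fun y => ?_)
      have : (max (0 + y) 0) ^ 2 - (max 0 0) ^ 2 - y • (0 : ℝ) = (max y 0) ^ 2 := by simp
      rw [this, Real.norm_of_nonneg (sq_nonneg _), Real.norm_of_nonneg (sq_nonneg _), one_mul]
      rcases le_total y 0 with h | h
      · rw [max_eq_right h]; nlinarith
      · rw [max_eq_left h]
    exact h1.trans_isLittleO (Asymptotics.isLittleO_pow_id (by norm_num))
  · rw [max_eq_left h.le]
    have : (fun y : ℝ => (max y 0) ^ 2) =ᶠ[𝓝 x] fun y => y ^ 2 := by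
      filter_upwards [Ioi_mem_nhds h] with y hy
      rw [max_eq_left (le_of_lt hy)]
    have h2 := hasDerivAt_pow 2 x
    simp only [Nat.cast_ofNat, Nat.add_one_sub_one, pow_one] at h2
    exact h2.congr_of_eventuallyEq this

/-- The one-dimensional stretching `φ(x) = x + h max(x,0)² / R²`, fixing `(-∞, 0]` and sending
`R` to `R + h`. -/
def phi (R h x : ℝ) : ℝ := x + h * ((max x 0) ^ 2 / R ^ 2)

lemma phi_hasDerivAt (R h x : ℝ) : HasDerivAt (phi R h) (1 + h * kap R x) x := by
  have := (hasDerivAt_id x).add (((hasDerivAt_maxsq x).div_const (R ^ 2)).const_mul h)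
  exact this

lemma phi_contDiff (R h : ℝ) : ContDiff ℝ 1 (phi R h) := by
  rw [contDiff_one_iff_deriv]
  refine ⟨fun x => (phi_hasDerivAt R h x).differentiableAt, ?_⟩
  have : deriv (phi R h) = fun x => 1 + h * kap R x := funext fun x => (phi_hasDerivAt R h x).deriv
  rw [this]
  exact continuous_const.add (continuous_const.mul (kap_cont R))

lemma phi_nonpos (R h : ℝ) {x : ℝ} (hx : x ≤ 0) : phi R h x = x := by
  simp [phi, max_eq_right hx]

lemma phi_R {R : ℝ} (hR : 0 < R) (h : ℝ) : phi R h R = R + h := by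
  simp [phi, max_eq_left hR.le, hR.ne']

lemma hkap_le {R h x : ℝ} (hR : 0 < R) (hh : |h| ≤ R / 4) (hx : x ≤ R) : |h * kap R x| ≤ 1 / 2 := by
  rw [abs_mul, abs_of_nonneg (kap_nonneg R x)]
  calc |h| * kap R x ≤ R / 4 * (2 / R) :=
        mul_le_mul hh (kap_le hR hx) (kap_nonneg R x) (by positivity)
    _ = 1 / 2 := by field_simp; norm_num

lemma phi_strictMono {R h : ℝ} (hR : 0 < R) (hh : |h| ≤ R / 4) :
    StrictMonoOn (phi R h) (Iic R) := by
  refine strictMonoOn_of_deriv_pos (convex_Iic R) (phi_contDiff R h).continuous.continuousOn ?_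
  intro x hx
  rw [interior_Iic] at hx
  rw [(phi_hasDerivAt R h x).deriv]
  have := abs_le.1 (hkap_le hR hh (le_of_lt hx))
  linarith [this.1]

lemma phi_image {R h : ℝ} (hR : 0 < R) (hh : |h| ≤ R / 4) :
    phi R h '' Ioo (-1) R = Ioo (-1) (R + h) := by
  have m := phi_strictMono hR hh
  have e1 : phi R h (-1) = -1 := phi_nonpos R h (by norm_num)
  apply Subset.antisymm
  · rintro _ ⟨x, hx, rfl⟩
    constructor
    · have := m (show (-1 : ℝ) ≤ R by linarith) (show x ≤ R from hx.2.le) hx.1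
      rwa [e1] at this
    · have := m (show x ≤ R from hx.2.le) (show R ≤ R from le_rfl) hx.2
      rwa [phi_R hR] at this
  · have := intermediate_value_Ioo (show (-1 : ℝ) ≤ R by linarith)
      (f := phi R h) (phi_contDiff R h).continuous.continuousOn
    rwa [e1, phi_R hR] at this

lemma phi_image0 {R h : ℝ} : phi R h '' Ioo (-1) 0 = Ioo (-1) 0 := by
  ext x; constructor
  · rintro ⟨y, hy, rfl⟩; rwa [phi_nonpos R h hy.2.le]
  · intro hx; exact ⟨x, hx, phi_nonpos R h hx.2.le⟩

/-- The stretching `Φ = φ × φ` of the plane, mapping `Γ_R` onto `Γ_{R+h}`. -/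
def Phi (R h : ℝ) (p : ℝ × ℝ) : ℝ × ℝ := (phi R h p.1, phi R h p.2)

lemma Phi_image {R h : ℝ} (hR : 0 < R) (hh : |h| ≤ R / 4) :
    Phi R h '' GamR R = GamR (R + h) := by
  have : 0 < R + h := by linarith [(abs_le.1 hh).1]
  have e : Phi R h = Prod.map (phi R h) (phi R h) := rfl
  rw [GamR_eq hR, GamR_eq this, image_union, e, prodMap_image_prod, prodMap_image_prod,
    phi_image hR hh, phi_image0]

lemma Phi_injOn {R h : ℝ} (hR : 0 < R) (hh : |h| ≤ R / 4) : InjOn (Phi R h) (GamR R) := by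
  rintro ⟨a, b⟩ hp ⟨c, d⟩ hq e
  have m := (phi_strictMono hR hh).injOn
  have h1 := GamR_lt hR hp
  have h2 := GamR_lt hR hq
  simp only [Phi, Prod.mk.injEq] at e
  exact Prod.ext (m (show a ≤ R from h1.1.le) (show c ≤ R from h2.1.le) e.1)
    (m (show b ≤ R from h1.2.le) (show d ≤ R from h2.2.le) e.2)

lemma Phi_contDiff (R h : ℝ) : ContDiff ℝ 1 (Phi R h) :=
  ((phi_contDiff R h).comp contDiff_fst).prodMk ((phi_contDiff R h).comp contDiff_snd)

/-- The derivative of `Φ`, a diagonal matrix. -/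
def PhiD (R h : ℝ) (p : ℝ × ℝ) : ℝ × ℝ →L[ℝ] ℝ × ℝ :=
  ((1 + h * kap R p.1) • ContinuousLinearMap.id ℝ ℝ).prodMap
    ((1 + h * kap R p.2) • ContinuousLinearMap.id ℝ ℝ)

lemma Phi_hasFDerivAt (R h : ℝ) (p : ℝ × ℝ) : HasFDerivAt (Phi R h) (PhiD R h p) p := by
  have h1 := (phi_hasDerivAt R h p.1).hasFDerivAt
  have h2 := (phi_hasDerivAt R h p.2).hasFDerivAt
  have := HasFDerivAt.prodMap p h1 h2
  refine this.congr_fderiv ?_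
  ext <;> simp [PhiD]

lemma PhiD_det (R h : ℝ) (p : ℝ × ℝ) :
    (PhiD R h p).det = (1 + h * kap R p.1) * (1 + h * kap R p.2) := by
  have : ((PhiD R h p : ℝ × ℝ →L[ℝ] ℝ × ℝ) : ℝ × ℝ →ₗ[ℝ] ℝ × ℝ) =
    LinearMap.prodMap ((1 + h * kap R p.1) • LinearMap.id) ((1 + h * kap R p.2) • LinearMap.id) := by
    ext <;> simp [PhiD]
  unfold ContinuousLinearMap.det
  rw [this, LinearMap.det_prodMap]
  simp

lemma kap_mul {R : ℝ} (hR : 0 < R) {p : ℝ × ℝ} (hp : p ∈ GamR R) : kap R p.1 * kap R p.2 = 0 := by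
  rw [GamR_eq hR] at hp
  rcases hp with ⟨h1, h2⟩ | ⟨h1, h2⟩
  · simp [kap, max_eq_right h1.2.le]
  · simp [kap, max_eq_right h2.2.le]

lemma jac_bounds {R h : ℝ} (hR : 0 < R) (hh : |h| ≤ R / 4) {p : ℝ × ℝ} (hp : p ∈ GamR R) :
    1 / 2 ≤ 1 + h * kap R p.1 ∧ 1 / 2 ≤ 1 + h * kap R p.2 := by
  have h1 := abs_le.1 (hkap_le hR hh (GamR_lt hR hp).1.le)
  have h2 := abs_le.1 (hkap_le hR hh (GamR_lt hR hp).2.le)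
  constructor <;> linarith [h1.1, h2.1]

lemma int_Phi {R h : ℝ} (hR : 0 < R) (hh : |h| ≤ R / 4) (g : ℝ × ℝ → ℝ) :
    ∫ p in GamR (R + h), g p =
      ∫ p in GamR R, (1 + h * kap R p.1 + h * kap R p.2) * g (Phi R h p) := by
  rw [← Phi_image hR hh, integral_image_eq_integral_abs_det_fderiv_smul volume (GamR_meas hR)
    (fun p _ => (Phi_hasFDerivAt R h p).hasFDerivWithinAt) (Phi_injOn hR hh)]
  refine setIntegral_congr_fun (GamR_meas hR) fun p hp => ?_
  obtain ⟨j1, j2⟩ := jac_bounds hR hh hp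
  have k := kap_mul hR hp
  simp only [PhiD_det, smul_eq_mul]
  rw [abs_of_nonneg (by positivity)]
  congr 1
  linear_combination h ^ 2 * k

lemma Phi_adm {R h : ℝ} (hR : 0 < R) (hh : |h| ≤ R / 4) {u : ℝ × ℝ → ℝ} (hu : AdmR (R + h) u) :
    AdmR R (fun p => u (Phi R h p)) := by
  have hR' : 0 < R + h := by linarith [(abs_le.1 hh).1]
  refine ⟨hu.1.comp (Phi_contDiff R h), ?_⟩
  rintro ⟨a, b⟩ hp
  rw [mem_DirB hR] at hp
  apply hu.2
  have m := (phi_strictMono hR hh)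
  have e1 : phi R h (-1) = -1 := phi_nonpos R h (by norm_num)
  have e0 : phi R h 0 = 0 := phi_nonpos R h (by norm_num)
  obtain ⟨hm, ha, hb⟩ := hp
  have ha' := m (show a ≤ R from ha.le) (show R ≤ R from le_rfl) ha
  have hb' := m (show b ≤ R from hb.le) (show R ≤ R from le_rfl) hb
  rw [phi_R hR] at ha' hb'
  show (phi R h a, phi R h b) ∈ DirB (R + h)
  rw [mem_DirB hR']
  refine ⟨?_, ha', hb'⟩
  have : min (phi R h a) (phi R h b) = phi R h (min a b) := by
    rcases le_total a b with hab | hab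
    · rw [min_eq_left hab, min_eq_left (m.monotoneOn (show a ≤ R from ha.le) (show b ≤ R from hb.le) hab)]
    · rw [min_eq_right hab, min_eq_right (m.monotoneOn (show b ≤ R from hb.le) (show a ≤ R from ha.le) hab)]
  rw [this]
  rcases hm with hm | hm <;> rw [hm] <;> simp [e1, e0]

lemma Phi_pd {R h : ℝ} {u : ℝ × ℝ → ℝ} (hu : ContDiff ℝ 1 u) (p : ℝ × ℝ) :
    pd1 (fun q => u (Phi R h q)) p = (1 + h * kap R p.1) * pd1 u (Phi R h p) ∧
    pd2 (fun q => u (Phi R h q)) p = (1 + h * kap R p.2) * pd2 u (Phi R h p) := by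
  have hd := (hu.differentiable one_ne_zero (Phi R h p)).hasFDerivAt.comp p (Phi_hasFDerivAt R h p)
  have e : fderiv ℝ (fun q => u (Phi R h q)) p = _ := hd.fderiv
  have v1 : PhiD R h p (1, 0) = (1 + h * kap R p.1) • ((1 : ℝ), (0 : ℝ)) := by simp [PhiD]
  have v2 : PhiD R h p (0, 1) = (1 + h * kap R p.2) • ((0 : ℝ), (1 : ℝ)) := by simp [PhiD]
  constructor
  · simp only [pd1, e, ContinuousLinearMap.comp_apply, v1, map_smul, smul_eq_mul]
  · simp only [pd2, e, ContinuousLinearMap.comp_apply, v2, map_smul, smul_eq_mul]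

/-- The energy density pulled back by `Φ`, linearised in `h`. -/
def Ed (R h : ℝ) (w : ℝ × ℝ → ℝ) (p : ℝ × ℝ) : ℝ :=
  (1 + h * (kap R p.2 - kap R p.1)) * pd1 w p ^ 2 + (1 - h * (kap R p.2 - kap R p.1)) * pd2 w p ^ 2

/-- The linearisation bounds the pulled-back energy density from below, because
`(1 + t)⁻¹ ≥ 1 - t`. -/
lemma Ed_le {R h : ℝ} (hR : 0 < R) (hh : |h| ≤ R / 4) {u : ℝ × ℝ → ℝ} (hu : ContDiff ℝ 1 u)
    {p : ℝ × ℝ} (hp : p ∈ GamR R) : Ed R h (fun q => u (Phi R h q)) p ≤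
      (1 + h * kap R p.1 + h * kap R p.2) * gradSq2 u (Phi R h p) := by
  obtain ⟨e1, e2⟩ := Phi_pd (R := R) (h := h) hu p
  obtain ⟨j1, j2⟩ := jac_bounds hR hh hp
  have k := kap_mul hR hp
  rw [gradSq2_eq, Ed, e1, e2]
  set a := pd1 u (Phi R h p)
  set b := pd2 u (Phi R h p)
  -- one of the two stretching rates vanishes on the guide
  rcases mul_eq_zero.1 k with k | k
  · rw [k] at *
    set c := h * kap R p.2
    have : 0 ≤ c ^ 2 * (1 + c) * b ^ 2 := by
      have : 0 ≤ 1 + c := by linarith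
      positivity
    simp only [mul_zero, sub_zero, add_zero]
    rw [show h * kap R p.2 = c from rfl]
    nlinarith
  · rw [k] at *
    set c := h * kap R p.1
    have : 0 ≤ c ^ 2 * (1 + c) * a ^ 2 := by
      have : 0 ≤ 1 + c := by linarith
      positivity
    simp only [mul_zero, zero_sub, add_zero, mul_neg]
    rw [show h * kap R p.1 = c from rfl]
    nlinarith

/-! ### Lower first-order expansion -/

lemma test_smul {R : ℝ} {w : ℝ × ℝ → ℝ} (hw : Test R w) (c : ℝ) : Test R (fun p => c * w p) := by
  obtain ⟨h1, K, hK, hKs, hz⟩ := hw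
  exact ⟨contDiff_const.mul h1, K, hK, hKs, fun p hp hn => by simp [hz p hp hn]⟩

lemma test_trunc {R : ℝ} (hR : 0 < R) {w : ℝ × ℝ → ℝ} (hw : AdmR R w) {ε : ℝ} (hε : 0 < ε) :
    Test R (fun p => trunc ε (w p)) := by
  refine ⟨(trunc_contDiff ε).comp hw.1, _, isCompact_level hR hw.1.continuous.continuousOn ε,
    level_subset hR hw.1.continuous.continuousOn hw.2 hε, fun p hp hn => ?_⟩
  apply trunc_eq_zero hε
  by_contra hc
  exact hn ⟨hp, (not_le.1 hc).le⟩

lemma test_adm {R : ℝ} (hR : 0 < R) {w : ℝ × ℝ → ℝ} (hw : Test R w) : AdmR R w := by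
  obtain ⟨h1, K, hK, hKs, hz⟩ := hw
  refine ⟨h1, fun p hp => hz p (DirB_subset hp) fun hk => ?_⟩
  rcases hKs hk with h | h
  · exact (frontier_GamR hR ▸ hp.1 : p ∈ closure (GamR R) \ GamR R).2 h
  · obtain ⟨a, b⟩ := p
    rw [mem_DirB hR] at hp
    rw [mem_SigSeg] at h
    rcases h with h | h
    · linarith [hp.2.1, h.1]
    · linarith [hp.2.2, h.1]

lemma pd_const_mul {w : ℝ × ℝ → ℝ} (hw : ContDiff ℝ 1 w) (c : ℝ) (p : ℝ × ℝ) :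
    pd1 (fun q => c * w q) p = c * pd1 w p ∧ pd2 (fun q => c * w q) p = c * pd2 w p := by
  have := fderiv_const_mul (hw.differentiable one_ne_zero p) c
  constructor
  · simp only [pd1]; rw [this]; simp
  · simp only [pd2]; rw [this]; simp

lemma Ed_int {R : ℝ} (hR : 0 < R) (h : ℝ) {w : ℝ × ℝ → ℝ} (hw : ContDiff ℝ 1 w) :
    IntegrableOn (Ed R h w) (GamR R) := by
  refine intOn_of_cont hR (Continuous.continuousOn ?_)
  have c := (kap2_cont R).sub (kap1_cont R)
  exact ((continuous_const.add (continuous_const.mul c)).mul ((pd1_cont hw).pow 2)).add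
    ((continuous_const.sub (continuous_const.mul c)).mul ((pd2_cont hw).pow 2))

lemma jac_cont (R h : ℝ) : Continuous fun p : ℝ × ℝ => 1 + h * kap R p.1 + h * kap R p.2 :=
  (continuous_const.add (continuous_const.mul (kap1_cont R))).add
    (continuous_const.mul (kap2_cont R))

lemma jac_bounds' {R h : ℝ} (hR : 0 < R) (hh : |h| ≤ R / 4) {p : ℝ × ℝ} (hp : p ∈ GamR R) :
    1 / 2 ≤ 1 + h * kap R p.1 + h * kap R p.2 ∧ 1 + h * kap R p.1 + h * kap R p.2 ≤ 3 / 2 ∧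
    |h * (kap R p.2 - kap R p.1)| ≤ 1 / 2 := by
  have h1 := hkap_le hR hh (GamR_lt hR hp).1.le
  have h2 := hkap_le hR hh (GamR_lt hR hp).2.le
  rcases mul_eq_zero.1 (kap_mul hR hp) with k | k
  · rw [k]; have := abs_le.1 h2
    refine ⟨by linarith, by linarith, by simpa using h2⟩
  · rw [k]; have := abs_le.1 h1
    refine ⟨by linarith, by linarith, by simpa using h1⟩

lemma Ed_trunc {R h ε : ℝ} (hR : 0 < R) (hh : |h| ≤ R / 4) {w : ℝ × ℝ → ℝ}
    (hw : ContDiff ℝ 1 w) {p : ℝ × ℝ} (hp : p ∈ GamR R) :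
    Ed R h (fun q => trunc ε (w q)) p ≤ Ed R h w p := by
  have h3 := abs_le.1 (jac_bounds' hR hh hp).2.2
  have e : fderiv ℝ (fun q => trunc ε (w q)) p = rho ε (w p) • fderiv ℝ w p :=
    fderiv_trunc_comp ε (hw.differentiable one_ne_zero p)
  have hr := rho_sq_le_one ε (w p)
  have e1 : pd1 (fun q => trunc ε (w q)) p ^ 2 ≤ pd1 w p ^ 2 := by
    simp only [pd1, e, _root_.smul_apply, smul_eq_mul, mul_pow]
    exact mul_le_of_le_one_left (sq_nonneg _) hr
  have e2 : pd2 (fun q => trunc ε (w q)) p ^ 2 ≤ pd2 w p ^ 2 := by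
    simp only [pd2, e, _root_.smul_apply, smul_eq_mul, mul_pow]
    exact mul_le_of_le_one_left (sq_nonneg _) hr
  unfold Ed
  gcongr
  · linarith
  · linarith

/-- Almost-minimisers on `Γ_{R+h}`, pulled back to `Γ_R` as normalised test functions. -/
lemma exists_test {R h η : ℝ} (hR : 0 < R) (hh : |h| ≤ R / 4) (hη : 0 < η) :
    ∃ w, Test R w ∧ (∫ p in GamR R, w p ^ 2) = 1 ∧
      (∫ p in GamR R, Ed R h w p) ≤ (lamR (R + h) + 2 * η) *
        ∫ p in GamR R, (1 + h * kap R p.1 + h * kap R p.2) * w p ^ 2 := by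
  have hR' : 0 < R + h := by linarith [(abs_le.1 hh).1]
  have hμ := lamR_nonneg (R + h)
  set μ := lamR (R + h)
  obtain ⟨u, hu, hN, hE⟩ := exists_near_min hR' hη
  rw [int_Phi hR hh, int_Phi hR hh (fun p => u p ^ 2)] at hE
  rw [int_Phi hR hh] at hN
  set w : ℝ × ℝ → ℝ := fun p => u (Phi R h p) with hwdef
  have hwA : AdmR R w := Phi_adm hR hh hu
  have hJ := jac_cont R h
  have hwc := hwA.1.continuous
  set N := ∫ p in GamR R, (1 + h * kap R p.1 + h * kap R p.2) * u (Phi R h p) ^ 2 with hNdef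
  have hE1 : ∫ p in GamR R, Ed R h w p ≤ (μ + η) * N := by
    refine le_trans ?_ hE
    refine setIntegral_mono_on (Ed_int hR h hwA.1) ?_ (GamR_meas hR) fun p hp => Ed_le hR hh hu.1 hp
    refine intOn_of_cont hR (hJ.mul ?_).continuousOn
    have : Continuous (gradSq2 u) := ((pd1_cont hu.1).pow 2).add ((pd2_cont hu.1).pow 2)
    exact this.comp (Phi_contDiff R h).continuous
  set C := ∫ p in GamR R, (1 + h * kap R p.1 + h * kap R p.2) * |w p| with hC
  have hC0 : 0 ≤ C := setIntegral_nonneg (GamR_meas hR) fun p hp =>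
    mul_nonneg (by linarith [(jac_bounds' hR hh hp).1]) (abs_nonneg _)
  set ε := η * N / (4 * (C * (μ + 2 * η) + 1)) with hεdef
  have hε : 0 < ε := by positivity
  set W : ℝ × ℝ → ℝ := fun p => trunc ε (w p) with hW
  have hWT : Test R W := test_trunc hR hwA hε
  have hWc := hWT.1.continuous
  have hWE : ∫ p in GamR R, Ed R h W p ≤ (μ + η) * N :=
    (setIntegral_mono_on (Ed_int hR h hWT.1) (Ed_int hR h hwA.1) (GamR_meas hR)
      fun p hp => Ed_trunc hR hh hwA.1 hp).trans hE1
  have iC : IntegrableOn (fun p : ℝ × ℝ => (1 + h * kap R p.1 + h * kap R p.2) * |w p|) (GamR R) :=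
    intOn_of_cont hR (hJ.mul hwc.abs).continuousOn
  have iN : IntegrableOn (fun p : ℝ × ℝ => (1 + h * kap R p.1 + h * kap R p.2) * w p ^ 2) (GamR R) :=
    intOn_of_cont hR (hJ.mul (hwc.pow 2)).continuousOn
  have iW : IntegrableOn (fun p : ℝ × ℝ => (1 + h * kap R p.1 + h * kap R p.2) * W p ^ 2) (GamR R) :=
    intOn_of_cont hR (hJ.mul (hWc.pow 2)).continuousOn
  have hM : N - 4 * ε * C ≤ ∫ p in GamR R, (1 + h * kap R p.1 + h * kap R p.2) * W p ^ 2 := by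
    rw [hNdef, hC, ← integral_const_mul, ← integral_sub iN (iC.const_mul _)]
    refine setIntegral_mono_on (iN.sub (iC.const_mul _)) iW (GamR_meas hR) fun p hp => ?_
    have j := (jac_bounds' hR hh hp).1
    have t := trunc_sq_ge hε (w p)
    calc _ = (1 + h * kap R p.1 + h * kap R p.2) * (w p ^ 2 - 4 * ε * |w p|) := by
          simp only [hwdef]; ring
      _ ≤ _ := mul_le_mul_of_nonneg_left t (by linarith)
  set M := ∫ p in GamR R, (1 + h * kap R p.1 + h * kap R p.2) * W p ^ 2 with hMdef
  have hεC : 4 * ε * C * (μ + 2 * η) ≤ η * N := by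
    have : 4 * ε * (C * (μ + 2 * η) + 1) = η * N := by rw [hεdef]; field_simp
    nlinarith
  have key : (μ + η) * N ≤ (μ + 2 * η) * M := by
    have : (μ + 2 * η) * (N - 4 * ε * C) ≤ (μ + 2 * η) * M :=
      mul_le_mul_of_nonneg_left hM (by positivity)
    nlinarith
  have hM0 : 0 < M := by
    have : 0 < (μ + 2 * η) * M := lt_of_lt_of_le (by positivity) key
    exact pos_of_mul_pos_right this (by positivity)
  have iW2 : IntegrableOn (fun p : ℝ × ℝ => W p ^ 2) (GamR R) :=
    intOn_of_cont hR (hWc.pow 2).continuousOn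
  have hm : M ≤ 3 / 2 * ∫ p in GamR R, W p ^ 2 := by
    rw [hMdef, ← integral_const_mul]
    exact setIntegral_mono_on iW (iW2.const_mul _) (GamR_meas hR) fun p hp =>
      mul_le_mul_of_nonneg_right (jac_bounds' hR hh hp).2.1 (sq_nonneg _)
  set m := ∫ p in GamR R, W p ^ 2 with hmdef
  have hm0 : 0 < m := by linarith
  have hs : (1 / √m) ^ 2 = 1 / m := by rw [div_pow, Real.sq_sqrt hm0.le, one_pow]
  refine ⟨fun p => 1 / √m * W p, test_smul hWT _, ?_, ?_⟩
  · simp only [mul_pow, integral_const_mul, hs]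
    rw [← hmdef]; field_simp
  · have a1 : ∀ p, Ed R h (fun q => 1 / √m * W q) p = 1 / m * Ed R h W p := by
      intro p
      obtain ⟨x1, x2⟩ := pd_const_mul hWT.1 (1 / √m) p
      simp only [Ed, x1, x2, mul_pow, hs]; ring
    have a2 : ∀ p : ℝ × ℝ, (1 + h * kap R p.1 + h * kap R p.2) * (1 / √m * W p) ^ 2
        = 1 / m * ((1 + h * kap R p.1 + h * kap R p.2) * W p ^ 2) := by
      intro p; rw [mul_pow, hs]; ring
    simp only [a1, a2, integral_const_mul]
    rw [← hMdef]
    have : (μ + 2 * η) * (1 / m * M) = 1 / m * ((μ + 2 * η) * M) := by ring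
    rw [this]
    exact mul_le_mul_of_nonneg_left (hWE.trans key) (by positivity)

/-- The same information in terms of the four integrals entering the expansion in `h`. -/
lemma exists_test' {R h η : ℝ} (hR : 0 < R) (hh : |h| ≤ R / 4) (hη : 0 < η) :
    ∃ w, Test R w ∧ (∫ p in GamR R, w p ^ 2) = 1 ∧ ∃ q n : ℝ,
      (∫ p in GamR R, gradSq2 w p) + h * q ≤ (lamR (R + h) + 2 * η) * (1 + h * n) ∧
      (∫ p in GamR R, Bd R w p) = q - lamR R * n ∧ 0 ≤ n ∧ n ≤ 4 / R ∧
      |q| ≤ 4 / R * ∫ p in GamR R, gradSq2 w p := by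
  obtain ⟨w, hw, h1, hE⟩ := exists_test hR hh hη
  have hwc := hw.1.continuous
  have c1 := kap1_cont R
  have c2 := kap2_cont R
  have cp1 := pd1_cont hw.1
  have cp2 := pd2_cont hw.1
  have ig := test_grad_int hR hw.1
  have i2 : IntegrableOn (fun p => w p ^ 2) (GamR R) := intOn_of_cont hR (hwc.pow 2).continuousOn
  have iq : IntegrableOn (fun p : ℝ × ℝ => (kap R p.2 - kap R p.1) * (pd1 w p ^ 2 - pd2 w p ^ 2))
      (GamR R) := intOn_of_cont hR ((c2.sub c1).mul ((cp1.pow 2).sub (cp2.pow 2))).continuousOn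
  have iN : IntegrableOn (fun p : ℝ × ℝ => (kap R p.1 + kap R p.2) * w p ^ 2)
      (GamR R) := intOn_of_cont hR ((c1.add c2).mul (hwc.pow 2)).continuousOn
  have hb : ∀ p ∈ GamR R, 0 ≤ kap R p.1 ∧ 0 ≤ kap R p.2 ∧ kap R p.1 + kap R p.2 ≤ 4 / R := by
    intro p hp
    have h4 : 4 / R = 2 / R + 2 / R := by ring
    exact ⟨kap_nonneg _ _, kap_nonneg _ _, by
      linarith [kap_le hR (GamR_lt hR hp).1.le, kap_le hR (GamR_lt hR hp).2.le]⟩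
  refine ⟨w, hw, h1, ∫ p in GamR R, (kap R p.2 - kap R p.1) * (pd1 w p ^ 2 - pd2 w p ^ 2),
    ∫ p in GamR R, (kap R p.1 + kap R p.2) * w p ^ 2, ?_, ?_, ?_, ?_, ?_⟩
  · have e1 : ∫ p in GamR R, Ed R h w p = (∫ p in GamR R, gradSq2 w p) +
        h * ∫ p in GamR R, (kap R p.2 - kap R p.1) * (pd1 w p ^ 2 - pd2 w p ^ 2) := by
      rw [← integral_const_mul, ← integral_add ig (iq.const_mul _)]
      congr 1; ext p; simp only [Ed, gradSq2_eq]; ring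
    have e2 : ∫ p in GamR R, (1 + h * kap R p.1 + h * kap R p.2) * w p ^ 2 = 1 +
        h * ∫ p in GamR R, (kap R p.1 + kap R p.2) * w p ^ 2 := by
      conv_rhs => rw [← h1, ← integral_const_mul, ← integral_add i2 (iN.const_mul _)]
      congr 1; ext p; ring
    rwa [e1, e2] at hE
  · rw [← integral_const_mul, ← integral_sub iq (iN.const_mul _)]
    rfl
  · refine setIntegral_nonneg (GamR_meas hR) fun p hp => ?_
    obtain ⟨b1, b2, b3⟩ := hb p hp
    positivity
  · calc _ ≤ ∫ p in GamR R, 4 / R * w p ^ 2 :=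
          setIntegral_mono_on iN (i2.const_mul _) (GamR_meas hR) fun p hp =>
            mul_le_mul_of_nonneg_right (hb p hp).2.2 (sq_nonneg _)
      _ = 4 / R := by rw [integral_const_mul, h1, mul_one]
  · rw [← integral_const_mul]
    refine le_trans (norm_integral_le_integral_norm (μ := volume.restrict (GamR R)) (fun p : ℝ × ℝ =>
      (kap R p.2 - kap R p.1) * (pd1 w p ^ 2 - pd2 w p ^ 2))) ?_
    refine setIntegral_mono_on iq.norm (ig.const_mul _) (GamR_meas hR) fun p hp => ?_
    obtain ⟨b1, b2, b3⟩ := hb p hp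
    rw [Real.norm_eq_abs, abs_mul, gradSq2_eq]
    refine mul_le_mul ?_ ?_ (abs_nonneg _) (by positivity)
    · rw [abs_le]; constructor <;> linarith
    · rw [abs_le]; constructor <;> nlinarith [sq_nonneg (pd1 w p), sq_nonneg (pd2 w p)]

lemma eventually_abs_mul_le (c : ℝ) {ε : ℝ} (hε : 0 < ε) : ∀ᶠ h in 𝓝 (0 : ℝ), |h| * c ≤ ε := by
  have : Tendsto (fun h : ℝ => |h| * c) (𝓝 0) (𝓝 (|0| * c)) :=
    (continuous_abs.mul continuous_const).tendsto 0
  rw [abs_zero, zero_mul] at this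
  exact this.eventually_le_const hε

set_option maxHeartbeats 1000000 in
/-- The lower first-order expansion of `R ↦ λ_R`: near-minimisers on `Γ_{R+h}`, pulled back to
`Γ_R`, are almost minimising there, hence carry almost the first variation of `v`. -/
lemma lower_bound {R : ℝ} (hR : 0 < R) {v : ℝ × ℝ → ℝ} (hv : IsFirstEF R v) {F : Filter ℝ}
    (hF : F ≤ 𝓝 0)
    (husc : ∀ γ : ℝ, 0 < γ → ∀ᶠ h in F, lamR (R + h) ≤ lamR R + γ) {ε : ℝ} (hε : 0 < ε) :
    ∀ᶠ h in F, lamR R + h * (∫ p in GamR R, Bd R v p) - ε * |h| ≤ lamR (R + h) := by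
  have hl := lamR_nonneg R
  set D := ∫ p in GamR R, Bd R v p
  set l := lamR R with hldef
  obtain ⟨γ, hγ, hB⟩ := Bd_conc hR hv (ε := ε / 8) (by positivity)
  filter_upwards [husc (γ / 4) (by positivity), hF <| eventually_abs_mul_le (4 / R * (2 * l + 2 * γ))
    (ε := γ / 2) (by positivity), hF <| eventually_abs_mul_le 1 (ε := R / 8) (by positivity),
    hF <| eventually_abs_mul_le 1 (ε := ε / 8) (by positivity),
    hF <| eventually_abs_mul_le (4 / R * |D|) (ε := ε / 8) (by positivity),
    hF <| eventually_abs_mul_le 1 (ε := γ / 4) (by positivity),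
    hF <| eventually_abs_mul_le 1 (ε := 1) (by positivity)] with h e1 e2 e3 e4 e5 e6 e7
  rw [mul_one] at e3 e4 e6 e7
  by_cases h0 : h = 0
  · subst h0; simp [hldef]
  have hh0 : 0 < |h| := abs_pos.2 h0
  obtain ⟨w, hw, hw1, q, n, f1, f2, f3, f4, f5⟩ :=
    exists_test' (R := R) (h := h) (η := h ^ 2 / 2) hR (by linarith) (by positivity)
  set μ := lamR (R + h)
  set Q := ∫ p in GamR R, gradSq2 w p with hQ
  have hQl : l ≤ Q := by
    have := lamR_mul_le (test_adm hR hw)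
    rwa [hw1, mul_one] at this
  set x := |h| * (4 / R) with hx
  have hx0 : 0 < x := by positivity
  have hx2 : x ≤ 1 / 2 := by
    calc x ≤ R / 8 * (4 / R) := by rw [hx]; gcongr
      _ = 1 / 2 := by field_simp; norm_num
  have hhn : |h * n| ≤ x := by
    rw [abs_mul, abs_of_nonneg f3]; exact mul_le_mul_of_nonneg_left f4 (abs_nonneg h)
  have hhq : |h * q| ≤ x * Q := by
    rw [abs_mul, hx, mul_assoc]; exact mul_le_mul_of_nonneg_left f5 (abs_nonneg h)
  have hn' := abs_le.1 hhn
  have hq' := abs_le.1 hhq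
  have hh2 : h ^ 2 = |h| * |h| := by rw [← sq, sq_abs]
  have hh2' : h ^ 2 ≤ γ / 4 := by rw [hh2]; nlinarith
  have e2' : x * (2 * l + 2 * γ) ≤ γ / 2 := by rw [hx, mul_assoc]; exact e2
  have e5' : x * |D| ≤ ε / 8 := by rw [hx, mul_assoc]; exact e5
  have hQγ : Q ≤ l + γ := by
    have g1 : Q * (1 - x) ≤ (l + γ / 2) * (1 + x) := by
      have g2 : (μ + 2 * (h ^ 2 / 2)) * (1 + h * n) ≤ (l + γ / 2) * (1 + x) :=
        mul_le_mul (by linarith) (by linarith) (by linarith) (by linarith)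
      nlinarith
    by_contra hc
    have hc' := not_le.1 hc
    have : (l + γ) * (1 - x) < Q * (1 - x) := mul_lt_mul_of_pos_right hc' (by linarith)
    nlinarith
  have hBD := abs_le.1 (hB w hw hw1 hQγ)
  rw [f2] at hBD
  by_contra hc
  have hc' := not_le.1 hc
  have hy : 1 / 2 ≤ 1 + h * n := by linarith
  have k1 : h * (q - l * n) ≤ (μ - l + h ^ 2) * (1 + h * n) := by nlinarith
  have k2 : (μ - l + h ^ 2) * (1 + h * n) ≤ (h * D - ε * |h| + h ^ 2) * (1 + h * n) :=
    mul_le_mul_of_nonneg_right (by linarith) (by linarith)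
  have k3 : h * D - |h| * (ε / 8) ≤ h * (q - l * n) := by
    have : |h * (q - l * n - D)| ≤ |h| * (ε / 8) := by
      rw [abs_mul]; exact mul_le_mul_of_nonneg_left (abs_le.2 hBD) (abs_nonneg h)
    linarith [(abs_le.1 this).1]
  have k4 : h * D * (h * n) ≤ |h| * (ε / 8) := by
    calc h * D * (h * n) ≤ |h * D * (h * n)| := le_abs_self _
      _ = |h| * (|D| * |h * n|) := by rw [abs_mul, abs_mul, mul_assoc]
      _ ≤ |h| * (ε / 8) := by
        gcongr
        calc |D| * |h * n| ≤ |D| * x := by gcongr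
          _ ≤ _ := by linarith
  have k6 : h ^ 2 ≤ |h| * (ε / 8) := by rw [hh2]; gcongr
  have hp : 0 < |h| * ε := by positivity
  have k5 : (h ^ 2 - ε * |h|) * (1 + h * n) ≤ (h ^ 2 - ε * |h|) * (1 / 2) :=
    mul_le_mul_of_nonpos_left hy (by linarith)
  linarith

/-! ### Strips along the Neumann boundary -/

lemma GamR_strips {r R : ℝ} (hr : 0 < r) (h : r ≤ R) :
    GamR R = GamR r ∪ (Ico r R ×ˢ Ioo (-1) 0 ∪ Ioo (-1) 0 ×ˢ Ico r R) := by
  rw [GamR_eq (hr.trans_le h), GamR_eq hr]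
  ext ⟨a, b⟩
  simp only [mem_union, mem_prod, mem_Ioo, mem_Ico]
  grind (splits := 40)

lemma strip1_subset {r R : ℝ} (hr : 0 < r) (h : r ≤ R) : Ico r R ×ˢ Ioo (-1) 0 ⊆ GamR R := by
  rw [GamR_strips hr h]; exact fun p hp => Or.inr (Or.inl hp)

lemma strip2_subset {r R : ℝ} (hr : 0 < r) (h : r ≤ R) : Ioo (-1) 0 ×ˢ Ico r R ⊆ GamR R := by
  rw [GamR_strips hr h]; exact fun p hp => Or.inr (Or.inr hp)

lemma GamR_strips_disj {r R : ℝ} (hr : 0 < r) :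
    Disjoint (Ico r R ×ˢ Ioo (-1) 0) (Ioo (-1) 0 ×ˢ Ico r R) ∧
    Disjoint (GamR r) (Ico r R ×ˢ Ioo (-1) 0 ∪ Ioo (-1) 0 ×ˢ Ico r R) := by
  constructor
  · rw [Set.disjoint_left]
    rintro ⟨a, b⟩ ⟨h1, h2⟩ ⟨h3, h4⟩
    simp only [mem_Ico, mem_Ioo] at *
    linarith
  · rw [Set.disjoint_left]
    rintro ⟨a, b⟩ h1 h2
    have h3 := GamR_lt hr h1
    simp only [mem_union, mem_prod, mem_Ioo, mem_Ico] at *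
    rcases h2 with h2 | h2 <;> linarith

lemma setInt_strips {r R : ℝ} (hr : 0 < r) (h : r ≤ R) {f : ℝ × ℝ → ℝ}
    (h0 : IntegrableOn f (GamR r)) (h1 : IntegrableOn f (Ico r R ×ˢ Ioo (-1) 0))
    (h2 : IntegrableOn f (Ioo (-1) 0 ×ˢ Ico r R)) :
    ∫ p in GamR R, f p = (∫ p in GamR r, f p) + ((∫ p in Ico r R ×ˢ Ioo (-1) 0, f p)
      + ∫ p in Ioo (-1) 0 ×ˢ Ico r R, f p) := by
  obtain ⟨d1, d2⟩ := GamR_strips_disj (r := r) (R := R) hr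
  rw [GamR_strips hr h, setIntegral_union d2 ((measurableSet_Ico.prod measurableSet_Ioo).union
    (measurableSet_Ioo.prod measurableSet_Ico)) h0 (h1.union h2),
    setIntegral_union d1 (measurableSet_Ioo.prod measurableSet_Ico) h1 h2]

lemma strip_const {r R a b : ℝ} (h : r ≤ R) {g : ℝ → ℝ} (hg : IntegrableOn g (Ioo a b)) :
    IntegrableOn (fun p : ℝ × ℝ => g p.2) (Ico r R ×ˢ Ioo a b) ∧
    ∫ p in Ico r R ×ˢ Ioo a b, g p.2 = (R - r) * ∫ t in Ioo a b, g t := by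
  have hi : IntegrableOn (fun p : ℝ × ℝ => g p.2) (Ico r R ×ˢ Ioo a b) := by
    rw [IntegrableOn, Measure.volume_eq_prod, ← Measure.prod_restrict]
    exact hg.integrable.comp_snd (volume.restrict (Ico r R))
  refine ⟨hi, ?_⟩
  rw [setInt_prod_snd hi]
  simp [h]

lemma strip_vol {r R a b : ℝ} (h : r ≤ R) (hab : a ≤ b) :
    volume.real (Ico r R ×ˢ Ioo a b) = (R - r) * (b - a) ∧ volume (Ico r R ×ˢ Ioo a b) < ⊤ := by
  rw [measureReal_def, Measure.volume_eq_prod, Measure.prod_prod, Real.volume_Ico, Real.volume_Ioo,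
    ENNReal.toReal_mul, ENNReal.toReal_ofReal (by linarith), ENNReal.toReal_ofReal (by linarith)]
  exact ⟨rfl, ENNReal.mul_lt_top ENNReal.ofReal_lt_top ENNReal.ofReal_lt_top⟩

/-- Averages over thin strips converge to the integral over the end section. -/
lemma strip_asymp {f : ℝ × ℝ → ℝ} {r R a b : ℝ} (hr : r < R) (hab : a ≤ b)
    (hf : ContinuousOn f (Icc r R ×ˢ Icc a b)) {δ : ℝ} (hδ : 0 < δ) :
    ∀ᶠ τ in 𝓝[>] (0 : ℝ), |(∫ p in Ico (R - τ) R ×ˢ Ioo a b, f p) - τ * ∫ t in Ioo a b, f (R, t)|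
      ≤ δ * τ := by
  have hK : IsCompact (Icc r R ×ˢ Icc a b) := isCompact_Icc.prod isCompact_Icc
  have hu := hK.uniformContinuousOn_of_continuous hf
  rw [Metric.uniformContinuousOn_iff_le] at hu
  have hba : 0 < b - a + 1 := by linarith
  obtain ⟨τ0, hτ0, hu⟩ := hu (δ / (b - a + 1)) (by positivity)
  filter_upwards [Ioo_mem_nhdsGT (show 0 < min τ0 (R - r) from lt_min hτ0 (by linarith))] with τ hτ
  have t1 : τ < τ0 := hτ.2.trans_le (min_le_left _ _)
  have t2 : τ < R - r := hτ.2.trans_le (min_le_right _ _)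
  have t0 : 0 < τ := hτ.1
  have hsub : Ico (R - τ) R ×ˢ Ioo a b ⊆ Icc r R ×ˢ Icc a b :=
    prod_mono (fun x hx => ⟨by linarith [hx.1], hx.2.le⟩) Ioo_subset_Icc_self
  have hi : IntegrableOn f (Ico (R - τ) R ×ˢ Ioo a b) := (hf.integrableOn_compact hK).mono_set hsub
  have hR : ContinuousOn (fun t => f (R, t)) (Icc a b) :=
    hf.comp (by fun_prop) fun t ht => ⟨⟨hr.le, le_rfl⟩, ht⟩
  have hg : IntegrableOn (fun t => f (R, t)) (Ioo a b) :=
    (hR.integrableOn_Icc).mono_set Ioo_subset_Icc_self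
  obtain ⟨c1, c2⟩ := strip_const (r := R - τ) (R := R) (by linarith) hg
  obtain ⟨v1, v2⟩ := strip_vol (r := R - τ) (R := R) (a := a) (b := b) (by linarith) hab
  rw [sub_sub_cancel] at c2 v1
  rw [← c2, ← integral_sub hi c1]
  have := norm_setIntegral_le_of_norm_le_const (f := fun p : ℝ × ℝ => f p - f (R, p.2))
    (C := δ / (b - a + 1)) v2 ?_
  · rw [v1] at this
    refine le_trans this ?_
    have h1 : 0 < b - a + 1 := by linarith
    rw [div_mul_eq_mul_div, div_le_iff₀ h1]
    have : 0 < δ * τ := by positivity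
    nlinarith
  · rintro ⟨x, t⟩ hp
    have h2 := hu (x, t) (hsub hp) (R, t) ⟨⟨hr.le, le_rfl⟩, (hsub hp).2⟩ ?_
    · exact h2
    · rw [Prod.dist_eq, dist_self, Real.dist_eq]
      have h1 := hp.1
      simp only [mem_Ico] at h1
      rw [max_eq_left (abs_nonneg _), abs_le]
      constructor <;> linarith

/-- A nonnegative continuous function on `I` with bounded integrals over compact subintervals is
integrable, and these integrals exhaust its integral. -/
lemma exhaust {f : ℝ → ℝ} (hf : ContinuousOn f II) (h0 : ∀ t, 0 ≤ f t) {C : ℝ}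
    (hb : ∀ a b, -1 < a → a < b → b < 0 → ∫ t in Ioo a b, f t ≤ C) :
    IntegrableOn f II ∧ ∀ δ : ℝ, 0 < δ → ∃ a b, -1 < a ∧ a < b ∧ b < 0 ∧
      (∫ t in II, f t) - δ ≤ ∫ t in Ioo a b, f t := by
  set A : ℕ → ℝ := fun n => -1 + 1 / ((n : ℝ) + 3)
  set B : ℕ → ℝ := fun n => 0 - 1 / ((n : ℝ) + 3)
  have ht : Tendsto (fun n : ℕ => 1 / ((n : ℝ) + 3)) atTop (𝓝 0) := by
    have := (tendsto_add_atTop_iff_nat 2).2 (tendsto_one_div_add_atTop_nhds_zero_nat (𝕜 := ℝ))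
    refine this.congr fun n => ?_
    push_cast; ring_nf
  have hA : Tendsto A atTop (𝓝 (-1)) := by simpa [A] using ht.const_add (-1)
  have hB : Tendsto B atTop (𝓝 0) := by simpa [B] using ht.const_sub 0
  have hAB : ∀ n, -1 < A n ∧ A n < B n ∧ B n < 0 := by
    intro n
    have h1 : 0 < 1 / ((n : ℝ) + 3) := by positivity
    have h2 : 1 / ((n : ℝ) + 3) ≤ 1 / 3 := by
      apply one_div_le_one_div_of_le <;> norm_num
    refine ⟨?_, ?_, ?_⟩ <;> simp only [A, B] <;> linarith
  have hcov : AECover (volume.restrict II) atTop fun n => Ioo (A n) (B n) :=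
    aecover_Ioo_of_Ioo hA hB
  have hsub : ∀ n, Icc (A n) (B n) ⊆ II := fun n x hx =>
    ⟨(hAB n).1.trans_le hx.1, hx.2.trans_lt (hAB n).2.2⟩
  have hres : ∀ n, (volume.restrict II).restrict (Ioo (A n) (B n)) = volume.restrict (Ioo (A n) (B n)) := by
    intro n
    rw [Measure.restrict_restrict measurableSet_Ioo,
      inter_eq_left.2 (Ioo_subset_Icc_self.trans (hsub n))]
  have hin : ∀ n, IntegrableOn f (Ioo (A n) (B n)) := fun n =>
    ((hf.mono (hsub n)).integrableOn_Icc).mono_set Ioo_subset_Icc_self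
  have hI : IntegrableOn f II := by
    refine hcov.integrable_of_integral_bounded_of_nonneg_ae C (fun n => ?_)
      (Eventually.of_forall h0) (Eventually.of_forall fun n => ?_)
    · rw [IntegrableOn, hres]; exact hin n
    · rw [hres]; exact hb _ _ (hAB n).1 (hAB n).2.1 (hAB n).2.2
  refine ⟨hI, fun δ hδ => ?_⟩
  have hlim := hcov.integral_tendsto_of_countably_generated hI
  obtain ⟨n, hn⟩ := (hlim.eventually_const_lt (show (∫ t in II, f t) - δ < ∫ t in II, f t by linarith)).exists
  rw [hres] at hn
  exact ⟨A n, B n, (hAB n).1, (hAB n).2.1, (hAB n).2.2, hn.le⟩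

/-- Restricting `v` to the shorter guide `Γ_r`. -/
lemma inner_ineq {r R : ℝ} (hr : 0 < r) (h : r < R) {v : ℝ × ℝ → ℝ} (hv : IsFirstEF R v) :
    lamR r * (1 - ((∫ p in Ico r R ×ˢ Ioo (-1) 0, v p ^ 2)
      + ∫ p in Ioo (-1) 0 ×ˢ Ico r R, v p ^ 2)) ≤
    lamR R - ((∫ p in Ico r R ×ˢ Ioo (-1) 0, gradSq2 v p)
      + ∫ p in Ioo (-1) 0 ×ˢ Ico r R, gradSq2 v p) := by
  have hR := hr.trans h
  obtain ⟨U, hU, hUs, hvU⟩ := hv.1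
  obtain ⟨hgi, hge⟩ := ef_energy hR hv
  have h2i := ef_sq_int hR hv
  have m0 := GamR_mono hr h.le
  have m1 := strip1_subset hr h.le
  have m2 := strip2_subset hr h.le
  have hsub : GamR r ∪ SigSeg r ⊆ GamR R := by
    refine union_subset m0 ?_
    rintro ⟨a, b⟩ hp
    rw [mem_SigSeg] at hp
    rw [GamR_eq hR]
    rcases hp with ⟨rfl, h1, h2⟩ | ⟨rfl, h1, h2⟩
    · right; exact ⟨⟨by linarith, h⟩, h1, h2⟩
    · left; exact ⟨⟨h1, h2⟩, by linarith, h⟩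
  have hle := lamR_mul_le_of_contDiffOn hr (GamR_open hR) hsub
    ((hvU.of_le (by norm_cast)).mono (subset_union_left.trans hUs)) (hv.2.1.mono (closure_mono m0))
    (fun p hp => by
      obtain ⟨a, b⟩ := p
      rw [mem_DirB hr] at hp
      exact hv.2.2.1 _ ((mem_DirB hR).2 ⟨hp.1, by linarith [hp.2.1], by linarith [hp.2.2]⟩))
    (hgi.mono_set m0)
  have s1 := setInt_strips hr h.le (hgi.mono_set m0) (hgi.mono_set m1) (hgi.mono_set m2)
  have s2 := setInt_strips hr h.le (h2i.mono_set m0) (h2i.mono_set m1) (h2i.mono_set m2)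
  have n1 := hv.2.2.2.2.2.2.2
  rw [s2] at n1
  rw [s1] at hge
  have e : 1 - ((∫ p in Ico r R ×ˢ Ioo (-1) 0, v p ^ 2)
      + ∫ p in Ioo (-1) 0 ×ˢ Ico r R, v p ^ 2) = ∫ p in GamR r, v p ^ 2 := by linarith
  rw [e]
  linarith

/-! ### Upper bound for shorter guides -/

/-- Mass of `v` on the Neumann boundary. -/
def Mb (R : ℝ) (v : ℝ × ℝ → ℝ) : ℝ := (∫ t in II, v (R, t) ^ 2) + ∫ t in II, v (t, R) ^ 2

/-- Tangential energy of `v` on the Neumann boundary. -/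
def Tb (R : ℝ) (v : ℝ × ℝ → ℝ) : ℝ := (∫ t in II, pd2 v (R, t) ^ 2) + ∫ t in II, pd1 v (t, R) ^ 2

lemma Mb_nonneg (R : ℝ) (v : ℝ × ℝ → ℝ) : 0 ≤ Mb R v :=
  add_nonneg (integral_nonneg fun _ => sq_nonneg _) (integral_nonneg fun _ => sq_nonneg _)

/-- Mass of `v` in the two end strips of width `τ`. -/
def mS (R τ : ℝ) (v : ℝ × ℝ → ℝ) : ℝ := (∫ p in Ico (R - τ) R ×ˢ Ioo (-1) 0, v p ^ 2)
      + ∫ p in Ioo (-1) 0 ×ˢ Ico (R - τ) R, v p ^ 2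

/-- Energy of `v` in the two end strips of width `τ`. -/
def gS (R τ : ℝ) (v : ℝ × ℝ → ℝ) : ℝ := (∫ p in Ico (R - τ) R ×ˢ Ioo (-1) 0, gradSq2 v p)
      + ∫ p in Ioo (-1) 0 ×ˢ Ico (R - τ) R, gradSq2 v p

lemma mS_nonneg (R τ : ℝ) (v : ℝ × ℝ → ℝ) : 0 ≤ mS R τ v :=
  add_nonneg (integral_nonneg fun _ => sq_nonneg _) (integral_nonneg fun _ => sq_nonneg _)

lemma gS_nonneg (R τ : ℝ) (v : ℝ × ℝ → ℝ) : 0 ≤ gS R τ v :=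
  add_nonneg (integral_nonneg fun _ => gradSq2_nonneg _ _)
    (integral_nonneg fun _ => gradSq2_nonneg _ _)

lemma mS_le {R : ℝ} (hR : 0 < R) {v : ℝ × ℝ → ℝ} (hv : IsFirstEF R v) {δ : ℝ} (hδ : 0 < δ) :
    ∀ᶠ τ in 𝓝[>] (0 : ℝ), mS R τ v ≤ τ * (Mb R v + δ) := by
  have hc := hv.2.1.pow 2
  rw [closure_GamR hR] at hc
  have c1 : ContinuousOn (fun p => v p ^ 2) (Icc 0 R ×ˢ Icc (-1) 0) :=
    hc.mono fun p hp => Or.inr ⟨⟨by linarith [hp.1.1], hp.1.2⟩, hp.2⟩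
  have c2 : ContinuousOn (fun p : ℝ × ℝ => v p.swap ^ 2) (Icc 0 R ×ˢ Icc (-1) 0) :=
    hc.comp continuous_swap.continuousOn
      fun p hp => Or.inl ⟨hp.2, ⟨by simp only [Prod.snd_swap]; linarith [hp.1.1], hp.1.2⟩⟩
  filter_upwards [strip_asymp hR (by norm_num) c1 (half_pos hδ),
    strip_asymp hR (by norm_num) c2 (half_pos hδ)] with τ h1 h2
  rw [setInt_rect_swap (fun p => v p ^ 2)] at h2
  have h1 := (abs_le.1 h1).2
  have h2 := (abs_le.1 h2).2
  simp only [Prod.swap_prod_mk] at h1 h2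
  unfold mS Mb II
  linarith

lemma arm1_sub {R a b : ℝ} (hR : 0 < R) (ha : -1 < a) (hb : b < 0) :
    Icc (R / 2) R ×ˢ Icc a b ⊆ GamR R ∪ SigSeg R := by
  rintro ⟨x, t⟩ ⟨h1, h2⟩
  rw [GamR_eq hR]
  simp only [mem_union, mem_SigSeg, mem_prod, mem_Ioo, mem_Icc] at *
  rcases h1.2.lt_or_eq with h | h
  · left; right; refine ⟨⟨by linarith, h⟩, by linarith, by linarith⟩
  · right; left; exact ⟨h, by linarith, by linarith⟩

lemma arm2_sub {R a b : ℝ} (hR : 0 < R) (ha : -1 < a) (hb : b < 0) :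
    Icc a b ×ˢ Icc (R / 2) R ⊆ GamR R ∪ SigSeg R := by
  rintro ⟨x, t⟩ ⟨h1, h2⟩
  rw [GamR_eq hR]
  simp only [mem_union, mem_SigSeg, mem_prod, mem_Ioo, mem_Icc] at *
  rcases h2.2.lt_or_eq with h | h
  · left; left; refine ⟨⟨by linarith, by linarith⟩, by linarith, h⟩
  · right; right; exact ⟨h, by linarith, by linarith⟩

/-- Only the tangential part of the energy, over compact subintervals of the end sections, enters
this lower bound, since `∇v` is not known to be continuous up to the corners. -/
lemma gS_ge {R : ℝ} (hR : 0 < R) {v : ℝ × ℝ → ℝ} (hv : IsFirstEF R v) {a b c d : ℝ}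
    (ha : -1 < a) (hab : a < b) (hb : b < 0) (hc : -1 < c) (hcd : c < d) (hd : d < 0)
    {δ : ℝ} (hδ : 0 < δ) :
    ∀ᶠ τ in 𝓝[>] (0 : ℝ), τ * ((∫ t in Ioo a b, pd2 v (R, t) ^ 2)
      + (∫ t in Ioo c d, pd1 v (t, R) ^ 2) - δ) ≤ gS R τ v := by
  have c1 : ContinuousOn (fun p => pd2 v p ^ 2) (Icc (R / 2) R ×ˢ Icc a b) :=
    ((ef_pd2_cont hv).mono (arm1_sub hR ha hb)).pow 2
  have c2 : ContinuousOn (fun p : ℝ × ℝ => pd1 v p.swap ^ 2) (Icc (R / 2) R ×ˢ Icc c d) :=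
    (((ef_pd1_cont hv).mono (arm2_sub hR hc hd)).pow 2).comp continuous_swap.continuousOn
      fun p hp => ⟨hp.2, hp.1⟩
  obtain ⟨i1, i2⟩ := ef_pd_int hR hv
  have hg := (ef_energy hR hv).1
  filter_upwards [strip_asymp (half_lt_self hR) hab.le c1 (half_pos hδ),
    strip_asymp (half_lt_self hR) hcd.le c2 (half_pos hδ), Ioo_mem_nhdsGT hR] with τ h1 h2 hτ
  rw [setInt_rect_swap (fun p => pd1 v p ^ 2)] at h2
  have h1 := (abs_le.1 h1).1
  have h2 := (abs_le.1 h2).1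
  simp only [Prod.swap_prod_mk] at h1 h2
  have hr : 0 < R - τ := by linarith [hτ.2]
  have hr' : R - τ ≤ R := by linarith [hτ.1]
  have s1 := strip1_subset hr hr'
  have s2 := strip2_subset hr hr'
  have b1 : ∫ p in Ico (R - τ) R ×ˢ Ioo a b, pd2 v p ^ 2
      ≤ ∫ p in Ico (R - τ) R ×ˢ Ioo (-1) 0, gradSq2 v p := by
    calc _ ≤ ∫ p in Ico (R - τ) R ×ˢ Ioo (-1) 0, pd2 v p ^ 2 :=
          setIntegral_mono_set (i2.mono_set s1) (Eventually.of_forall fun _ => sq_nonneg _)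
            (LE.le.eventuallyLE (prod_mono_right (Ioo_subset_Ioo ha.le hb.le)))
      _ ≤ _ := setIntegral_mono (i2.mono_set s1) (hg.mono_set s1) fun p => by
          rw [gradSq2_eq]; nlinarith [sq_nonneg (pd1 v p)]
  have b2 : ∫ p in Ioo c d ×ˢ Ico (R - τ) R, pd1 v p ^ 2
      ≤ ∫ p in Ioo (-1) 0 ×ˢ Ico (R - τ) R, gradSq2 v p := by
    calc _ ≤ ∫ p in Ioo (-1) 0 ×ˢ Ico (R - τ) R, pd1 v p ^ 2 :=
          setIntegral_mono_set (i1.mono_set s2) (Eventually.of_forall fun _ => sq_nonneg _)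
            (LE.le.eventuallyLE (prod_mono_left (Ioo_subset_Ioo hc.le hd.le)))
      _ ≤ _ := setIntegral_mono (i1.mono_set s2) (hg.mono_set s2) fun p => by
          rw [gradSq2_eq]; nlinarith [sq_nonneg (pd2 v p)]
  unfold gS
  linarith

lemma inner_ineq' {R : ℝ} (hR : 0 < R) {v : ℝ × ℝ → ℝ} (hv : IsFirstEF R v) :
    ∀ᶠ τ in 𝓝[>] (0 : ℝ), lamR (R - τ) * (1 - mS R τ v) ≤ lamR R - gS R τ v := by
  filter_upwards [Ioo_mem_nhdsGT hR] with τ hτ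
  exact inner_ineq (by linarith [hτ.2]) (by linarith [hτ.1]) hv

lemma eventually_mul_le_right (c : ℝ) {ε : ℝ} (hε : 0 < ε) : ∀ᶠ h in 𝓝[>] (0 : ℝ), h * c ≤ ε := by
  filter_upwards [nhdsWithin_le_nhds (eventually_abs_mul_le c hε), self_mem_nhdsWithin] with h h1 h2
  rwa [abs_of_pos h2] at h1

lemma usc_left {R : ℝ} (hR : 0 < R) {v : ℝ × ℝ → ℝ} (hv : IsFirstEF R v) {γ : ℝ} (hγ : 0 < γ) :
    ∀ᶠ τ in 𝓝[>] (0 : ℝ), lamR (R - τ) ≤ lamR R + γ := by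
  have hl := lamR_nonneg R
  have hM := Mb_nonneg R v
  have hs : 0 < γ / 2 / (lamR R + γ) := by positivity
  filter_upwards [inner_ineq' hR hv, mS_le hR hv one_pos,
    eventually_mul_le_right (Mb R v + 1) hs] with τ h1 h2 h3
  have h4 := h2.trans h3
  have h5 := gS_nonneg R τ v
  by_contra hc
  have hc := not_le.1 hc
  rw [le_div_iff₀ (by positivity)] at h4
  have h6 : 0 < 1 - mS R τ v := by
    by_contra h; nlinarith
  have h7 : (lamR R + γ) * (1 - mS R τ v) < lamR (R - τ) * (1 - mS R τ v) :=
    mul_lt_mul_of_pos_right hc h6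
  linarith

/-- The tangential energy on the Neumann boundary is finite. Were it not, shortening the guide
would decrease the eigenvalue faster than linearly, against `lower_bound`. -/
lemma Tb_int {R : ℝ} (hR : 0 < R) {v : ℝ × ℝ → ℝ} (hv : IsFirstEF R v) :
    (IntegrableOn (fun t => pd2 v (R, t) ^ 2) II ∧ IntegrableOn (fun t => pd1 v (t, R) ^ 2) II) ∧
    ∀ δ : ℝ, 0 < δ → ∃ a b c d, (-1 < a ∧ a < b ∧ b < 0) ∧ (-1 < c ∧ c < d ∧ d < 0) ∧
      Tb R v - δ ≤ (∫ t in Ioo a b, pd2 v (R, t) ^ 2) + ∫ t in Ioo c d, pd1 v (t, R) ^ 2 := by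
  have hl := lamR_nonneg R
  have hM := Mb_nonneg R v
  have hF : Filter.map (fun τ : ℝ => -τ) (𝓝[>] 0) ≤ 𝓝 0 := by
    have : Tendsto (fun τ : ℝ => -τ) (𝓝 0) (𝓝 (-0)) := continuous_neg.tendsto 0
    rw [neg_zero] at this
    exact this.mono_left nhdsWithin_le_nhds
  have hlow := lower_bound hR hv hF (fun γ hγ => by
    rw [eventually_map]
    filter_upwards [usc_left hR hv hγ] with τ hτ
    rwa [← sub_eq_add_neg]) one_pos
  rw [eventually_map] at hlow
  set D := ∫ p in GamR R, Bd R v p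
  have hbound : ∀ a b c d, (-1 < a ∧ a < b ∧ b < 0) → (-1 < c ∧ c < d ∧ d < 0) →
      (∫ t in Ioo a b, pd2 v (R, t) ^ 2) + (∫ t in Ioo c d, pd1 v (t, R) ^ 2) ≤
        |D + 1| + lamR R * (Mb R v + 1) + 1 := by
    rintro a b c d ⟨a1, a2, a3⟩ ⟨c1, c2, c3⟩
    obtain ⟨τ, h1, h2, h3, h4, h5, h6⟩ := ((inner_ineq' hR hv).and ((mS_le hR hv one_pos).and
      (hlow.and ((gS_ge hR hv a1 a2 a3 c1 c2 c3 one_pos).and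
      ((eventually_mul_le_right (Mb R v + 1) one_pos).and
        (self_mem_nhdsWithin (a := (0 : ℝ)) (s := Ioi 0))))))).exists
    have hτ : 0 < τ := h6
    rw [← sub_eq_add_neg, abs_neg, abs_of_pos hτ] at h3
    have m0 := mS_nonneg R τ v
    have m1 : 0 ≤ 1 - mS R τ v := by linarith
    have k1 : (lamR R - τ * (D + 1)) * (1 - mS R τ v) ≤ lamR (R - τ) * (1 - mS R τ v) :=
      mul_le_mul_of_nonneg_right (by linarith) m1
    have k2 : τ * (D + 1) * (1 - mS R τ v) ≤ τ * |D + 1| := by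
      have : (D + 1) * (1 - mS R τ v) ≤ |D + 1| * 1 :=
        mul_le_mul (le_abs_self _) (by linarith) m1 (abs_nonneg _)
      rw [mul_assoc]
      exact mul_le_mul_of_nonneg_left (by linarith) hτ.le
    have k3 : lamR R * mS R τ v ≤ lamR R * (τ * (Mb R v + 1)) := mul_le_mul_of_nonneg_left h2 hl
    have k4 : τ * ((∫ t in Ioo a b, pd2 v (R, t) ^ 2) + (∫ t in Ioo c d, pd1 v (t, R) ^ 2) - 1) ≤
        τ * (|D + 1| + lamR R * (Mb R v + 1)) := by nlinarith
    linarith [le_of_mul_le_mul_left k4 hτ]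
  have n1 : ∀ a b, 0 ≤ ∫ t in Ioo a b, pd2 v (R, t) ^ 2 := fun a b =>
    integral_nonneg fun _ => sq_nonneg _
  have n2 : ∀ a b, 0 ≤ ∫ t in Ioo a b, pd1 v (t, R) ^ 2 := fun a b =>
    integral_nonneg fun _ => sq_nonneg _
  have hm : (-1 : ℝ) < -2 / 3 ∧ (-2 / 3 : ℝ) < -1 / 3 ∧ (-1 / 3 : ℝ) < 0 := by norm_num
  have p1 : ContinuousOn (fun t => pd2 v (R, t)) II :=
    (ef_pd2_cont hv).comp (f := fun t : ℝ => (R, t)) (by fun_prop)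
      fun t ht => Or.inr (Or.inl ⟨rfl, ht⟩)
  have p2 : ContinuousOn (fun t => pd1 v (t, R)) II :=
    (ef_pd1_cont hv).comp (f := fun t : ℝ => (t, R)) (by fun_prop)
      fun t ht => Or.inr (Or.inr ⟨ht, rfl⟩)
  obtain ⟨i1, e1⟩ := exhaust (f := fun t => pd2 v (R, t) ^ 2)
    (C := |D + 1| + lamR R * (Mb R v + 1) + 1) (p1.pow 2)
    (fun _ => sq_nonneg _) (fun a b h1 h2 h3 => by
      linarith [hbound a b _ _ ⟨h1, h2, h3⟩ hm, n2 (-2 / 3) (-1 / 3)])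
  obtain ⟨i2, e2⟩ := exhaust (f := fun t => pd1 v (t, R) ^ 2)
    (C := |D + 1| + lamR R * (Mb R v + 1) + 1) (p2.pow 2)
    (fun _ => sq_nonneg _) (fun a b h1 h2 h3 => by
      linarith [hbound _ _ a b hm ⟨h1, h2, h3⟩, n1 (-2 / 3) (-1 / 3)])
  refine ⟨⟨i1, i2⟩, fun δ hδ => ?_⟩
  obtain ⟨a, b, a1, a2, a3, a4⟩ := e1 (δ / 2) (by positivity)
  obtain ⟨c, d, c1, c2, c3, c4⟩ := e2 (δ / 2) (by positivity)
  refine ⟨a, b, c, d, ⟨a1, a2, a3⟩, ⟨c1, c2, c3⟩, ?_⟩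
  unfold Tb
  linarith

lemma upper_left {R : ℝ} (hR : 0 < R) {v : ℝ × ℝ → ℝ} (hv : IsFirstEF R v) {ε : ℝ} (hε : 0 < ε) :
    ∀ᶠ τ in 𝓝[>] (0 : ℝ),
      lamR (R - τ) ≤ lamR R - τ * (Tb R v - lamR R * Mb R v) + ε * τ := by
  have hl := lamR_nonneg R
  have hM := Mb_nonneg R v
  set l := lamR R
  set M := Mb R v
  obtain ⟨δ, hδ, hδ1, hδ2⟩ : ∃ δ : ℝ, 0 < δ ∧ δ ≤ 1 ∧ δ * (3 + l + M) ≤ ε := by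
    refine ⟨min 1 (ε / (3 + l + M)), lt_min one_pos (by positivity), min_le_left _ _, ?_⟩
    rw [← le_div_iff₀ (by positivity)]
    exact min_le_right _ _
  obtain ⟨a, b, c, d, ⟨a1, a2, a3⟩, ⟨c1, c2, c3⟩, hT⟩ := (Tb_int hR hv).2 δ hδ
  filter_upwards [inner_ineq' hR hv, mS_le hR hv hδ, usc_left hR hv hδ,
    gS_ge hR hv a1 a2 a3 c1 c2 c3 hδ, self_mem_nhdsWithin] with τ h1 h2 h3 h4 h6
  have hτ : 0 < τ := h6
  have m0 := mS_nonneg R τ v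
  have k1 : lamR (R - τ) * mS R τ v ≤ (l + δ) * (τ * (M + δ)) :=
    mul_le_mul h3 h2 m0 (by positivity)
  have k2 : τ * (Tb R v - 2 * δ) ≤ gS R τ v :=
    le_trans (mul_le_mul_of_nonneg_left (by linarith) hτ.le) h4
  have k3 : τ * (δ * (3 + l + M)) ≤ τ * ε := mul_le_mul_of_nonneg_left hδ2 hτ.le
  have k4 : τ * (δ * δ) ≤ τ * (δ * 1) := by gcongr
  nlinarith

/-! ### Upper bound for longer guides -/

/-- The retraction of the guide onto its truncation, constant along the arms beyond `R`. -/
def Pr (R : ℝ) (p : ℝ × ℝ) : ℝ × ℝ := (min p.1 R, min p.2 R)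

lemma Pr_cont (R : ℝ) : Continuous (Pr R) := by unfold Pr; fun_prop

lemma Gam_open : IsOpen Gam :=
  (isOpen_lt continuous_const (continuous_fst.min continuous_snd)).inter
    (isOpen_lt (continuous_fst.min continuous_snd) continuous_const)

lemma Pr_Gam {R : ℝ} (hR : 0 < R) {p : ℝ × ℝ} (hp : p ∈ Gam) : Pr R p ∈ GamR R ∪ SigSeg R := by
  obtain ⟨a, b⟩ := p
  simp only [Gam, mem_ofPred_eq] at hp
  rw [GamR_eq hR]
  simp only [Pr, mem_union, mem_SigSeg, mem_prod, mem_Ioo]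
  grind (splits := 40)

lemma GamSig_subset {S : ℝ} (hS : 0 < S) : GamR S ∪ SigSeg S ⊆ Gam := by
  rintro ⟨a, b⟩ hp
  rw [GamR_eq hS] at hp
  simp only [mem_union, mem_SigSeg, mem_prod, mem_Ioo] at hp
  simp only [Gam, mem_ofPred_eq]
  grind (splits := 40)

lemma Pr_dist (R : ℝ) (x p : ℝ × ℝ) : ‖Pr R x - Pr R p‖ ≤ ‖x - p‖ := by
  have h1 := LipschitzWith.prod_fst.min_const (α := ℝ × ℝ) R
  have h2 := LipschitzWith.prod_snd.min_const (α := ℝ × ℝ) R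
  have := (h1.prodMk h2).dist_le_mul x p
  simpa [dist_eq_norm, Pr] using this

lemma clm_fst {A : ℝ × ℝ →L[ℝ] ℝ} (h : A (1, 0) = 0) (c : ℝ) : A (c, 0) = 0 := by
  have : ((c, 0) : ℝ × ℝ) = c • ((1 : ℝ), (0 : ℝ)) := by simp
  rw [this, map_smul, h, smul_zero]

lemma clm_snd {A : ℝ × ℝ →L[ℝ] ℝ} (h : A (0, 1) = 0) (c : ℝ) : A (0, c) = 0 := by
  have : ((0, c) : ℝ × ℝ) = c • ((0 : ℝ), (1 : ℝ)) := by simp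
  rw [this, map_smul, h, smul_zero]

/-- Because of the Neumann condition, the extension of `v` by constants along the arms is
differentiable across `Σ_R`. -/
lemma ext_hasFDerivAt {R : ℝ} (hR : 0 < R) {v : ℝ × ℝ → ℝ} (hv : IsFirstEF R v) {p : ℝ × ℝ}
    (hp : p ∈ Gam) : HasFDerivAt (fun x => v (Pr R x)) (fderiv ℝ v (Pr R p)) p := by
  set A := fderiv ℝ v (Pr R p) with hA
  have hd : HasFDerivAt v A (Pr R p) := (ef_diffAt hv (Pr_Gam hR hp)).hasFDerivAt
  have key : ∀ᶠ x in 𝓝 p, A (Pr R x - x) = A (Pr R p - p) := by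
    obtain ⟨a, b⟩ := p
    have hp' := hp
    simp only [Gam, mem_ofPred_eq] at hp'
    have o1 : ∀ c : ℝ, a < c → ∀ᶠ x : ℝ × ℝ in 𝓝 (a, b), x.1 < c := fun c hc =>
      (isOpen_lt continuous_fst continuous_const).mem_nhds hc
    have o2 : ∀ c : ℝ, b < c → ∀ᶠ x : ℝ × ℝ in 𝓝 (a, b), x.2 < c := fun c hc =>
      (isOpen_lt continuous_snd continuous_const).mem_nhds hc
    rcases lt_or_ge a R with ha | ha
    · rcases lt_or_ge b R with hb | hb
      · filter_upwards [o1 R ha, o2 R hb] with x h1 h2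
        simp [Pr, min_eq_left h1.le, min_eq_left h2.le, min_eq_left ha.le, min_eq_left hb.le]
      · have ha0 : a < 0 := by grind
        have ha1 : -1 < a := by grind
        have hA0 : A (0, 1) = 0 := by
          have := hv.2.2.2.2.1 a ⟨ha1, ha0⟩
          simpa [hA, Pr, min_eq_left ha.le, min_eq_right hb, pd2] using this
        filter_upwards [o1 R ha] with x h1
        have e1 : Pr R x - x = (0, min x.2 R - x.2) := by
          simp [Pr, min_eq_left h1.le, Prod.ext_iff]
        have e2 : Pr R (a, b) - (a, b) = (0, min b R - b) := by
          simp [Pr, min_eq_left ha.le]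
        rw [e1, e2, clm_snd hA0, clm_snd hA0]
    · have hb0 : b < 0 := by grind
      have hb1 : -1 < b := by grind
      have hb : b < R := by linarith
      have hA0 : A (1, 0) = 0 := by
        have := hv.2.2.2.1 b ⟨hb1, hb0⟩
        simpa [hA, Pr, min_eq_left hb.le, min_eq_right ha, pd1] using this
      filter_upwards [o2 R hb] with x h1
      have e1 : Pr R x - x = (min x.1 R - x.1, 0) := by
        simp [Pr, min_eq_left h1.le, Prod.ext_iff]
      have e2 : Pr R (a, b) - (a, b) = (min a R - a, 0) := by
        simp [Pr, min_eq_left hb.le]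
      rw [e1, e2, clm_fst hA0, clm_fst hA0]
  rw [hasFDerivAt_iff_isLittleO] at hd ⊢
  have h1 := hd.comp_tendsto ((Pr_cont R).tendsto p)
  have h2 : ((fun x' => x' - Pr R p) ∘ Pr R) =O[𝓝 p] fun x => x - p :=
    Asymptotics.IsBigO.of_bound 1 (Eventually.of_forall fun x => by
      rw [one_mul]; exact Pr_dist R x p)
  refine (h1.trans_isBigO h2).congr' ?_ EventuallyEq.rfl
  filter_upwards [key] with x hx
  simp only [Function.comp]
  simp only [map_sub] at hx ⊢
  linarith

lemma ext_contDiffOn {R : ℝ} (hR : 0 < R) {v : ℝ × ℝ → ℝ} (hv : IsFirstEF R v) :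
    ContDiffOn ℝ 1 (fun x => v (Pr R x)) Gam := by
  obtain ⟨U, hU, hUs, hvU⟩ := hv.1
  have hc : ContinuousOn (fderiv ℝ v) U :=
    hvU.continuousOn_fderiv_of_isOpen hU (by norm_cast)
  have h := contDiffOn_succ_iff_fderiv_of_isOpen (n := 0) (𝕜 := ℝ) (f := fun x => v (Pr R x)) Gam_open
  rw [zero_add] at h
  rw [h]
  refine ⟨fun p hp => (ext_hasFDerivAt hR hv hp).differentiableAt.differentiableWithinAt,
    fun h => by simp at h, ?_⟩
  rw [contDiffOn_zero]
  have : ContinuousOn (fun p => fderiv ℝ v (Pr R p)) Gam :=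
    hc.comp (Pr_cont R).continuousOn fun p hp => hUs (Pr_Gam hR hp)
  exact this.congr fun p hp => (ext_hasFDerivAt hR hv hp).fderiv

lemma ext_grad {R : ℝ} (hR : 0 < R) {v : ℝ × ℝ → ℝ} (hv : IsFirstEF R v) {p : ℝ × ℝ}
    (hp : p ∈ Gam) : gradSq2 (fun x => v (Pr R x)) p = gradSq2 v (Pr R p) := by
  simp only [gradSq2, (ext_hasFDerivAt hR hv hp).fderiv]

lemma Pr_closure {R S : ℝ} (hR : 0 < R) (hS : R ≤ S) {p : ℝ × ℝ} (hp : p ∈ closure (GamR S)) :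
    Pr R p ∈ closure (GamR R) := by
  obtain ⟨a, b⟩ := p
  rw [closure_GamR (hR.trans_le hS)] at hp
  rw [closure_GamR hR]
  simp only [Pr, mem_union, mem_prod, mem_Icc] at *
  grind (splits := 40)

lemma ext_zero {R S : ℝ} (hR : 0 < R) (hS : R ≤ S) {v : ℝ × ℝ → ℝ} (hv : IsFirstEF R v)
    {p : ℝ × ℝ} (hp : p ∈ DirB S) : v (Pr R p) = 0 := by
  refine eq_zero_rest hR hv.2.1 hv.2.2.1 (Pr_closure hR hS (DirB_subset hp)) ?_
  obtain ⟨a, b⟩ := p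
  rw [mem_DirB (hR.trans_le hS)] at hp
  rw [GamR_eq hR]
  simp only [Pr, mem_union, mem_SigSeg, mem_prod, mem_Ioo]
  grind (splits := 60)

lemma Mb_int {R : ℝ} (hR : 0 < R) {v : ℝ × ℝ → ℝ} (hv : IsFirstEF R v) :
    IntegrableOn (fun t => v (R, t) ^ 2) II ∧ IntegrableOn (fun t => v (t, R) ^ 2) II := by
  have cl := closure_GamR hR
  constructor
  · have : ContinuousOn (fun t => v (R, t)) (Icc (-1) 0) :=
      hv.2.1.comp (f := fun t : ℝ => (R, t)) (by fun_prop) fun t ht => by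
        rw [cl]; exact Or.inr ⟨⟨by linarith, le_rfl⟩, ht⟩
    exact ((this.pow 2).integrableOn_Icc).mono_set Ioo_subset_Icc_self
  · have : ContinuousOn (fun t => v (t, R)) (Icc (-1) 0) :=
      hv.2.1.comp (f := fun t : ℝ => (t, R)) (by fun_prop) fun t ht => by
        rw [cl]; exact Or.inl ⟨ht, ⟨by linarith, le_rfl⟩⟩
    exact ((this.pow 2).integrableOn_Icc).mono_set Ioo_subset_Icc_self

/-- The Rayleigh quotient of the extension of `v` by constants along the added strips. -/
lemma outer_ineq {R h : ℝ} (hR : 0 < R) (hh : 0 < h) {v : ℝ × ℝ → ℝ} (hv : IsFirstEF R v) :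
    lamR (R + h) * (1 + h * Mb R v) ≤ lamR R + h * Tb R v := by
  have hS : 0 < R + h := by linarith
  have hRS : R ≤ R + h := by linarith
  obtain ⟨⟨iT1, iT2⟩, -⟩ := Tb_int hR hv
  obtain ⟨hgi, hge⟩ := ef_energy hR hv
  have h2i := ef_sq_int hR hv
  have hVc : ContinuousOn (fun x => v (Pr R x)) (closure (GamR (R + h))) :=
    hv.2.1.comp (Pr_cont R).continuousOn fun p hp => Pr_closure hR hRS hp
  -- the extension agrees with `v` on the shorter guide and is constant along the new strips
  have g0 : ∀ p ∈ GamR R, Pr R p = p := fun p hp => by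
    have := GamR_lt hR hp
    simp [Pr, min_eq_left this.1.le, min_eq_left this.2.le]
  have g1 : ∀ p ∈ Ico R (R + h) ×ˢ Ioo (-1 : ℝ) 0, Pr R p = (R, p.2) := fun p hp => by
    have h1 : p.2 ≤ R := by linarith [hp.2.2]
    simp [Pr, min_eq_right hp.1.1, min_eq_left h1]
  have g2 : ∀ p ∈ Ioo (-1 : ℝ) 0 ×ˢ Ico R (R + h), Pr R p = (p.1, R) := fun p hp => by
    have h1 : p.1 ≤ R := by linarith [hp.1.2]
    simp [Pr, min_eq_right hp.2.1, min_eq_left h1]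
  have inG : GamR (R + h) ⊆ Gam := subset_union_left.trans (GamSig_subset hS)
  have s0 := GamR_mono hR hRS
  have s1 := strip1_subset hR hRS
  have s2 := strip2_subset hR hRS
  have ms1 : MeasurableSet (Ico R (R + h) ×ˢ Ioo (-1 : ℝ) 0) := measurableSet_Ico.prod measurableSet_Ioo
  have ms2 : MeasurableSet (Ioo (-1 : ℝ) 0 ×ˢ Ico R (R + h)) := measurableSet_Ioo.prod measurableSet_Ico
  have swp : ∀ f : ℝ × ℝ → ℝ, IntegrableOn f (Ico R (R + h) ×ˢ Ioo (-1 : ℝ) 0) →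
      IntegrableOn (fun p => f p.swap) (Ioo (-1 : ℝ) 0 ×ˢ Ico R (R + h)) := by
    intro f hf
    have := (mp_swap.integrableOn_comp_preimage
      MeasurableEquiv.prodComm.measurableEmbedding (f := f)
      (s := Ico R (R + h) ×ˢ Ioo (-1 : ℝ) 0)).2 hf
    rwa [preimage_swap_prod] at this
  -- gradient on the three pieces
  have d0 : EqOn (gradSq2 fun x => v (Pr R x)) (gradSq2 v) (GamR R) := fun p hp => by
    rw [ext_grad hR hv (inG (s0 hp)), g0 p hp]
  have d1 : EqOn (gradSq2 fun x => v (Pr R x)) (fun p => pd2 v (R, p.2) ^ 2)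
      (Ico R (R + h) ×ˢ Ioo (-1 : ℝ) 0) := fun p hp => by
    rw [ext_grad hR hv (inG (s1 hp)), g1 p hp, gradSq2_eq, hv.2.2.2.1 p.2 hp.2]; simp
  have d2 : EqOn (gradSq2 fun x => v (Pr R x)) (fun p => pd1 v (p.1, R) ^ 2)
      (Ioo (-1 : ℝ) 0 ×ˢ Ico R (R + h)) := fun p hp => by
    rw [ext_grad hR hv (inG (s2 hp)), g2 p hp, gradSq2_eq, hv.2.2.2.2.1 p.1 hp.1]; simp
  obtain ⟨c1, c1'⟩ := strip_const (r := R) (R := R + h) hRS iT1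
  obtain ⟨c2, c2'⟩ := strip_const (r := R) (R := R + h) hRS iT2
  have c2s := swp _ c2
  rw [← setInt_rect_swap] at c2'
  have j0 : IntegrableOn (gradSq2 fun x => v (Pr R x)) (GamR R) :=
    hgi.congr_fun d0.symm (GamR_meas hR)
  have j1 : IntegrableOn (gradSq2 fun x => v (Pr R x)) (Ico R (R + h) ×ˢ Ioo (-1 : ℝ) 0) :=
    c1.congr_fun d1.symm ms1
  have j2 : IntegrableOn (gradSq2 fun x => v (Pr R x)) (Ioo (-1 : ℝ) 0 ×ˢ Ico R (R + h)) :=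
    c2s.congr_fun d2.symm ms2
  have hi : IntegrableOn (gradSq2 fun x => v (Pr R x)) (GamR (R + h)) := by
    rw [GamR_strips hR hRS]; exact j0.union (j1.union j2)
  have hle := lamR_mul_le_of_contDiffOn hS Gam_open (GamSig_subset hS) (ext_contDiffOn hR hv) hVc
    (fun p hp => ext_zero hR hRS hv hp) hi
  have hVi : IntegrableOn (fun x => v (Pr R x) ^ 2) (GamR (R + h)) := intOn_of_cont hS (hVc.pow 2)
  obtain ⟨iM1, iM2⟩ := Mb_int hR hv
  obtain ⟨-, m1'⟩ := strip_const (r := R) (R := R + h) hRS iM1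
  obtain ⟨-, m2'⟩ := strip_const (r := R) (R := R + h) hRS iM2
  rw [← setInt_rect_swap] at m2'
  have e0 : EqOn (fun x => v (Pr R x) ^ 2) (fun x => v x ^ 2) (GamR R) := fun p hp => by
    simp only [g0 p hp]
  have e1 : EqOn (fun x => v (Pr R x) ^ 2) (fun p => v (R, p.2) ^ 2)
      (Ico R (R + h) ×ˢ Ioo (-1 : ℝ) 0) := fun p hp => by simp only [g1 p hp]
  have e2 : EqOn (fun x => v (Pr R x) ^ 2) (fun p => v (p.1, R) ^ 2)
      (Ioo (-1 : ℝ) 0 ×ˢ Ico R (R + h)) := fun p hp => by simp only [g2 p hp]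
  rw [setInt_strips hR hRS j0 j1 j2, setInt_strips hR hRS (hVi.mono_set s0) (hVi.mono_set s1)
    (hVi.mono_set s2), setIntegral_congr_fun (GamR_meas hR) d0, setIntegral_congr_fun ms1 d1,
    setIntegral_congr_fun ms2 d2, setIntegral_congr_fun (GamR_meas hR) e0,
    setIntegral_congr_fun ms1 e1, setIntegral_congr_fun ms2 e2, hv.2.2.2.2.2.2.2] at hle
  simp only [Prod.snd_swap, add_sub_cancel_left] at c1' c2' m1' m2'
  rw [c1', c2', m1', m2'] at hle
  unfold Mb Tb II
  calc _ = _ := by rw [mul_add h]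
    _ ≤ _ := hle
    _ ≤ _ := by linarith

/-! ### The derivative -/

lemma usc_right {R : ℝ} (hR : 0 < R) {v : ℝ × ℝ → ℝ} (hv : IsFirstEF R v) {γ : ℝ} (hγ : 0 < γ) :
    ∀ᶠ h in 𝓝[>] (0 : ℝ), lamR (R + h) ≤ lamR R + γ := by
  filter_upwards [eventually_mul_le_right (Tb R v) hγ, self_mem_nhdsWithin] with h h1 h2
  have hh : 0 < h := h2
  have := outer_ineq hR hh hv
  nlinarith [mul_nonneg (lamR_nonneg (R + h)) (mul_nonneg hh.le (Mb_nonneg R v))]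

lemma upper_right {R : ℝ} (hR : 0 < R) {v : ℝ × ℝ → ℝ} (hv : IsFirstEF R v) {ε : ℝ} (hε : 0 < ε) :
    ∀ᶠ h in 𝓝[>] (0 : ℝ), lamR (R + h) ≤
      lamR R + h * (Tb R v - lamR R * Mb R v) + ε * h := by
  set E := Tb R v - lamR R * Mb R v with hE
  filter_upwards [eventually_mul_le_right (-(Mb R v * (E + ε))) hε, self_mem_nhdsWithin] with h h1 h2
  have hh : 0 < h := h2
  have h3 := outer_ineq hR hh hv
  have hM : 0 < 1 + h * Mb R v := by
    have := mul_nonneg hh.le (Mb_nonneg R v); linarith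
  refine le_of_mul_le_mul_right (h3.trans ?_) hM
  have hT : Tb R v = E + lamR R * Mb R v := by rw [hE]; ring
  rw [hT]
  have h4 := mul_le_mul_of_nonneg_left h1 hh.le
  linarith

lemma lower_right {R : ℝ} (hR : 0 < R) {v : ℝ × ℝ → ℝ} (hv : IsFirstEF R v) {ε : ℝ} (hε : 0 < ε) :
    ∀ᶠ h in 𝓝[>] (0 : ℝ), lamR R + h * (∫ p in GamR R, Bd R v p) - ε * h ≤ lamR (R + h) := by
  filter_upwards [lower_bound hR hv nhdsWithin_le_nhds (fun γ hγ => usc_right hR hv hγ) hε,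
    self_mem_nhdsWithin] with h h1 h2
  rwa [abs_of_pos h2] at h1

lemma lower_left {R : ℝ} (hR : 0 < R) {v : ℝ × ℝ → ℝ} (hv : IsFirstEF R v) {ε : ℝ} (hε : 0 < ε) :
    ∀ᶠ τ in 𝓝[>] (0 : ℝ), lamR R - τ * (∫ p in GamR R, Bd R v p) - ε * τ ≤ lamR (R - τ) := by
  have hF : Filter.map (fun τ : ℝ => -τ) (𝓝[>] 0) ≤ 𝓝 0 := by
    have : Tendsto (fun τ : ℝ => -τ) (𝓝 0) (𝓝 (-0)) := continuous_neg.tendsto 0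
    rw [neg_zero] at this
    exact this.mono_left nhdsWithin_le_nhds
  have hlow := lower_bound hR hv hF (fun γ hγ => by
    rw [eventually_map]
    filter_upwards [usc_left hR hv hγ] with τ hτ
    rwa [← sub_eq_add_neg]) hε
  rw [eventually_map] at hlow
  filter_upwards [hlow, self_mem_nhdsWithin] with τ h1 h2
  rw [← sub_eq_add_neg, abs_neg, abs_of_pos h2] at h1
  linarith

/-- The bulk expression of the first variation equals the boundary one. Comparing the lower with
the upper bounds for `h > 0` gives `≤`, for `h < 0` it gives `≥`. -/
lemma Bd_eq {R : ℝ} (hR : 0 < R) {v : ℝ × ℝ → ℝ} (hv : IsFirstEF R v) :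
    ∫ p in GamR R, Bd R v p = Tb R v - lamR R * Mb R v := by
  apply le_antisymm
  · refine le_of_forall_pos_le_add fun ε hε => ?_
    obtain ⟨h, h1, h2, h3⟩ := ((upper_right hR hv (half_pos hε)).and
      ((lower_right hR hv (half_pos hε)).and (self_mem_nhdsWithin (a := (0 : ℝ)) (s := Ioi 0)))).exists
    have hh : 0 < h := h3
    refine le_of_mul_le_mul_left ?_ hh
    linarith
  · refine le_of_forall_pos_le_add fun ε hε => ?_
    obtain ⟨h, h1, h2, h3⟩ := ((upper_left hR hv (half_pos hε)).and
      ((lower_left hR hv (half_pos hε)).and (self_mem_nhdsWithin (a := (0 : ℝ)) (s := Ioi 0)))).exists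
    have hh : 0 < h := h3
    refine le_of_mul_le_mul_left ?_ hh
    linarith

lemma lamR_hasDerivAt_aux {R : ℝ} (hR : 0 < R) {v : ℝ × ℝ → ℝ} (hv : IsFirstEF R v) :
    HasDerivAt lamR (Tb R v - lamR R * Mb R v) R := by
  rw [hasDerivAt_iff_isLittleO_nhds_zero, Asymptotics.isLittleO_iff]
  intro c hc
  have r1 := upper_right hR hv hc
  have r2 := lower_right hR hv hc
  have l1 := upper_left hR hv hc
  have l2 := lower_left hR hv hc
  rw [Bd_eq hR hv] at r2 l2
  set E := Tb R v - lamR R * Mb R v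
  obtain ⟨a, ha, hr⟩ := mem_nhdsGT_iff_exists_Ioo_subset.1 (r1.and r2)
  obtain ⟨b, hb, hl⟩ := mem_nhdsGT_iff_exists_Ioo_subset.1 (l1.and l2)
  have ha' : 0 < a := ha
  have hb' : -b < 0 := neg_lt_zero.2 hb
  filter_upwards [Ioo_mem_nhds hb' ha'] with h hh
  simp only [smul_eq_mul, Real.norm_eq_abs]
  rcases lt_trichotomy h 0 with h0 | rfl | h0
  · obtain ⟨k1, k2⟩ := hl (show -h ∈ Ioo 0 b from ⟨by linarith, by linarith [hh.1]⟩)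
    rw [sub_neg_eq_add] at k1 k2
    rw [abs_of_neg h0, abs_le]
    constructor <;> linarith
  · simp
  · obtain ⟨k1, k2⟩ := hr (show h ∈ Ioo 0 a from ⟨h0, hh.2⟩)
    rw [abs_of_pos h0, abs_le]
    constructor <;> linarith

/-- Proposition 2.6, Dauge–Helffer type formula: for every `R > 0`,
`R ↦ λ₁(Γ_R)` is differentiable at `R` with derivative
`∂_R λ_R = ∫_{Σ_R} (|∂_τ v_R|² − λ_R |v_R|²) dτ`, where `v_R` is the positive
normalized first eigenfunction on `Γ_R` and the tangential derivative is `∂₂` on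
`Σ_R¹ = {R}×I` and `∂₁` on `Σ_R² = I×{R}`. -/
theorem lamR_hasDerivAt :
    ∀ R : ℝ, 0 < R → ∀ v : ℝ × ℝ → ℝ, IsFirstEF R v →
      HasDerivAt lamR
        ((∫ t in II, ((pd2 v (R, t)) ^ 2 - lamR R * (v (R, t)) ^ 2)) +
          ∫ t in II, ((pd1 v (t, R)) ^ 2 - lamR R * (v (t, R)) ^ 2)) R := by
  intro R hR v hv
  obtain ⟨⟨t1, t2⟩, -⟩ := Tb_int hR hv
  obtain ⟨m1, m2⟩ := Mb_int hR hv
  rw [integral_sub t1 (m1.const_mul _), integral_sub t2 (m2.const_mul _), integral_const_mul,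
    integral_const_mul]
  convert lamR_hasDerivAt_aux hR hv using 1
  unfold Tb Mb
  ring
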